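/- Fix κ > 0 and an integer m ≥ 3. There exists C > 0 independent of n such that for all sufficiently large n, every ϑ ∈ (0,1), and every classical solution φ of the HJB equation on B_κ^n vanishing on the boundary: sup_{x ∈ B_{ϑκ}^n} |Dφ(x)| ≤ (C/(1−ϑ)) (log n)^{k₁} and sup_{x ∈ B_{ϑκ}^n} |D²φ(x)| ≤ (C/(1−ϑ)) (log n)^{k₂} / √n, where k₁ = k₀ − m, k₂ = k₀ − 2m, and k₀ = 4m(1 + 1/α) for the exponent α ∈ (0,1] from the weighted Schauder bound |φ|*_{2,α,B_κ^n} ≤ C √n (log n)^{k₀}. -/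

import Mathlib

/-!
The exponent is `α = 1/2`, for which `k₀ = 12 m`. Write `s = √n` and `L = (log n) ^ m`, so the ball
has radius `κ s L`; the second-order part of the equation is `n · diag (d i)` with `d i > 0` fixed,
up to a relative error `L / s`, and this error is small compared with any power of `1 / L`.

*Size of the solution.* At interior extrema the maximum principle gives `0 ≤ φ ≤ C s L`
(`HJBData.sup_bound`); both the nonlinear term and the linear ones have the right sign there since
the diffusion dominates the second-order part of the control. Comparison with the barrier
`A (1 - exp (-σ (R² - |x|²)))`, `σ` of order `s⁻²`, improves this near the sphere to
`φ ≤ C L² dist(x, ∂B)` (`HJBData.boundary_bound`).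

*Rescaling.* Around a point, put `w = min (dist, s / L)` and dilate a ball of radius `δ w` to the unit
ball, normalizing the diagonal `d` to the identity. The first-order and nonlinear terms become small,
and the equation becomes a small perturbation of the Poisson equation (`FrozenEq`,
`HJBData.frozenEq`).

*Interior estimate.* Solutions `v` of such equations satisfy an interior `C^{2,1/2}` estimate
(`interior_est`), proved by Campanato's method in `L²`. The identity `∫ |D²F|² = ∫ |ΔF|²` for compactly
supported `F` gives the Caccioppoli inequality `cacc`. Since a compactly supported `V` differs from
its mollification by an average of `ΔV` (`sub_mol_eq`), the mollification being smooth with explicit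
bounds, the mean oscillation of `D²v` decays from one scale to a smaller one up to the deviation of
`Δv` from a constant (`hes_decay`, `one_step`). Iterating over dyadic scales (`camp_step`, `camp`)
gives the value and the modulus of continuity of `D²v` at each centre, and `two_centre` compares two
centres. Only an a priori finite weighted maximum of `|D²v|` enters on the right-hand side, with a
small factor, and it is absorbed.

*Conclusion.* Scaling back gives bounds for `Dφ`, `D²φ` and its Hölder quotient in terms of `w`
(`HJBData.local_bounds`), hence `|φ|*_{2,1/2} ≤ C s L ^ 12` (`HJBData.global_bounds`), together with
the stated interior bounds for `Dφ` and `D²φ`; the power `L ^ 12` leaves plenty of room.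
-/

open Finset Metric Set

noncomputable section

namespace HW

variable {I : ℕ}

/-- `ℝ^I` with the Euclidean norm. -/
abbrev Euc (I : ℕ) := EuclideanSpace ℝ (Fin I)

/-- First partial derivative `∂_i φ (x)`. -/
noncomputable def pd1 (φ : Euc I → ℝ) (i : Fin I) (x : Euc I) : ℝ :=
  fderiv ℝ φ x (EuclideanSpace.single i 1)

/-- Second partial derivative `∂²_{ii} φ (x)`. -/
noncomputable def pd2 (φ : Euc I → ℝ) (i : Fin I) (x : Euc I) : ℝ :=
  fderiv ℝ (pd1 φ i) x (EuclideanSpace.single i 1)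

/-- The fluid fraction `ν_i = (a_i/μ_i) · μ̄` where `μ̄ = (∑ a_j/μ_j)⁻¹`. -/
noncomputable def nu (μ a : Fin I → ℝ) (i : Fin I) : ℝ :=
  (a i / μ i) * (∑ j, a j / μ j)⁻¹

/-- The radius `κ √n (log n)^m` of the ball `B_κ^n`. -/
noncomputable def Rad (κ : ℝ) (m n : ℕ) : ℝ :=
  κ * Real.sqrt n * Real.log n ^ m

/-- The HJB equation at `x`, with a general "front" function `g` in place of `(e·x)^+`
(the true HJB equation uses `g y = max y 0`, the smoothed one uses `g = f_a`).
Here `lam = λ^n`, `l_i^n = a_i λ^n − μ_i ν_i n`. -/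
def HJBgen (μ a c : Fin I → ℝ) (γ lam : ℝ) (n : ℕ) (g : ℝ → ℝ)
    (φ : Euc I → ℝ) (x : Euc I) : Prop :=
  0 = -γ * φ x
    + g (∑ j, x j) * (⨅ i, (c i + μ i * pd1 φ i x - (1 / 2) * μ i * pd2 φ i x))
    + ∑ i, ((a i * lam - μ i * nu μ a i * n) - μ i * x i) * pd1 φ i x
    + (1 / 2) * ∑ i, (a i * lam + μ i * (nu μ a i * n + x i)) * pd2 φ i x

/-- A classical solution on `B = ball 0 R`: Lipschitz on the closed ball, `C²` on the open
ball, vanishing on the boundary sphere, and satisfying the (generalized) HJB equation on `B`. -/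
def IsSolGen (μ a c : Fin I → ℝ) (γ lam : ℝ) (n : ℕ) (R : ℝ) (g : ℝ → ℝ)
    (φ : Euc I → ℝ) : Prop :=
  (∃ K : NNReal, LipschitzOnWith K φ (closedBall 0 R)) ∧
  ContDiffOn ℝ 2 φ (ball 0 R) ∧
  (∀ x : Euc I, ‖x‖ = R → φ x = 0) ∧
  (∀ x ∈ ball (0 : Euc I) R, HJBgen μ a c γ lam n g φ x)

/-- α-Hölder continuity of the second derivative on every compact subset of `ball 0 R`. -/
def HolderSecond (α R : ℝ) (φ : Euc I → ℝ) : Prop :=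
  ∀ K : Set (Euc I), K ⊆ ball 0 R → IsCompact K →
    ∃ C : ℝ, ∀ x ∈ K, ∀ y ∈ K,
      ‖fderiv ℝ (fderiv ℝ φ) x - fderiv ℝ (fderiv ℝ φ) y‖ ≤ C * ‖x - y‖ ^ α

/-- Pointwise form of the bound `|φ|*_{2,α,ball 0 R} ≤ M`: each of the four constituent
(weighted) seminorms is bounded by `M`.  For `x` in the ball, `dist (x, ∂B) = R − ‖x‖`. -/
def SchauderBound (α R M : ℝ) (φ : Euc I → ℝ) : Prop :=
  (∀ x : Euc I, ‖x‖ < R → |φ x| ≤ M) ∧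
  (∀ x : Euc I, ‖x‖ < R → (R - ‖x‖) * ‖fderiv ℝ φ x‖ ≤ M) ∧
  (∀ x : Euc I, ‖x‖ < R → (R - ‖x‖) ^ 2 * ‖fderiv ℝ (fderiv ℝ φ) x‖ ≤ M) ∧
  (∀ x y : Euc I, ‖x‖ < R → ‖y‖ < R → x ≠ y →
    (min (R - ‖x‖) (R - ‖y‖)) ^ (2 + α) *
        ‖fderiv ℝ (fderiv ℝ φ) x - fderiv ℝ (fderiv ℝ φ) y‖ ≤
      M * ‖x - y‖ ^ α)


section

open MeasureTheory Filter Topology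

set_option maxSynthPendingDepth 3

/-! ### Bilinear forms and second derivatives -/

/-- The second derivative of `v`, as a continuous bilinear form. -/
def hes (v : Euc I → ℝ) (x : Euc I) : Euc I →L[ℝ] Euc I →L[ℝ] ℝ := fderiv ℝ (fderiv ℝ v) x

/-- The `i`-th standard basis vector. -/
def ee (i : Fin I) : Euc I := EuclideanSpace.single i 1

/-- The trace of a bilinear form in the standard basis. -/
def tr (A : Euc I →L[ℝ] Euc I →L[ℝ] ℝ) : ℝ := ∑ i, A (ee i) (ee i)

/-- The Laplacian `∑ᵢ ∂ᵢᵢ v`. -/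
def lap (v : Euc I → ℝ) (x : Euc I) : ℝ := tr (hes v x)

lemma norm_ee (i : Fin I) : ‖ee i‖ = 1 := by simp [ee]

lemma abs_entry_le (A : Euc I →L[ℝ] Euc I →L[ℝ] ℝ) (i j : Fin I) :
    |A (ee i) (ee j)| ≤ ‖A‖ := by
  have := A.le_opNorm₂ (ee i) (ee j)
  simpa [norm_ee] using this

lemma abs_tr_le (A : Euc I →L[ℝ] Euc I →L[ℝ] ℝ) : |tr A| ≤ I * ‖A‖ := by
  unfold tr
  calc _ ≤ ∑ i : Fin I, |A (ee i) (ee i)| := Finset.abs_sum_le_sum_abs _ _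
    _ ≤ ∑ i : Fin I, ‖A‖ := Finset.sum_le_sum fun i _ => abs_entry_le A i i
    _ = _ := by simp

lemma tr_sub (A B : Euc I →L[ℝ] Euc I →L[ℝ] ℝ) : tr (A - B) = tr A - tr B := by
  simp [tr]

lemma sum_ee (x : Euc I) : x = ∑ i, x i • ee i := by
  have := (EuclideanSpace.basisFun (Fin I) ℝ).sum_repr x
  simpa [ee] using this.symm

lemma abs_coord_le (x : Euc I) (i : Fin I) : |x i| ≤ ‖x‖ := by
  simpa using PiLp.norm_apply_le x i

/-- The operator norm of a bilinear form is at most its Frobenius norm; the constant `I ^ 2`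
is not optimal but is all that is needed. -/
lemma norm_sq_le_entries (A : Euc I →L[ℝ] Euc I →L[ℝ] ℝ) :
    ‖A‖ ^ 2 ≤ (I : ℝ) ^ 2 * ∑ i, ∑ j, (A (ee i) (ee j)) ^ 2 := by
  have h1 : ‖A‖ ≤ ∑ i, ∑ j, |A (ee i) (ee j)| := by
    refine A.opNorm_le_bound₂ (by positivity) fun x y => ?_
    conv_lhs => rw [sum_ee x, sum_ee y]
    simp only [map_sum, map_smul, _root_.sum_apply, _root_.smul_apply,
      smul_eq_mul, Real.norm_eq_abs]
    simp_rw [Finset.mul_sum, Finset.sum_mul]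
    rw [Finset.sum_comm]
    refine (Finset.abs_sum_le_sum_abs _ _).trans ?_
    refine Finset.sum_le_sum fun i _ => ?_
    refine (Finset.abs_sum_le_sum_abs _ _).trans ?_
    refine Finset.sum_le_sum fun j _ => ?_
    rw [abs_mul, abs_mul]
    have := abs_coord_le x i
    have := abs_coord_le y j
    calc _ ≤ ‖y‖ * (‖x‖ * |A (ee i) (ee j)|) := by gcongr
      _ = _ := by ring
  calc ‖A‖ ^ 2 ≤ (∑ i, ∑ j, |A (ee i) (ee j)|) ^ 2 := by gcongr
    _ ≤ I * ∑ i, (∑ j, |A (ee i) (ee j)|) ^ 2 := by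
      simpa using sq_sum_le_card_mul_sum_sq (s := (Finset.univ : Finset (Fin I)))
        (f := fun i => ∑ j, |A (ee i) (ee j)|)
    _ ≤ I * ∑ i, (I * ∑ j, (A (ee i) (ee j)) ^ 2) := by
      gcongr with i _
      simpa [sq_abs] using sq_sum_le_card_mul_sum_sq (s := (Finset.univ : Finset (Fin I)))
        (f := fun j => |A (ee i) (ee j)|)
    _ = _ := by rw [← Finset.mul_sum]; ring

/-! ### The identity `∫ |D²F|² = ∫ |ΔF|²` -/

lemma ibp {f g : Euc I → ℝ} (hf : ContDiff ℝ 1 f) (hg : ContDiff ℝ 1 g)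
    (hfs : HasCompactSupport f) (v : Euc I) :
    ∫ x, f x * fderiv ℝ g x v = - ∫ x, fderiv ℝ f x v * g x := by
  have cf := hf.continuous
  have cg := hg.continuous
  have cf' := hf.continuous_fderiv one_ne_zero
  have cg' := hg.continuous_fderiv one_ne_zero
  apply integral_mul_fderiv_eq_neg_fderiv_mul_of_integrable
  · exact Continuous.integrable_of_hasCompactSupport (by fun_prop)
      (HasCompactSupport.mul_right (hfs.fderiv_apply (𝕜 := ℝ) v))
  · exact Continuous.integrable_of_hasCompactSupport (by fun_prop)
      (HasCompactSupport.mul_right hfs)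
  · exact Continuous.integrable_of_hasCompactSupport (by fun_prop)
      (HasCompactSupport.mul_right hfs)
  · intro x _; exact hf.differentiable one_ne_zero x
  · intro x _; exact hg.differentiable one_ne_zero x

lemma contDiff_fderiv_apply {n : ℕ∞} {V : Euc I → ℝ} (hV : ContDiff ℝ (n + 1) V) (v : Euc I) :
    ContDiff ℝ n (fun x => fderiv ℝ V x v) :=
  (hV.fderiv_right le_rfl).clm_apply contDiff_const

lemma contDiff_one_fderiv {V : Euc I → ℝ} (hV : ContDiff ℝ 2 V) : ContDiff ℝ 1 (fderiv ℝ V) :=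
  hV.fderiv_right (by norm_num)

lemma continuous_hes {V : Euc I → ℝ} (hV : ContDiff ℝ 2 V) : Continuous (hes V) :=
  (contDiff_one_fderiv hV).continuous_fderiv one_ne_zero

lemma hes_apply {V : Euc I → ℝ} {x : Euc I} (hV : ContDiffAt ℝ 2 V x) (v w : Euc I) :
    hes V x v w = fderiv ℝ (fun y => fderiv ℝ V y w) x v := by
  have hd : DifferentiableAt ℝ (fderiv ℝ V) x :=
    (hV.fderiv_right (m := 1) (by norm_num)).differentiableAt one_ne_zero
  rw [fderiv_clm_apply hd (differentiableAt_const w)]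
  simp [hes]

lemma hes_symm {V : Euc I → ℝ} {x : Euc I} (hV : ContDiffAt ℝ 2 V x) (v w : Euc I) :
    hes V x v w = hes V x w v :=
  (hV.isSymmSndFDerivAt (by simp)) v w

lemma continuous_tr : Continuous (tr (I := I)) := by
  unfold tr; fun_prop

lemma continuous_lap {V : Euc I → ℝ} (hV : ContDiff ℝ 2 V) : Continuous (lap V) :=
  continuous_tr.comp (continuous_hes hV)

lemma hasCompactSupport_hes {V : Euc I → ℝ} (hs : HasCompactSupport V) :
    HasCompactSupport (hes V) := (hs.fderiv ℝ).fderiv ℝ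

lemma hasCompactSupport_entry {V : Euc I → ℝ} (hs : HasCompactSupport V) (v w : Euc I) :
    HasCompactSupport (fun x => hes V x v w) :=
  (hasCompactSupport_hes hs).comp_left
    (g := fun A : Euc I →L[ℝ] Euc I →L[ℝ] ℝ => A v w) (by simp)

lemma hasCompactSupport_lap {V : Euc I → ℝ} (hs : HasCompactSupport V) :
    HasCompactSupport (lap V) :=
  (hasCompactSupport_hes hs).comp_left (g := tr) (by simp [tr])

/-- For smooth functions, two integrations by parts exchange the indices. -/
lemma integral_hes_sq_smooth {F : Euc I → ℝ} (hF : ContDiff ℝ 4 F) (hs : HasCompactSupport F)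
    (i j : Fin I) :
    ∫ x, (hes F x (ee i) (ee j)) ^ 2 ≤ ∫ x, (lap F x) ^ 2 := by
  have hF2 : ContDiff ℝ 2 F := hF.of_le (by norm_num)
  have hG : ∀ w, ContDiff ℝ 3 (fun x => fderiv ℝ F x w) := fun w =>
    contDiff_fderiv_apply (n := 3) (by norm_num; exact hF) w
  have hhe : ∀ v w, (fun x => hes F x v w) = fun x => fderiv ℝ (fun y => fderiv ℝ F y w) x v := by
    intro v w; ext x; exact hes_apply hF2.contDiffAt v w
  have hH : ∀ v w, ContDiff ℝ 2 (fun x => hes F x v w) := by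
    intro v w; rw [hhe]; exact contDiff_fderiv_apply (n := 2) (by norm_num; exact hG w) v
  have key : ∀ i j : Fin I, ∫ x, (hes F x (ee i) (ee j)) ^ 2
      = ∫ x, hes F x (ee i) (ee i) * hes F x (ee j) (ee j) := by
    intro i j
    have e1 : ∫ x, (hes F x (ee i) (ee j)) ^ 2
        = ∫ x, hes F x (ee i) (ee j) * fderiv ℝ (fun y => fderiv ℝ F y (ee j)) x (ee i) := by
      refine integral_congr_ae (ae_of_all _ fun x => ?_)
      simp only
      rw [← hes_apply hF2.contDiffAt]; ring
    have e2 : ∫ x, hes F x (ee i) (ee i) * hes F x (ee j) (ee j)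
        = ∫ x, hes F x (ee i) (ee i) * fderiv ℝ (fun y => fderiv ℝ F y (ee j)) x (ee j) := by
      refine integral_congr_ae (ae_of_all _ fun x => ?_)
      simp only
      rw [← hes_apply hF2.contDiffAt]
    rw [e1, e2, ibp ((hH _ _).of_le (by norm_num)) ((hG _).of_le (by norm_num))
        (hasCompactSupport_entry hs _ _),
      ibp ((hH _ _).of_le (by norm_num)) ((hG _).of_le (by norm_num))
        (hasCompactSupport_entry hs _ _)]
    congr 2
    ext x
    congr 1
    have h3 : ContDiffAt ℝ 2 (fun x => fderiv ℝ F x (ee i)) x :=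
      ((hG _).of_le (by norm_num)).contDiffAt
    have s1 : (fun x => hes F x (ee i) (ee j))
        = fun x => fderiv ℝ (fun y => fderiv ℝ F y (ee i)) x (ee j) := by
      rw [← hhe]; ext y; exact hes_symm hF2.contDiffAt _ _
    rw [s1, hhe (ee i) (ee i), ← hes_apply h3, ← hes_apply h3, hes_symm h3]
  have hint : ∀ i j : Fin I,
      Integrable (fun x => hes F x (ee i) (ee i) * hes F x (ee j) (ee j)) := fun i j =>
    Continuous.integrable_of_hasCompactSupport ((hH _ _).continuous.mul (hH _ _).continuous)
      (HasCompactSupport.mul_right (hasCompactSupport_entry hs _ _))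
  calc ∫ x, (hes F x (ee i) (ee j)) ^ 2
      ≤ ∑ k, ∑ l, ∫ x, (hes F x (ee k) (ee l)) ^ 2 := by
        have h0 : ∀ k l : Fin I, 0 ≤ ∫ x, (hes F x (ee k) (ee l)) ^ 2 := fun k l =>
          integral_nonneg fun x => sq_nonneg _
        exact (Finset.single_le_sum (f := fun l => ∫ x, (hes F x (ee i) (ee l)) ^ 2)
          (fun l _ => h0 i l) (Finset.mem_univ j)).trans
          (Finset.single_le_sum (f := fun k => ∑ l, ∫ x, (hes F x (ee k) (ee l)) ^ 2)
          (fun k _ => Finset.sum_nonneg fun l _ => h0 k l) (Finset.mem_univ i))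
    _ = ∑ k, ∑ l, ∫ x, hes F x (ee k) (ee k) * hes F x (ee l) (ee l) := by simp_rw [key]
    _ = ∫ x, (lap F x) ^ 2 := by
      simp_rw [← integral_finsetSum Finset.univ (fun l _ => hint _ l)]
      rw [← integral_finsetSum Finset.univ
        (fun k _ => integrable_finsetSum _ fun l _ => hint k l)]
      refine integral_congr_ae (ae_of_all _ fun x => ?_)
      simp only [lap, tr, sq, Finset.sum_mul_sum]

/-- The average of the translates of `g` with weight `η`. -/
def mol {F : Type*} [NormedAddCommGroup F] [NormedSpace ℝ F] (η : Euc I → ℝ) (g : Euc I → F)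
    (x : Euc I) : F := ∫ t, η t • g (x - t)

lemma mol_eq_conv {F : Type*} [NormedAddCommGroup F] [NormedSpace ℝ F] (η : Euc I → ℝ)
    (g : Euc I → F) :
    mol η g = MeasureTheory.convolution η g (ContinuousLinearMap.lsmul ℝ ℝ) volume := by
  ext x; simp [mol, MeasureTheory.convolution]

lemma contDiff_mol {F : Type*} [NormedAddCommGroup F] [NormedSpace ℝ F] [CompleteSpace F] {n : ℕ∞}
    {η : Euc I → ℝ}
    (hη : Continuous η) {g : Euc I → F} (hg : ContDiff ℝ n g) (hs : HasCompactSupport g) :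
    ContDiff ℝ n (mol η g) := by
  rw [mol_eq_conv]
  exact hs.contDiff_convolution_right _ hη.locallyIntegrable hg

lemma fderiv_mol {F : Type*} [NormedAddCommGroup F] [NormedSpace ℝ F] [CompleteSpace F]
    {η : Euc I → ℝ}
    (hη : Continuous η) {g : Euc I → F} (hg : ContDiff ℝ 1 g) (hs : HasCompactSupport g) :
    fderiv ℝ (mol η g) = mol η (fderiv ℝ g) := by
  ext1 x
  rw [mol_eq_conv]
  have := (hs.hasFDerivAt_convolution_right (ContinuousLinearMap.lsmul ℝ ℝ)
    (hη.locallyIntegrable (μ := volume)) hg x).fderiv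
  rw [this]
  rfl

lemma hes_mol {η : Euc I → ℝ} (hη : Continuous η) {V : Euc I → ℝ} (hV : ContDiff ℝ 2 V)
    (hs : HasCompactSupport V) : hes (mol η V) = mol η (hes V) := by
  unfold hes
  rw [fderiv_mol hη (hV.of_le (by norm_num)) hs]
  exact fderiv_mol hη (contDiff_one_fderiv hV) (hs.fderiv ℝ)

lemma mol_integrable {F : Type*} [NormedAddCommGroup F] [NormedSpace ℝ F] {η : Euc I → ℝ}
    (hη : Continuous η) {g : Euc I → F} (hg : Continuous g) (hs : HasCompactSupport g)
    (x : Euc I) : Integrable (fun t => η t • g (x - t)) := by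
  refine Continuous.integrable_of_hasCompactSupport (by fun_prop) ?_
  refine HasCompactSupport.smul_left ?_
  exact hs.comp_homeomorph (Homeomorph.subLeft x)

lemma mol_entry {η : Euc I → ℝ} (hη : Continuous η) {V : Euc I → ℝ} (hV : ContDiff ℝ 2 V)
    (hs : HasCompactSupport V) (v w x : Euc I) :
    mol η (hes V) x v w = mol η (fun y => hes V y v w) x := by
  have h1 := mol_integrable hη (continuous_hes hV) (hasCompactSupport_hes hs) x
  have h2 : Integrable (fun t => (η t • hes V (x - t)) v) :=
    h1.apply_continuousLinearMap v
  unfold mol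
  rw [ContinuousLinearMap.integral_apply h1, ContinuousLinearMap.integral_apply h2]
  rfl

lemma lap_mol {η : Euc I → ℝ} (hη : Continuous η) {V : Euc I → ℝ} (hV : ContDiff ℝ 2 V)
    (hs : HasCompactSupport V) (x : Euc I) : lap (mol η V) x = mol η (lap V) x := by
  have hc := continuous_hes hV
  have h2 : lap (mol η V) x = tr (mol η (hes V) x) := by rw [lap, hes_mol hη hV hs]
  rw [h2, tr]
  simp_rw [mol_entry hη hV hs]
  have h3 : ∀ i : Fin I, Integrable (fun t => η t • hes V (x - t) (ee i) (ee i)) := fun i =>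
    mol_integrable hη (g := fun y => hes V y (ee i) (ee i)) (by fun_prop)
      (hasCompactSupport_entry hs _ _) x
  simp only [mol, lap, tr, Finset.smul_sum]
  rw [integral_finsetSum _ fun i _ => h3 i]

/-- Mollifications of a continuous, compactly supported function converge to it in `L²` norm. -/
lemma tendsto_integral_mol_sq {g : Euc I → ℝ} (hg : Continuous g) (hs : HasCompactSupport g)
    (ψ : ℕ → ContDiffBump (0 : Euc I)) (hψ : Tendsto (fun k => (ψ k).rOut) atTop (𝓝 0))
    (hψ1 : ∀ k, (ψ k).rOut ≤ 1) :
    Tendsto (fun k => ∫ x, (mol ((ψ k).normed volume) g x) ^ 2) atTop (𝓝 (∫ x, (g x) ^ 2)) := by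
  obtain ⟨B, hB⟩ := hg.bounded_above_of_compact_support hs
  have hK : IsCompact (cthickening 1 (tsupport g)) := IsCompact.cthickening hs
  have hψc : ∀ k, Continuous ((ψ k).normed volume) := fun k => (ψ k).continuous_normed
  have hz : ∀ k x, x ∉ cthickening 1 (tsupport g) → mol ((ψ k).normed volume) g x = 0 := by
    intro k x hx
    unfold mol
    rw [integral_eq_zero_of_ae]
    refine ae_of_all _ fun t => ?_
    simp only [Pi.zero_apply, smul_eq_mul, mul_eq_zero]
    by_contra! hcon
    obtain ⟨h1, h2⟩ := hcon
    apply hx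
    have ht : t ∈ Function.support ((ψ k).normed volume) := h1
    rw [(ψ k).support_normed_eq] at ht
    have ht' : ‖t‖ < (ψ k).rOut := by simpa using ht
    refine mem_cthickening_of_dist_le x (x - t) 1 _ (subset_tsupport _ h2) ?_
    simp only [dist_self_sub_right]; linarith [hψ1 k]
  have hb : ∀ k x, |mol ((ψ k).normed volume) g x| ≤ B := by
    intro k x
    unfold mol
    have := norm_integral_le_of_norm_le (μ := volume)
      (f := fun t => (ψ k).normed volume t • g (x - t))
      (g := fun t => (ψ k).normed volume t * B) ((ψ k).integrable_normed.mul_const B)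
      (ae_of_all _ fun t => ?_)
    · rw [integral_mul_const, (ψ k).integral_normed, one_mul] at this
      exact this
    · simp only [smul_eq_mul, norm_mul, Real.norm_of_nonneg ((ψ k).nonneg_normed t)]
      exact mul_le_mul_of_nonneg_left (hB _) ((ψ k).nonneg_normed t)
  refine tendsto_integral_of_dominated_convergence
    ((cthickening 1 (tsupport g)).indicator fun _ => B ^ 2) ?_ ?_ ?_ ?_
  · intro k
    have := (contDiff_mol (n := 0) (hψc k) (contDiff_zero.2 hg) hs).continuous
    exact (this.pow 2).aestronglyMeasurable
  · exact (integrable_indicator_iff hK.measurableSet).2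
      (integrableOn_const hK.measure_lt_top.ne)
  · intro k
    refine ae_of_all _ fun x => ?_
    by_cases hx : x ∈ cthickening 1 (tsupport g)
    · rw [indicator_of_mem hx]
      simp only [norm_pow, Real.norm_eq_abs]
      exact pow_le_pow_left₀ (abs_nonneg _) (hb k x) 2
    · rw [indicator_of_notMem hx, hz k x hx]; simp
  · refine ae_of_all _ fun x => ?_
    simp_rw [mol_eq_conv]
    exact (ContDiffBump.convolution_tendsto_right_of_continuous hψ hg x).pow 2

lemma exists_bumps (I : ℕ) : ∃ ψ : ℕ → ContDiffBump (0 : Euc I),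
    Tendsto (fun k => (ψ k).rOut) atTop (𝓝 0) ∧ ∀ k, (ψ k).rOut ≤ 1 := by
  refine ⟨fun k => ⟨1 / (2 * ((k : ℝ) + 1)), 1 / ((k : ℝ) + 1), by positivity, by
      apply one_div_lt_one_div_of_lt <;> nlinarith [(Nat.cast_nonneg k : (0 : ℝ) ≤ k)]⟩,
    tendsto_one_div_add_atTop_nhds_zero_nat, fun k => ?_⟩
  simp only
  rw [div_le_one (by positivity)]
  linarith [(Nat.cast_nonneg k : (0 : ℝ) ≤ k)]

/-- The `L²` norm of every second derivative of a compactly supported `C²` function is bounded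
by that of the Laplacian; the smooth case passes to the limit under mollification. -/
lemma integral_hes_sq_le {F : Euc I → ℝ} (hF : ContDiff ℝ 2 F) (hs : HasCompactSupport F)
    (i j : Fin I) :
    ∫ x, (hes F x (ee i) (ee j)) ^ 2 ≤ ∫ x, (lap F x) ^ 2 := by
  obtain ⟨ψ, hψ, hψ1⟩ := exists_bumps I
  have hψc : ∀ k, Continuous ((ψ k).normed volume) := fun k => (ψ k).continuous_normed
  have t1 := tendsto_integral_mol_sq (g := fun x => hes F x (ee i) (ee j))
    (by have := continuous_hes hF; fun_prop) (hasCompactSupport_entry hs _ _) ψ hψ hψ1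
  have t2 := tendsto_integral_mol_sq (continuous_lap hF) (hasCompactSupport_lap hs) ψ hψ hψ1
  refine le_of_tendsto_of_tendsto' t1 t2 fun k => ?_
  have hsm : ContDiff ℝ 4 (mol ((ψ k).normed volume) F) := by
    rw [mol_eq_conv]
    exact (ψ k).hasCompactSupport_normed.contDiff_convolution_left (n := 4) _
      (ψ k).contDiff_normed hF.continuous.locallyIntegrable
  have hcs : HasCompactSupport (mol ((ψ k).normed volume) F) := by
    rw [mol_eq_conv]
    exact (ψ k).hasCompactSupport_normed.convolution _ hs
  have := integral_hes_sq_smooth hsm hcs i j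
  have e1 : ∀ x, hes (mol ((ψ k).normed volume) F) x (ee i) (ee j)
      = mol ((ψ k).normed volume) (fun y => hes F y (ee i) (ee j)) x := fun x => by
    rw [hes_mol (hψc k) hF hs, mol_entry (hψc k) hF hs]
  simp_rw [lap_mol (hψc k) hF hs, e1] at this
  exact this

/-! ### The Caccioppoli inequality -/

lemma hes_mul {f g : Euc I → ℝ} (hf : ContDiff ℝ 2 f) (hg : ContDiff ℝ 2 g) (x v w : Euc I) :
    hes (fun y => f y * g y) x v w = f x * hes g x v w + fderiv ℝ f x v * fderiv ℝ g x w
      + fderiv ℝ g x v * fderiv ℝ f x w + g x * hes f x v w := by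
  have df : ∀ y, DifferentiableAt ℝ f y := hf.differentiable (by norm_num)
  have dg : ∀ y, DifferentiableAt ℝ g y := hg.differentiable (by norm_num)
  have cf : ContDiff ℝ 1 (fun y => fderiv ℝ f y w) :=
    contDiff_fderiv_apply (n := 1) (by norm_num; exact hf) w
  have cg : ContDiff ℝ 1 (fun y => fderiv ℝ g y w) :=
    contDiff_fderiv_apply (n := 1) (by norm_num; exact hg) w
  rw [hes_apply (hf.mul hg).contDiffAt, hes_apply hf.contDiffAt, hes_apply hg.contDiffAt]
  have e : (fun y => fderiv ℝ (fun y => f y * g y) y w)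
      = fun y => f y * fderiv ℝ g y w + g y * fderiv ℝ f y w := by
    ext y
    rw [fderiv_fun_mul (df y) (dg y)]; simp
  rw [e, fderiv_fun_add ((df x).fun_mul (cg.differentiable one_ne_zero x))
    ((dg x).fun_mul (cf.differentiable one_ne_zero x)),
    fderiv_fun_mul (df x) (cg.differentiable one_ne_zero x),
    fderiv_fun_mul (dg x) (cf.differentiable one_ne_zero x)]
  simp; ring

/-- The squared Euclidean length of the gradient. -/
def gs (v : Euc I → ℝ) (x : Euc I) : ℝ := ∑ i, (fderiv ℝ v x (ee i)) ^ 2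

lemma gs_nonneg (v : Euc I → ℝ) (x : Euc I) : 0 ≤ gs v x :=
  Finset.sum_nonneg fun _ _ => sq_nonneg _

lemma continuous_gs {v : Euc I → ℝ} (hv : ContDiff ℝ 1 v) : Continuous (gs v) := by
  have := hv.continuous_fderiv one_ne_zero
  unfold gs; fun_prop

lemma lap_mul {f g : Euc I → ℝ} (hf : ContDiff ℝ 2 f) (hg : ContDiff ℝ 2 g) (x : Euc I) :
    lap (fun y => f y * g y) x = f x * lap g x
      + 2 * ∑ i, fderiv ℝ f x (ee i) * fderiv ℝ g x (ee i) + g x * lap f x := by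
  simp only [lap, tr, hes_mul hf hg, Finset.mul_sum, ← Finset.sum_add_distrib]
  refine Finset.sum_congr rfl fun i _ => ?_
  ring

lemma lap_mul_sq_le {f g : Euc I → ℝ} (hf : ContDiff ℝ 2 f) (hg : ContDiff ℝ 2 g) (x : Euc I) :
    (lap (fun y => f y * g y) x) ^ 2 ≤ 3 * (f x ^ 2 * lap g x ^ 2 + 4 * (gs f x * gs g x)
      + g x ^ 2 * lap f x ^ 2) := by
  rw [lap_mul hf hg]
  have h := Finset.sum_mul_sq_le_sq_mul_sq Finset.univ (fun i => fderiv ℝ f x (ee i))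
    (fun i => fderiv ℝ g x (ee i))
  rw [show (∑ i, fderiv ℝ f x (ee i) ^ 2) = gs f x from rfl,
    show (∑ i, fderiv ℝ g x (ee i) ^ 2) = gs g x from rfl] at h
  set A := f x * lap g x
  set S := ∑ i, fderiv ℝ f x (ee i) * fderiv ℝ g x (ee i)
  set B := g x * lap f x
  have e1 : f x ^ 2 * lap g x ^ 2 = A ^ 2 := by simp only [A]; ring
  have e2 : g x ^ 2 * lap f x ^ 2 = B ^ 2 := by simp only [B]; ring
  rw [e1, e2]
  nlinarith [sq_nonneg (A - 2 * S), sq_nonneg (A - B), sq_nonneg (2 * S - B)]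

/-- The Caccioppoli inequality: the gradient is controlled in `L²` by the function and its
Laplacian, up to a cutoff. -/
lemma cacc_grad {χ W : Euc I → ℝ} (hχ : ContDiff ℝ 2 χ) (hχs : HasCompactSupport χ)
    (hW : ContDiff ℝ 2 W) :
    ∫ x, χ x ^ 2 * gs W x ≤
      ∫ x, ((χ x ^ 2 + 4 * gs χ x) * W x ^ 2 + χ x ^ 2 * lap W x ^ 2) := by
  have hχ1 : ContDiff ℝ 1 χ := hχ.of_le (by norm_num)
  have hW1 : ContDiff ℝ 1 W := hW.of_le (by norm_num)
  have c1 := hχ.continuous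
  have c2 := hW.continuous
  have c3 := continuous_gs hχ1
  have c4 := continuous_gs hW1
  have c5 := continuous_lap hW
  have c6 := hχ1.continuous_fderiv one_ne_zero
  have c7 := hW1.continuous_fderiv one_ne_zero
  have c8 := continuous_hes hW
  have sgs : HasCompactSupport (gs χ) := by
    unfold gs
    exact (hχs.fderiv ℝ).comp_left (g := fun L : Euc I →L[ℝ] ℝ => ∑ i, (L (ee i)) ^ 2) (by simp)
  have cs2 : HasCompactSupport (fun x => χ x ^ 2) :=
    hχs.comp_left (g := fun t : ℝ => t ^ 2) (by simp)
  have hint : ∀ u : Euc I → ℝ, Continuous u → Integrable (fun x => χ x ^ 2 * u x) :=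
    fun u hu => Continuous.integrable_of_hasCompactSupport (by fun_prop) cs2.mul_right
  have hint' : ∀ u : Euc I → ℝ, Continuous u → Integrable (fun x => gs χ x * u x) :=
    fun u hu => Continuous.integrable_of_hasCompactSupport (by fun_prop) sgs.mul_right
  have hint3 : ∀ u : Euc I → ℝ, Continuous u → Integrable (fun x => χ x * u x) :=
    fun u hu => Continuous.integrable_of_hasCompactSupport (by fun_prop) hχs.mul_right
  have key : ∀ i : Fin I, ∫ x, χ x ^ 2 * (W x * hes W x (ee i) (ee i))
      = - ∫ x, (χ x ^ 2 * (fderiv ℝ W x (ee i)) ^ 2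
          + χ x * (2 * fderiv ℝ χ x (ee i) * W x * fderiv ℝ W x (ee i))) := by
    intro i
    have h := ibp (f := fun x => χ x ^ 2 * W x) (g := fun x => fderiv ℝ W x (ee i))
      ((hχ1.pow 2).mul hW1) (contDiff_fderiv_apply (n := 1) (by norm_num; exact hW) _)
      cs2.mul_right (ee i)
    have e1 : ∫ x, χ x ^ 2 * (W x * hes W x (ee i) (ee i))
        = ∫ x, (χ x ^ 2 * W x) * fderiv ℝ (fun y => fderiv ℝ W y (ee i)) x (ee i) := by
      congr 1; ext x; rw [← hes_apply hW.contDiffAt]; ring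
    rw [e1, h]
    congr 2; ext x
    have d1 : DifferentiableAt ℝ χ x := hχ1.differentiable one_ne_zero x
    have d2 : DifferentiableAt ℝ W x := hW1.differentiable one_ne_zero x
    rw [fderiv_fun_mul (d1.fun_pow 2) d2, fderiv_fun_pow _ d1]
    simp; ring
  have hsum : ∫ x, χ x ^ 2 * (W x * lap W x) = - ∫ x, (χ x ^ 2 * gs W x
      + χ x * ∑ i, (2 * fderiv ℝ χ x (ee i) * W x * fderiv ℝ W x (ee i))) := by
    have e1 : ∀ x, χ x ^ 2 * (W x * lap W x)
        = ∑ i, χ x ^ 2 * (W x * hes W x (ee i) (ee i)) := by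
      intro x; simp only [lap, tr, Finset.mul_sum]
    have e2 : ∀ x, χ x ^ 2 * gs W x
        + χ x * ∑ i, (2 * fderiv ℝ χ x (ee i) * W x * fderiv ℝ W x (ee i))
        = ∑ i, (χ x ^ 2 * (fderiv ℝ W x (ee i)) ^ 2
          + χ x * (2 * fderiv ℝ χ x (ee i) * W x * fderiv ℝ W x (ee i))) := by
      intro x; simp only [gs, Finset.mul_sum, ← Finset.sum_add_distrib]
    simp_rw [e1, e2]
    rw [integral_finsetSum _ fun i _ => hint _ (by fun_prop),
      integral_finsetSum _ fun i _ => Integrable.fun_add (hint _ (by fun_prop))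
        (hint3 _ (by fun_prop)), ← Finset.sum_neg_distrib]
    exact Finset.sum_congr rfl fun i _ => key i
  have i1 : Integrable (fun x => χ x ^ 2 * gs W x) := hint _ c4
  have i2 : Integrable (fun x =>
      χ x * ∑ i, (2 * fderiv ℝ χ x (ee i) * W x * fderiv ℝ W x (ee i))) :=
    hint3 _ (by fun_prop)
  have i3 : Integrable (fun x => χ x ^ 2 * (W x * lap W x)) := hint _ (by fun_prop)
  have i4 : Integrable (fun x => (χ x ^ 2 + 4 * gs χ x) * W x ^ 2 + χ x ^ 2 * lap W x ^ 2) := by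
    have := ((hint (fun x => W x ^ 2) (by fun_prop)).add
      ((hint' (fun x => W x ^ 2) (by fun_prop)).const_mul 4)).add
      (hint (fun x => lap W x ^ 2) (by fun_prop))
    refine this.congr (ae_of_all _ fun x => ?_)
    simp; ring
  rw [integral_add i1 i2] at hsum
  have hle : ∫ x, (-(χ x ^ 2 * (W x * lap W x))
      - χ x * ∑ i, (2 * fderiv ℝ χ x (ee i) * W x * fderiv ℝ W x (ee i)))
      ≤ ∫ x, ((1 / 2 : ℝ) * ((χ x ^ 2 + 4 * gs χ x) * W x ^ 2 + χ x ^ 2 * lap W x ^ 2)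
        + (1 / 2 : ℝ) * (χ x ^ 2 * gs W x)) := by
    refine integral_mono (i3.neg.sub i2) ((i4.const_mul _).add (i1.const_mul _)) fun x => ?_
    simp only
    have h1 : -(χ x * ∑ i, (2 * fderiv ℝ χ x (ee i) * W x * fderiv ℝ W x (ee i)))
        ≤ 2 * gs χ x * W x ^ 2 + 1 / 2 * (χ x ^ 2 * gs W x) := by
      simp only [gs, Finset.mul_sum, Finset.sum_mul, ← Finset.sum_add_distrib,
        ← Finset.sum_neg_distrib]
      refine Finset.sum_le_sum fun i _ => ?_
      nlinarith [sq_nonneg (2 * (fderiv ℝ χ x (ee i) * W x) + χ x * fderiv ℝ W x (ee i))]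
    have h2 : -(χ x ^ 2 * (W x * lap W x)) ≤ 1 / 2 * (χ x ^ 2 * (W x ^ 2 + lap W x ^ 2)) := by
      nlinarith [mul_nonneg (sq_nonneg (χ x)) (sq_nonneg (W x + lap W x))]
    linarith
  have i3' : Integrable (fun x => -(χ x ^ 2 * (W x * lap W x))) := i3.neg
  rw [integral_sub i3' i2, integral_neg, integral_add (i4.const_mul _) (i1.const_mul _),
    integral_const_mul, integral_const_mul] at hle
  linarith

/-- A smooth cutoff function between two concentric balls. -/
lemma exists_cutoff {r s : ℝ} (hr : 0 < r) (hrs : r < s) :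
    ∃ χ : Euc I → ℝ, ContDiff ℝ 2 χ ∧ HasCompactSupport χ ∧ (∀ x, ‖x‖ ≤ r → χ x = 1) ∧
      (∀ x, s ≤ ‖x‖ → χ x = 0) ∧ ∀ x, 0 ≤ χ x ∧ χ x ≤ 1 := by
  let f : ContDiffBump (0 : Euc I) := ⟨r, s, hr, hrs⟩
  refine ⟨f, f.contDiff, f.hasCompactSupport, fun x hx => ?_, fun x hx => ?_, fun x =>
    ⟨f.nonneg, f.le_one⟩⟩
  · exact f.one_of_mem_closedBall (by simpa using hx)
  · exact f.zero_of_le_dist (by simpa using hx)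

lemma eq_zero_of_open {F : Type*} [NormedAddCommGroup F] [NormedSpace ℝ F] {χ : Euc I → F}
    {U : Set (Euc I)} (hU : IsOpen U)
    {c : F} (h : ∀ x ∈ U, χ x = c) {x : Euc I} (hx : x ∈ U) : fderiv ℝ χ x = 0 := by
  have : χ =ᶠ[𝓝 x] fun _ => c := by
    filter_upwards [hU.mem_nhds hx] with y hy using h y hy
  rw [this.fderiv_eq]; simp

lemma fderiv_cutoff_zero {χ : Euc I → ℝ} {s : ℝ} (h : ∀ x, s ≤ ‖x‖ → χ x = 0)
    {x : Euc I} (hx : s < ‖x‖) : fderiv ℝ χ x = 0 :=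
  eq_zero_of_open (U := {y | s < ‖y‖}) (isOpen_lt continuous_const continuous_norm)
    (fun y hy => h y (le_of_lt hy)) hx

lemma hes_cutoff_zero {χ : Euc I → ℝ} {s : ℝ} (h : ∀ x, s ≤ ‖x‖ → χ x = 0)
    {x : Euc I} (hx : s < ‖x‖) : hes χ x = 0 :=
  eq_zero_of_open (U := {y | s < ‖y‖}) (isOpen_lt continuous_const continuous_norm)
    (fun _ hy => fderiv_cutoff_zero h hy) hx

lemma hes_congr {f g : Euc I → ℝ} {U : Set (Euc I)} (hU : IsOpen U) (h : ∀ x ∈ U, f x = g x)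
    {x : Euc I} (hx : x ∈ U) : hes f x = hes g x := by
  have : f =ᶠ[𝓝 x] g := by
    filter_upwards [hU.mem_nhds hx] with y hy using h y hy
  exact this.fderiv.fderiv_eq

lemma fderiv_congr {f g : Euc I → ℝ} {U : Set (Euc I)} (hU : IsOpen U) (h : ∀ x ∈ U, f x = g x)
    {x : Euc I} (hx : x ∈ U) : fderiv ℝ f x = fderiv ℝ g x := by
  have : f =ᶠ[𝓝 x] g := by
    filter_upwards [hU.mem_nhds hx] with y hy using h y hy
  exact this.fderiv_eq

lemma integral_le_setIntegral {F G : Euc I → ℝ} {s : ℝ} (hF : Continuous F) (hG : Continuous G)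
    (h0 : ∀ x, s ≤ ‖x‖ → F x ≤ 0) (h : ∀ x, ‖x‖ < s → F x ≤ G x) (hFi : Integrable F) :
    ∫ x, F x ≤ ∫ x in ball 0 s, G x := by
  rw [← integral_indicator measurableSet_ball]
  refine integral_mono hFi ?_ fun x => ?_
  · rw [integrable_indicator_iff measurableSet_ball]
    exact (hG.continuousOn.integrableOn_compact (isCompact_closedBall 0 s)).mono_set
      ball_subset_closedBall
  · by_cases hx : x ∈ ball (0 : Euc I) s
    · rw [indicator_of_mem hx]; exact h x (by simpa using hx)
    · rw [indicator_of_notMem hx]; exact h0 x (by simpa using hx)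

lemma integrableOn_ball {F : Type*} [NormedAddCommGroup F] {G : Euc I → F} (hG : Continuous G)
    (x : Euc I) (s : ℝ) : IntegrableOn G (ball x s) :=
  (hG.continuousOn.integrableOn_compact (isCompact_closedBall x s)).mono_set
      ball_subset_closedBall

/-- Interior `L²` estimate for second derivatives. -/
lemma cacc (I : ℕ) : ∃ C : ℝ, 0 < C ∧ ∀ W : Euc I → ℝ, ContDiff ℝ 2 W →
    ∫ x in ball 0 (1 / 2), ‖hes W x‖ ^ 2 ≤
      C * ∫ x in ball 0 (3 / 4), (W x ^ 2 + lap W x ^ 2) := by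
  obtain ⟨χ, hχ, hχs, hχ1, hχ0, hχb⟩ := exists_cutoff (I := I) (r := 1 / 2) (s := 5 / 8)
    (by norm_num) (by norm_num)
  obtain ⟨χ', hχ', hχs', hχ1', hχ0', hχb'⟩ := exists_cutoff (I := I) (r := 5 / 8) (s := 3 / 4)
    (by norm_num) (by norm_num)
  have sgs : ∀ {u : Euc I → ℝ}, HasCompactSupport u → HasCompactSupport (gs u) := fun hu => by
    unfold gs
    exact (hu.fderiv ℝ).comp_left (g := fun L : Euc I →L[ℝ] ℝ => ∑ i, (L (ee i)) ^ 2) (by simp)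
  have hc1 : ∀ {u : Euc I → ℝ}, ContDiff ℝ 2 u → Continuous (gs u) := fun hu =>
    continuous_gs (hu.of_le (by norm_num))
  obtain ⟨B1, hB1⟩ := (hc1 hχ).bounded_above_of_compact_support (sgs hχs)
  obtain ⟨B2, hB2⟩ := (hc1 hχ').bounded_above_of_compact_support (sgs hχs')
  obtain ⟨B3, hB3⟩ := (continuous_lap hχ).bounded_above_of_compact_support
    (hasCompactSupport_lap hχs)
  set B := |B1| + |B2| + |B3| ^ 2 + 1 with hB
  have hBpos : 0 < B := by positivity
  have b1 : ∀ x, gs χ x ≤ B := fun x => by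
    have := (le_abs_self _).trans (hB1 x)
    linarith [le_abs_self B1, abs_nonneg B2, sq_nonneg (|B3|)]
  have b2 : ∀ x, gs χ' x ≤ B := fun x => by
    have := (le_abs_self _).trans (hB2 x)
    linarith [le_abs_self B2, abs_nonneg B1, sq_nonneg (|B3|)]
  have b3 : ∀ x, lap χ x ^ 2 ≤ B := fun x => by
    have h1 := hB3 x
    rw [Real.norm_eq_abs] at h1
    have : lap χ x ^ 2 ≤ |B3| ^ 2 := by
      rw [← sq_abs]; exact pow_le_pow_left₀ (abs_nonneg _) (h1.trans (le_abs_self _)) 2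
    linarith [abs_nonneg B1, abs_nonneg B2]
  refine ⟨((I : ℝ) ^ 2 * (I * I) + 1) * (12 * B * (4 * B + 1) + 3 * B + 3), by positivity,
    fun W hW => ?_⟩
  have cW := hW.continuous
  have cl := continuous_lap hW
  have cg := hc1 hW
  have ch := continuous_hes hW
  set J := ∫ x in ball (0 : Euc I) (3 / 4), (W x ^ 2 + lap W x ^ 2) with hJ
  have hJ0 : 0 ≤ J := integral_nonneg fun x => by positivity
  have cχ := hχ.continuous
  have cχ' := hχ'.continuous
  have hgrad : ∫ x, χ' x ^ 2 * gs W x ≤ (4 * B + 1) * J := by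
    refine (cacc_grad hχ' hχs' hW).trans ?_
    rw [hJ, ← integral_const_mul]
    have cgg := hc1 hχ'
    have zz : ∀ x : Euc I, 3 / 4 < ‖x‖ → gs χ' x = 0 := fun x hx => by
      simp [gs, fderiv_cutoff_zero hχ0' hx]
    have zz' : ∀ x : Euc I, 3 / 4 ≤ ‖x‖ → gs χ' x = 0 := fun x hx => by
      have : fderiv ℝ χ' x = 0 := by
        apply IsLocalMin.fderiv_eq_zero
        filter_upwards with y
        rw [hχ0' x hx]; exact (hχb' y).1
      simp [gs, this]
    refine integral_le_setIntegral (by fun_prop) (by fun_prop) ?_ ?_ ?_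
    · intro x hx
      rw [hχ0' x hx, zz' x hx]; simp
    · intro x hx
      have h1 : χ' x ^ 2 ≤ 1 := pow_le_one₀ (hχb' x).1 (hχb' x).2
      have h2 := b2 x
      have h3 := gs_nonneg χ' x
      have : (χ' x ^ 2 + 4 * gs χ' x) * W x ^ 2 ≤ (4 * B + 1) * W x ^ 2 :=
        mul_le_mul_of_nonneg_right (by linarith) (sq_nonneg _)
      have : χ' x ^ 2 * lap W x ^ 2 ≤ (4 * B + 1) * lap W x ^ 2 :=
        mul_le_mul_of_nonneg_right (by linarith) (sq_nonneg _)
      linarith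
    · refine Continuous.integrable_of_hasCompactSupport (by fun_prop) ?_
      refine HasCompactSupport.intro (isCompact_closedBall (0 : Euc I) (3 / 4)) fun x hx => ?_
      have hx' : 3 / 4 < ‖x‖ := by simpa using hx
      rw [hχ0' x hx'.le, zz x hx']; simp
  have hcχW : HasCompactSupport (fun y => χ y * W y) := hχs.mul_right
  have h2χW : ContDiff ℝ 2 (fun y => χ y * W y) := hχ.mul hW
  have hlap : ∫ x, (lap (fun y => χ y * W y) x) ^ 2 ≤
      (12 * B * (4 * B + 1) + 3 * B + 3) * J := by
    have hi : Integrable (fun x => (lap (fun y => χ y * W y) x) ^ 2) := by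
      have := continuous_lap h2χW
      exact Continuous.integrable_of_hasCompactSupport (by fun_prop)
        ((hasCompactSupport_lap hcχW).comp_left (g := fun t : ℝ => t ^ 2) (by simp))
    have hi2 : Integrable (fun x => χ' x ^ 2 * gs W x) :=
      Continuous.integrable_of_hasCompactSupport (by fun_prop)
        (HasCompactSupport.mul_right (hχs'.comp_left (g := fun t : ℝ => t ^ 2) (by simp)))
    have : ∫ x, ((lap (fun y => χ y * W y) x) ^ 2 - 12 * B * (χ' x ^ 2 * gs W x))
        ≤ ∫ x in ball (0 : Euc I) (3 / 4), (3 * B + 3) * (W x ^ 2 + lap W x ^ 2) := by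
      refine integral_le_setIntegral ?_ (by fun_prop) ?_ ?_ (hi.sub (hi2.const_mul _))
      · have := continuous_lap h2χW
        fun_prop
      · intro x hx
        have : lap (fun y => χ y * W y) x = 0 := by
          rw [lap, hes_cutoff_zero (χ := fun y => χ y * W y) (s := 5 / 8)
            (fun y hy => by simp [hχ0 y hy]) (by linarith)]
          simp [tr]
        rw [this, hχ0' x hx]; simp
      · intro x hx
        have h1 : χ x ^ 2 ≤ 1 := pow_le_one₀ (hχb x).1 (hχb x).2
        have h2 := b3 x
        have h3 : gs χ x * gs W x ≤ B * (χ' x ^ 2 * gs W x) := by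
          by_cases hx1 : ‖x‖ ≤ 5 / 8
          · rw [hχ1' x hx1]
            have := mul_le_mul_of_nonneg_right (b1 x) (gs_nonneg W x)
            linarith
          · have : gs χ x = 0 := by simp [gs, fderiv_cutoff_zero hχ0 (not_le.1 hx1)]
            rw [this]
            have := gs_nonneg W x
            simp only [zero_mul]; positivity
        have h4 := lap_mul_sq_le hχ hW x
        have h5 : χ x ^ 2 * lap W x ^ 2 ≤ 1 * lap W x ^ 2 := by gcongr
        have h6 : W x ^ 2 * lap χ x ^ 2 ≤ W x ^ 2 * B := by gcongr
        nlinarith [sq_nonneg (W x), mul_nonneg hBpos.le (sq_nonneg (lap W x))]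
    rw [integral_sub hi (hi2.const_mul _), integral_const_mul, integral_const_mul] at this
    have h7 : 12 * B * ∫ x, χ' x ^ 2 * gs W x ≤ 12 * B * ((4 * B + 1) * J) := by gcongr
    nlinarith
  have hent : ∀ i j : Fin I, ∫ x in ball (0 : Euc I) (1 / 2), (hes W x (ee i) (ee j)) ^ 2 ≤
      (12 * B * (4 * B + 1) + 3 * B + 3) * J := by
    intro i j
    refine le_trans ?_ ((integral_hes_sq_le h2χW hcχW i j).trans hlap)
    have : ∫ x in ball (0 : Euc I) (1 / 2), (hes W x (ee i) (ee j)) ^ 2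
        = ∫ x in ball (0 : Euc I) (1 / 2), (hes (fun y => χ y * W y) x (ee i) (ee j)) ^ 2 := by
      refine setIntegral_congr_fun measurableSet_ball fun x hx => ?_
      rw [hes_congr (f := W) (g := fun y => χ y * W y) isOpen_ball (fun y hy => ?_) hx]
      show W y = χ y * W y
      rw [hχ1 y (by simpa using (mem_ball.1 hy).le), one_mul]
    rw [this]
    refine setIntegral_le_integral ?_ (ae_of_all _ fun x => sq_nonneg _)
    have := continuous_hes h2χW
    exact Continuous.integrable_of_hasCompactSupport (by fun_prop)
        ((hasCompactSupport_entry hcχW _ _).comp_left (g := fun t : ℝ => t ^ 2) (by simp))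
  have hie : ∀ i j : Fin I, IntegrableOn (fun x => (hes W x (ee i) (ee j)) ^ 2)
      (ball (0 : Euc I) (1 / 2)) := fun i j => integrableOn_ball (by fun_prop) _ _
  calc ∫ x in ball (0 : Euc I) (1 / 2), ‖hes W x‖ ^ 2
      ≤ ∫ x in ball (0 : Euc I) (1 / 2),
          (I : ℝ) ^ 2 * ∑ i, ∑ j, (hes W x (ee i) (ee j)) ^ 2 := by
        refine integral_mono (integrableOn_ball (by fun_prop) _ _)
          (integrableOn_ball (by fun_prop) _ _) fun x => norm_sq_le_entries _
    _ = (I : ℝ) ^ 2 * ∑ i, ∑ j, ∫ x in ball (0 : Euc I) (1 / 2),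
          (hes W x (ee i) (ee j)) ^ 2 := by
        rw [integral_const_mul, integral_finsetSum _ fun i _ =>
          integrable_finsetSum _ fun j _ => hie i j]
        congr 1
        exact Finset.sum_congr rfl fun i _ => integral_finsetSum _ fun j _ => hie i j
    _ ≤ (I : ℝ) ^ 2 * ∑ i : Fin I, ∑ j : Fin I, (12 * B * (4 * B + 1) + 3 * B + 3) * J := by
        gcongr with i _ j _
        exact hent i j
    _ = ((I : ℝ) ^ 2 * (I * I)) * ((12 * B * (4 * B + 1) + 3 * B + 3) * J) := by
        simp; ring
    _ ≤ ((I : ℝ) ^ 2 * (I * I) + 1) * ((12 * B * (4 * B + 1) + 3 * B + 3) * J) :=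
        mul_le_mul_of_nonneg_right (by linarith) (by positivity)
    _ = _ := by ring

/-! ### The distance of a function to its mollification -/

/-- The Cauchy--Schwarz inequality for a signed weight. -/
lemma weighted_cs {P : Type*} [MeasurableSpace P] {ν : Measure P} {w g : P → ℝ}
    (hw : Integrable w ν) (hg : Integrable (fun p => w p * g p) ν)
    (hg2 : Integrable (fun p => |w p| * g p ^ 2) ν) :
    (∫ p, w p * g p ∂ν) ^ 2 ≤ (∫ p, |w p| ∂ν) * ∫ p, |w p| * g p ^ 2 ∂ν := by
  have h : ∀ t : ℝ, 0 ≤ (∫ p, |w p| ∂ν) * (t * t) + (-2 * ∫ p, w p * g p ∂ν) * t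
      + ∫ p, |w p| * g p ^ 2 ∂ν := by
    intro t
    have e : (∫ p, |w p| ∂ν) * (t * t) + (-2 * ∫ p, w p * g p ∂ν) * t
      + ∫ p, |w p| * g p ^ 2 ∂ν
      = ∫ p, (|w p| * (t * t) + (w p * g p) * (-2 * t) + |w p| * g p ^ 2) ∂ν := by
      have i1 : Integrable (fun p => |w p| * (t * t)) ν := hw.abs.mul_const _
      have i2 : Integrable (fun p => (w p * g p) * (-2 * t)) ν := hg.mul_const _
      have i3 : Integrable (fun p => |w p| * (t * t) + (w p * g p) * (-2 * t)) ν := i1.add i2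
      rw [integral_add i3 hg2, integral_add i1 i2, integral_mul_const, integral_mul_const]
      ring
    rw [e]
    refine integral_nonneg fun p => ?_
    show 0 ≤ |w p| * (t * t) + (w p * g p) * (-2 * t) + |w p| * g p ^ 2
    rcases abs_cases (w p) with ⟨h, h0⟩ | ⟨h, h0⟩ <;> rw [h]
    · nlinarith [mul_nonneg h0 (sq_nonneg (t - g p))]
    · nlinarith [mul_nonneg (neg_nonneg.2 h0.le) (sq_nonneg (t + g p))]
  have := discrim_le_zero h
  rw [discrim] at this
  nlinarith

/-- Young's inequality for a localized superposition of translations. -/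
lemma young_local {P : Type*} [MeasurableSpace P] [TopologicalSpace P] [OpensMeasurableSpace P]
    [SecondCountableTopology P]
    {ν : Measure P} [SFinite ν] {w : P → ℝ} (hw : Integrable w ν) {s : P → Euc I}
    (hs : Continuous s) (hs' : ∀ᵐ p ∂ν, w p ≠ 0 → ‖s p‖ ≤ 1 / 4)
    {f : Euc I → ℝ} (hf : Continuous f) (hfs : HasCompactSupport f) :
    ∫ x in ball (0 : Euc I) (3 / 4), (∫ p, w p * f (x - s p) ∂ν) ^ 2 ≤
      (∫ p, |w p| ∂ν) ^ 2 * ∫ x in ball (0 : Euc I) 1, f x ^ 2 := by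
  obtain ⟨B, hB⟩ := hf.bounded_above_of_compact_support hfs
  have hB' : ∀ x, f x ^ 2 ≤ B ^ 2 := fun x => by
    rw [← sq_abs]; exact pow_le_pow_left₀ (abs_nonneg _) (hB x) 2
  have hfi : Integrable (fun x => f x ^ 2) := Continuous.integrable_of_hasCompactSupport
    (by fun_prop) (hfs.comp_left (g := fun t : ℝ => t ^ 2) (by simp))
  have i1 : ∀ x, Integrable (fun p => w p * f (x - s p)) ν := fun x =>
    hw.mul_bdd (c := B) (by
      have : Continuous (fun p => f (x - s p)) := by fun_prop
      exact this.aestronglyMeasurable) (ae_of_all _ fun p => hB _)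
  have i2 : ∀ x, Integrable (fun p => |w p| * f (x - s p) ^ 2) ν := fun x =>
    hw.abs.mul_bdd (c := B ^ 2) (by
      have : Continuous (fun p => f (x - s p) ^ 2) := by fun_prop
      exact this.aestronglyMeasurable) (ae_of_all _ fun p => by
        rw [Real.norm_of_nonneg (sq_nonneg _)]; exact hB' _)
  have hprod : Integrable (Function.uncurry fun (x : Euc I) (p : P) => |w p| * f (x - s p) ^ 2)
      ((volume.restrict (ball (0 : Euc I) (3 / 4))).prod ν) := by
    have h1 : Integrable (fun z : Euc I × P => (1 : ℝ) * |w z.2|)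
        ((volume.restrict (ball (0 : Euc I) (3 / 4))).prod ν) :=
      Integrable.mul_prod (integrableOn_ball (G := fun _ : Euc I => (1 : ℝ)) continuous_const 0 (3 / 4))
        hw.abs
    have h2 : Continuous (fun z : Euc I × P => f (z.1 - s z.2) ^ 2) := by fun_prop
    have := h1.mul_bdd (c := B ^ 2) h2.aestronglyMeasurable (ae_of_all _ fun p => by
        rw [Real.norm_of_nonneg (sq_nonneg _)]; exact hB' _)
    refine this.congr (ae_of_all _ fun z => ?_)
    simp [Function.uncurry]
  set m := ∫ p, |w p| ∂ν with hm
  have hm0 : 0 ≤ m := integral_nonneg fun p => abs_nonneg _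
  calc ∫ x in ball (0 : Euc I) (3 / 4), (∫ p, w p * f (x - s p) ∂ν) ^ 2
      ≤ ∫ x in ball (0 : Euc I) (3 / 4), m * ∫ p, |w p| * f (x - s p) ^ 2 ∂ν := by
        refine integral_mono_of_nonneg (ae_of_all _ fun x => sq_nonneg _)
          (hprod.integral_prod_left.const_mul m) (ae_of_all _ fun x => ?_)
        exact weighted_cs hw (i1 x) (i2 x)
    _ = m * ∫ p, (|w p| * ∫ x in ball (0 : Euc I) (3 / 4), f (x - s p) ^ 2) ∂ν := by
        rw [integral_const_mul, integral_integral_swap hprod]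
        simp_rw [integral_const_mul]
    _ ≤ m * ∫ p, (|w p| * ∫ x in ball (0 : Euc I) 1, f x ^ 2) ∂ν := by
        gcongr m * ?_
        refine integral_mono_of_nonneg (ae_of_all _ fun p => ?_) (hw.abs.mul_const _) ?_
        · exact mul_nonneg (abs_nonneg _) (integral_nonneg fun x => sq_nonneg _)
        · filter_upwards [hs'] with p hp
          by_cases h0 : w p = 0
          · simp [h0]
          · refine mul_le_mul_of_nonneg_left ?_ (abs_nonneg _)
            rw [← integral_indicator measurableSet_ball, ← integral_indicator measurableSet_ball,
              ← integral_sub_right_eq_self ((ball (0 : Euc I) 1).indicator fun x => f x ^ 2) (s p)]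
            refine integral_mono_of_nonneg
              (ae_of_all _ fun x => indicator_nonneg (fun x _ => sq_nonneg _) x)
              ((hfi.indicator measurableSet_ball).comp_sub_right _) (ae_of_all _ fun x => ?_)
            simp only [indicator]
            split_ifs with h1 h2
            · exact le_rfl
            · exfalso; apply h2
              have := norm_sub_le x (s p)
              have := hp h0
              simp only [mem_ball, dist_zero_right] at h1 ⊢
              linarith
            · exact sq_nonneg _
            · exact le_rfl
    _ = _ := by rw [integral_mul_const]; ring

lemma hasDerivAt_pos_sq (t : ℝ) : HasDerivAt (fun t : ℝ => (max t 0) ^ 2) (2 * max t 0) t := by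
  rcases lt_trichotomy t 0 with h | h | h
  · have : (fun t : ℝ => (max t 0) ^ 2) =ᶠ[𝓝 t] fun _ => 0 := by
      filter_upwards [Iio_mem_nhds h] with s hs
      rw [max_eq_right (le_of_lt hs)]; simp
    rw [max_eq_right h.le, mul_zero]
    exact (hasDerivAt_const t (0 : ℝ)).congr_of_eventuallyEq this
  · subst h
    rw [hasDerivAt_iff_isLittleO]
    simp only [max_self, mul_zero, smul_zero, sub_zero, ne_eq, OfNat.ofNat_ne_zero,
      not_false_eq_true, zero_pow]
    refine Asymptotics.IsBigO.trans_isLittleO (g := fun x : ℝ => x ^ 2) ?_ ?_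
    · refine Asymptotics.IsBigO.of_bound 1 (Eventually.of_forall fun x => ?_)
      rw [one_mul, norm_pow, norm_pow]
      refine pow_le_pow_left₀ (norm_nonneg _) ?_ 2
      rw [Real.norm_eq_abs, Real.norm_eq_abs, abs_of_nonneg (le_max_right _ _)]
      exact max_le (le_abs_self _) (abs_nonneg _)
    · simpa using (Asymptotics.isLittleO_pow_id (𝕜 := ℝ) (n := 2) (by norm_num))
  · have : (fun t : ℝ => (max t 0) ^ 2) =ᶠ[𝓝 t] fun t => t ^ 2 := by
      filter_upwards [Ioi_mem_nhds h] with s hs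
      rw [max_eq_left (le_of_lt hs)]
    rw [max_eq_left h.le]
    simpa using ((hasDerivAt_id t).fun_pow 2).congr_of_eventuallyEq this

lemma contDiff_pos_sq : ContDiff ℝ 1 (fun t : ℝ => (max t 0) ^ 2) := by
  rw [contDiff_one_iff_deriv]
  refine ⟨fun t => (hasDerivAt_pos_sq t).differentiableAt, ?_⟩
  have : deriv (fun t : ℝ => (max t 0) ^ 2) = fun t => 2 * max t 0 := by
    ext t; exact (hasDerivAt_pos_sq t).deriv
  rw [this]; fun_prop

/-- The unnormalized kernel `(1/16 - |y|²)₊`. -/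
def ker0 (y : Euc I) : ℝ := max (1 / 16 - ‖y‖ ^ 2) 0

/-- The mollification kernel: `(1/16 - |y|²)₊`, normalized to have integral one. -/
def ker (y : Euc I) : ℝ := (∫ z : Euc I, ker0 z)⁻¹ * ker0 y

/-- A potential of the kernel: its gradient is `y ↦ ker y • y`. -/
def pot (y : Euc I) : ℝ := -((∫ z : Euc I, ker0 z)⁻¹ / 4) * (max (1 / 16 - ‖y‖ ^ 2) 0) ^ 2

lemma continuous_ker0 : Continuous (ker0 (I := I)) := by unfold ker0; fun_prop

lemma continuous_ker : Continuous (ker (I := I)) := by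
  have := continuous_ker0 (I := I)
  unfold ker; fun_prop

lemma ker0_zero {y : Euc I} (hy : 1 / 4 ≤ ‖y‖) : max (1 / 16 - ‖y‖ ^ 2) 0 = 0 := by
  apply max_eq_right; nlinarith

lemma ker_zero {y : Euc I} (hy : 1 / 4 ≤ ‖y‖) : ker y = 0 := by
  rw [ker, ker0, ker0_zero hy, mul_zero]

lemma pot_zero {y : Euc I} (hy : 1 / 4 ≤ ‖y‖) : pot y = 0 := by
  rw [pot, ker0_zero hy]; simp

lemma hasCompactSupport_of_zero {F : Type*} [Zero F] {f : Euc I → F} {s : ℝ}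
    (h : ∀ x, s ≤ ‖x‖ → f x = 0) :
    HasCompactSupport f :=
  HasCompactSupport.intro (isCompact_closedBall (0 : Euc I) s) fun x hx => h x (by
    simp only [mem_closedBall, dist_zero_right, not_le] at hx; exact hx.le)

lemma hasCompactSupport_ker : HasCompactSupport (ker (I := I)) :=
  hasCompactSupport_of_zero fun _ hx => ker_zero hx

lemma hasCompactSupport_pot : HasCompactSupport (pot (I := I)) :=
  hasCompactSupport_of_zero fun _ hx => pot_zero hx

lemma integral_ker0_pos : 0 < ∫ z : Euc I, ker0 z := by
  refine Continuous.integral_pos_of_hasCompactSupport_nonneg_nonzero (x := 0) continuous_ker0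
    (hasCompactSupport_of_zero (s := 1 / 4) fun _ hx => ker0_zero hx)
    (fun x => le_max_right _ _) ?_
  simp [ker0]

lemma integral_ker : ∫ y : Euc I, ker y = 1 := by
  simp only [ker]
  rw [integral_const_mul, inv_mul_cancel₀ integral_ker0_pos.ne']

lemma contDiff_pot : ContDiff ℝ 1 (pot (I := I)) := by
  unfold pot
  refine contDiff_const.mul (contDiff_pos_sq.comp (f := fun y : Euc I => 1 / 16 - ‖y‖ ^ 2) ?_)
  exact contDiff_const.sub (contDiff_norm_sq ℝ)

lemma fderiv_pot (y : Euc I) (i : Fin I) : fderiv ℝ pot y (ee i) = ker y * y i := by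
  have h1 : HasFDerivAt (fun y : Euc I => 1 / 16 - ‖y‖ ^ 2) (-(2 • (innerSL ℝ y))) y := by
    simpa using (hasStrictFDerivAt_norm_sq y).hasFDerivAt.const_sub (1 / 16)
  have h2 := ((hasDerivAt_pos_sq (1 / 16 - ‖y‖ ^ 2)).comp_hasFDerivAt y h1).const_mul
    (-((∫ z : Euc I, ker0 z)⁻¹ / 4))
  have h3 : HasFDerivAt (pot (I := I)) _ y := h2
  rw [h3.fderiv]
  have : inner ℝ y (ee i) = y i := by simp [ee, EuclideanSpace.inner_single_right]
  simp [ker, ker0, this]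
  ring

/-- The difference between `V` and its mollification is an average of `lap V`. -/
lemma sub_mol_eq {V : Euc I → ℝ} (hV : ContDiff ℝ 2 V) (hs : HasCompactSupport V) (x : Euc I) :
    V x - mol ker V x = ∫ p : ℝ × Euc I, (p.1 * pot p.2) * lap V (x - p.1 • p.2)
      ∂((volume.restrict (Ioc (0 : ℝ) 1)).prod volume) := by
  have hV1 : ContDiff ℝ 1 V := hV.of_le (by norm_num)
  have cV := hV.continuous
  have cD := hV1.continuous_fderiv one_ne_zero
  have cH := continuous_hes hV
  have cL := continuous_lap hV
  have ck := continuous_ker (I := I)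
  have cp := (contDiff_pot (I := I)).continuous
  -- continuous integrands supported in `|y| ≤ 1/4` are integrable over the slab
  have hslab : ∀ F : ℝ × Euc I → ℝ, Continuous F → (∀ p, 1 / 4 ≤ ‖p.2‖ → F p = 0) →
      Integrable F ((volume.restrict (Ioc (0 : ℝ) 1)).prod volume) := by
    intro F hF h0
    have : (volume.restrict (Ioc (0 : ℝ) 1)).prod (volume : Measure (Euc I))
        = (volume.prod volume).restrict (Ioc (0 : ℝ) 1 ×ˢ (univ : Set (Euc I))) := by
      rw [← Measure.prod_restrict, Measure.restrict_univ]
    rw [this]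
    have hK : IsCompact (Icc (0 : ℝ) 1 ×ˢ closedBall (0 : Euc I) (1 / 4)) :=
      isCompact_Icc.prod (isCompact_closedBall _ _)
    have hi : IntegrableOn F (Icc (0 : ℝ) 1 ×ˢ closedBall (0 : Euc I) (1 / 4))
        (volume.prod volume) := hF.continuousOn.integrableOn_compact hK
    refine hi.of_forall_sdiff_eq_zero (measurableSet_Ioc.prod MeasurableSet.univ) ?_
    rintro ⟨σ, y⟩ ⟨h1, h2⟩
    apply h0
    by_contra hcon
    apply h2
    simp only [mem_prod, Set.mem_Icc, Set.mem_Ioc, mem_closedBall, dist_zero_right] at h1 ⊢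
    exact ⟨⟨h1.1.1.le, h1.1.2⟩, (not_le.1 hcon).le⟩
  have hftc : ∀ y : Euc I, V x - V (x - y) = ∫ σ in Ioc (0 : ℝ) 1, fderiv ℝ V (x - σ • y) y := by
    intro y
    have hd : ∀ σ ∈ uIcc (0 : ℝ) 1, HasDerivAt (fun σ : ℝ => V (x - σ • y))
        (-(fderiv ℝ V (x - σ • y) y)) σ := by
      intro σ _
      have h1 : HasDerivAt (fun σ : ℝ => x - σ • y) (-y) σ := by
        simpa using ((hasDerivAt_id σ).smul_const y).const_sub x
      have h2 : HasFDerivAt V (fderiv ℝ V (x - σ • y)) (x - σ • y) :=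
        (hV1.differentiable one_ne_zero _).hasFDerivAt
      have h3 : HasDerivAt (fun σ : ℝ => V (x - σ • y)) _ σ := h2.comp_hasDerivAt σ h1
      rwa [map_neg] at h3
    have h3 := intervalIntegral.integral_eq_sub_of_hasDerivAt hd
      (Continuous.intervalIntegrable (by fun_prop) _ _)
    rw [intervalIntegral.integral_neg, intervalIntegral.integral_of_le zero_le_one] at h3
    simp only [one_smul, zero_smul, sub_zero] at h3
    linarith
  have e1 : V x - mol ker V x = ∫ y, ∫ σ in Ioc (0 : ℝ) 1, ker y * fderiv ℝ V (x - σ • y) y := by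
    have i1 : Integrable (fun y : Euc I => ker y * V x) :=
      (continuous_ker.integrable_of_hasCompactSupport hasCompactSupport_ker).mul_const _
    have i2 : Integrable (fun y : Euc I => ker y * V (x - y)) :=
      Continuous.integrable_of_hasCompactSupport (by fun_prop) hasCompactSupport_ker.mul_right
    have : V x = ∫ y : Euc I, ker y * V x := by rw [integral_mul_const, integral_ker, one_mul]
    rw [mol, this]
    simp only [smul_eq_mul]
    rw [← integral_sub i1 i2]
    congr 1; ext y
    rw [integral_const_mul, ← hftc]; ring
  have hin : ∀ σ : ℝ, ∫ y, ker y * fderiv ℝ V (x - σ • y) y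
      = ∫ y, (σ * pot y) * lap V (x - σ • y) := by
    intro σ
    have hi : ∀ i : Fin I, ∫ y, (ker y * y i) * fderiv ℝ V (x - σ • y) (ee i)
        = ∫ y, (σ * pot y) * hes V (x - σ • y) (ee i) (ee i) := by
      intro i
      have hg1 : ContDiff ℝ 1 (fun z => fderiv ℝ V z (ee i)) :=
        contDiff_fderiv_apply (n := 1) (by norm_num; exact hV) _
      have hg : ContDiff ℝ 1 (fun y => fderiv ℝ V (x - σ • y) (ee i)) :=
        hg1.comp (contDiff_const.sub (contDiff_id.const_smul σ))
      have h := ibp contDiff_pot hg hasCompactSupport_pot (ee i)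
      have hder : ∀ y, fderiv ℝ (fun y => fderiv ℝ V (x - σ • y) (ee i)) y (ee i)
          = -(σ * hes V (x - σ • y) (ee i) (ee i)) := by
        intro y
        have h1 : HasFDerivAt (fun y : Euc I => x - σ • y)
            (-(σ • ContinuousLinearMap.id ℝ (Euc I))) y := by
          simpa using ((hasFDerivAt_id (𝕜 := ℝ) y).const_smul σ).const_sub x
        have h2 := ((hg1.differentiable one_ne_zero (x - σ • y)).hasFDerivAt).comp y h1
        have h3 : HasFDerivAt (fun y => fderiv ℝ V (x - σ • y) (ee i)) _ y := h2
        rw [h3.fderiv, hes_apply hV.contDiffAt]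
        simp
      simp_rw [hder, fderiv_pot] at h
      rw [← neg_eq_iff_eq_neg.2 h, ← integral_neg]
      congr 1; ext y; ring
    have hcs : ∀ u : Euc I → ℝ, Continuous u → Integrable (fun y : Euc I => (ker y * u y)) :=
      fun u hu => Continuous.integrable_of_hasCompactSupport (by fun_prop)
        hasCompactSupport_ker.mul_right
    have hcs' : ∀ u : Euc I → ℝ, Continuous u → Integrable (fun y : Euc I => (pot y * u y)) :=
      fun u hu => Continuous.integrable_of_hasCompactSupport (by fun_prop)
        hasCompactSupport_pot.mul_right
    have e2 : ∀ y : Euc I, ker y * fderiv ℝ V (x - σ • y) y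
        = ∑ i, (ker y * y i) * fderiv ℝ V (x - σ • y) (ee i) := by
      intro y
      conv_lhs => rw [show fderiv ℝ V (x - σ • y) y = ∑ i, y i * fderiv ℝ V (x - σ • y) (ee i) by
        conv_lhs => rw [sum_ee y]
        rw [map_sum]
        simp only [map_smul, smul_eq_mul]
        rw [← sum_ee y]]
      rw [Finset.mul_sum]
      exact Finset.sum_congr rfl fun i _ => by ring
    simp_rw [e2, lap, tr, Finset.mul_sum]
    rw [integral_finsetSum, integral_finsetSum]
    · exact Finset.sum_congr rfl fun i _ => hi i
    · intro i _
      refine (hcs' (fun y => σ * hes V (x - σ • y) (ee i) (ee i)) (by fun_prop)).congr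
        (ae_of_all _ fun y => ?_)
      simp only; ring
    · intro i _
      refine (hcs (fun y => y i * fderiv ℝ V (x - σ • y) (ee i)) (by fun_prop)).congr
        (ae_of_all _ fun y => ?_)
      simp only; ring
  have hp1 : Integrable (Function.uncurry fun (σ : ℝ) (y : Euc I) =>
      ker y * fderiv ℝ V (x - σ • y) y) ((volume.restrict (Ioc (0 : ℝ) 1)).prod volume) := by
    refine hslab _ ?_ ?_
    · show Continuous (fun p : ℝ × Euc I => ker p.2 * fderiv ℝ V (x - p.1 • p.2) p.2)
      fun_prop
    · rintro ⟨σ, y⟩ h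
      show ker y * _ = 0
      rw [ker_zero h, zero_mul]
  rw [e1, ← integral_integral_swap hp1]
  simp_rw [hin]
  rw [integral_prod]
  refine hslab _ (by fun_prop) ?_
  rintro ⟨σ, y⟩ h
  show (σ * pot y) * _ = 0
  rw [pot_zero h]; simp

/-! ### Decay of the oscillation of the second derivative -/

lemma setIntegral_mono_ball {G : Euc I → ℝ} (hG : Continuous G) (h0 : ∀ x, 0 ≤ G x)
    {x : Euc I} {r s : ℝ} (hrs : r ≤ s) : ∫ y in ball x r, G y ≤ ∫ y in ball x s, G y :=
  setIntegral_mono_set (integrableOn_ball hG _ _) (ae_of_all _ h0)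
    (ball_subset_ball hrs).eventuallyLE

/-- The mollification of a compactly supported function, both the function and its Laplacian,
is `L²`-close to it, with an error controlled by the Laplacian. -/
lemma sub_mol_sq_le (I : ℕ) : ∃ C : ℝ, 0 < C ∧ ∀ V : Euc I → ℝ, ContDiff ℝ 2 V →
    HasCompactSupport V →
    ∫ x in ball (0 : Euc I) (3 / 4), ((V x - mol ker V x) ^ 2 + (lap V x - mol ker (lap V) x) ^ 2)
      ≤ C * ∫ x in ball (0 : Euc I) 1, lap V x ^ 2 := by
  set ν := (volume.restrict (Ioc (0 : ℝ) 1)).prod (volume : Measure (Euc I)) with hν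
  set w : ℝ × Euc I → ℝ := fun p => p.1 * pot p.2 with hw
  have cp := (contDiff_pot (I := I)).continuous
  have hwi : Integrable w ν := by
    refine Integrable.mul_prod (f := fun t : ℝ => t) ?_
      (cp.integrable_of_hasCompactSupport hasCompactSupport_pot)
    exact (continuous_id.integrableOn_Icc (a := (0 : ℝ)) (b := 1)).mono_set Ioc_subset_Icc_self
  have hsup : ∀ᵐ p ∂ν, w p ≠ 0 → ‖p.1 • p.2‖ ≤ 1 / 4 := by
    have : ν = (volume.prod volume).restrict (Ioc (0 : ℝ) 1 ×ˢ (univ : Set (Euc I))) := by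
      rw [hν, ← Measure.prod_restrict, Measure.restrict_univ]
    rw [this]
    refine ae_restrict_of_forall_mem (measurableSet_Ioc.prod MeasurableSet.univ) ?_
    rintro ⟨σ, y⟩ ⟨h1, _⟩ h2
    have hy : ‖y‖ ≤ 1 / 4 := by
      by_contra hcon
      exact h2 (by simp [w, pot_zero (not_le.1 hcon).le])
    rw [norm_smul, Real.norm_of_nonneg h1.1.le]
    have h12 : σ ≤ 1 := h1.2
    nlinarith [norm_nonneg y, h1.1]
  have hki : Integrable (ker (I := I)) :=
    continuous_ker.integrable_of_hasCompactSupport hasCompactSupport_ker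
  have hksup : ∀ᵐ t : Euc I, ker t ≠ 0 → ‖t‖ ≤ 1 / 4 := ae_of_all _ fun t ht => by
    by_contra hcon
    exact ht (ker_zero (not_le.1 hcon).le)
  refine ⟨(∫ p, |w p| ∂ν) ^ 2 + (2 + 2 * (∫ t : Euc I, |ker t|) ^ 2), by positivity,
    fun V hV hs => ?_⟩
  have cV := hV.continuous
  have cL := continuous_lap hV
  have sL := hasCompactSupport_lap hs
  have cm : Continuous (mol ker V) :=
    (contDiff_mol (n := 0) continuous_ker (contDiff_zero.2 cV) hs).continuous
  have cmL : Continuous (mol ker (lap V)) :=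
    (contDiff_mol (n := 0) continuous_ker (contDiff_zero.2 cL) sL).continuous
  have a1 : ∫ x in ball (0 : Euc I) (3 / 4), (V x - mol ker V x) ^ 2
      ≤ (∫ p, |w p| ∂ν) ^ 2 * ∫ x in ball (0 : Euc I) 1, lap V x ^ 2 := by
    simp_rw [sub_mol_eq hV hs]
    exact young_local hwi (s := fun p : ℝ × Euc I => p.1 • p.2) (by fun_prop) hsup cL sL
  have a2 : ∫ x in ball (0 : Euc I) (3 / 4), (mol ker (lap V) x) ^ 2
      ≤ (∫ t : Euc I, |ker t|) ^ 2 * ∫ x in ball (0 : Euc I) 1, lap V x ^ 2 :=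
    young_local hki (s := fun t : Euc I => t) (by fun_prop) hksup cL sL
  have a3 : ∫ x in ball (0 : Euc I) (3 / 4), lap V x ^ 2
      ≤ ∫ x in ball (0 : Euc I) 1, lap V x ^ 2 :=
    setIntegral_mono_ball (by fun_prop) (fun x => sq_nonneg _) (by norm_num)
  have a4 : ∫ x in ball (0 : Euc I) (3 / 4), (lap V x - mol ker (lap V) x) ^ 2
      ≤ ∫ x in ball (0 : Euc I) (3 / 4), (2 * lap V x ^ 2 + 2 * (mol ker (lap V) x) ^ 2) := by
    refine integral_mono (integrableOn_ball (by fun_prop) _ _)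
      (integrableOn_ball (by fun_prop) _ _) fun x => ?_
    nlinarith [sq_nonneg (lap V x + mol ker (lap V) x)]
  rw [integral_add (integrableOn_ball (by fun_prop) _ _) (integrableOn_ball (by fun_prop) _ _),
    integral_const_mul, integral_const_mul] at a4
  rw [integral_add (integrableOn_ball (by fun_prop) _ _) (integrableOn_ball (by fun_prop) _ _)]
  nlinarith

lemma mol_hes_symm {V : Euc I → ℝ} (hV : ContDiff ℝ 2 V) (hs : HasCompactSupport V)
    (x v w : Euc I) : mol ker (hes V) x v w = mol ker (hes V) x w v := by
  rw [mol_entry continuous_ker hV hs, mol_entry continuous_ker hV hs]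
  simp_rw [fun y => hes_symm (hV.contDiffAt (x := y)) v w]

lemma abs_ker_sub_le {x s : Euc I} (hx : ‖x‖ ≤ 1) (hs : ‖s‖ ≤ 1) :
    |ker (x - s) - ker (0 - s)| ≤ (∫ z : Euc I, ker0 z)⁻¹ * (3 * ‖x‖) := by
  have hp := inv_nonneg.2 (integral_ker0_pos (I := I)).le
  rw [ker, ker, ← mul_sub, abs_mul, abs_of_nonneg hp]
  refine mul_le_mul_of_nonneg_left ?_ hp
  refine (abs_max_sub_max_le_abs _ _ _).trans ?_
  have h1 : |‖x - s‖ - ‖0 - s‖| ≤ ‖x‖ := by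
    simpa using abs_norm_sub_norm_le (x - s) (0 - s)
  have h2 : ‖x - s‖ + ‖0 - s‖ ≤ 3 := by
    have := norm_sub_le x s
    have : ‖0 - s‖ = ‖s‖ := by simp
    linarith
  have e : 1 / 16 - ‖x - s‖ ^ 2 - (1 / 16 - ‖0 - s‖ ^ 2)
      = -((‖x - s‖ - ‖0 - s‖) * (‖x - s‖ + ‖0 - s‖)) := by ring
  rw [e, abs_neg, abs_mul, abs_of_nonneg (by positivity : 0 ≤ ‖x - s‖ + ‖0 - s‖)]
  nlinarith [norm_nonneg x, abs_nonneg (‖x - s‖ - ‖0 - s‖)]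

lemma ker_le (y : Euc I) : |ker y| ≤ (∫ z : Euc I, ker0 z)⁻¹ := by
  have hp := inv_nonneg.2 (integral_ker0_pos (I := I)).le
  rw [ker, abs_mul, abs_of_nonneg hp]
  have : |ker0 y| ≤ 1 := by
    rw [ker0, abs_of_nonneg (le_max_right _ _)]
    exact max_le (by nlinarith [sq_nonneg ‖y‖]) zero_le_one
  exact mul_le_of_le_one_right hp this

lemma sq_setIntegral_le {G : Euc I → ℝ} (hG : Continuous G) (r : ℝ) :
    (∫ x in ball (0 : Euc I) r, G x) ^ 2 ≤
      volume.real (ball (0 : Euc I) r) * ∫ x in ball (0 : Euc I) r, G x ^ 2 := by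
  have h1 : IntegrableOn (fun _ : Euc I => (1 : ℝ)) (ball 0 r) :=
    integrableOn_ball continuous_const _ _
  have := weighted_cs (w := fun _ => (1 : ℝ)) (g := G) h1
    (by simp only [one_mul]; exact integrableOn_ball (by fun_prop) _ _)
    (by simp only [abs_one, one_mul]; exact integrableOn_ball (by fun_prop) _ _)
  simpa using this

lemma mol_eq' {F : Type*} [NormedAddCommGroup F] [NormedSpace ℝ F] (η : Euc I → ℝ)
    (g : Euc I → F) (x : Euc I) : mol η g x = ∫ s, η (x - s) • g s := by
  rw [mol, ← integral_sub_left_eq_self _ _ x]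
  simp

/-- The mollification at `0` is controlled by the `L¹` norm of `g` on the unit ball. -/
lemma norm_mol_ker_zero_le {F : Type*} [NormedAddCommGroup F] [NormedSpace ℝ F] {g : Euc I → F}
    (hg : Continuous g) :
    ‖mol ker g 0‖ ≤ (∫ z : Euc I, ker0 z)⁻¹ * ∫ x in ball (0 : Euc I) 1, ‖g x‖ := by
  rw [mol_eq', ← integral_const_mul, ← integral_indicator measurableSet_ball]
  refine norm_integral_le_of_norm_le ?_ (ae_of_all _ fun s => ?_)
  · exact (integrable_indicator_iff measurableSet_ball).2
      ((integrableOn_ball hg.norm _ _).const_mul _)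
  · by_cases hs1 : s ∈ ball (0 : Euc I) 1
    · rw [indicator_of_mem hs1, norm_smul]
      exact mul_le_mul_of_nonneg_right (ker_le _) (norm_nonneg _)
    · rw [indicator_of_notMem hs1, ker_zero (by
        simp only [mem_ball, dist_zero_right, not_lt] at hs1
        simp only [zero_sub, norm_neg]; linarith)]
      simp

/-- The mollification is Lipschitz at `0`, with the same control of the constant. -/
lemma norm_mol_ker_sub_le {F : Type*} [NormedAddCommGroup F] [NormedSpace ℝ F] {g : Euc I → F}
    (hg : Continuous g) (hs : HasCompactSupport g) {x : Euc I} (hx : ‖x‖ ≤ 1 / 2) :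
    ‖mol ker g x - mol ker g 0‖ ≤
      (∫ z : Euc I, ker0 z)⁻¹ * (3 * ‖x‖) * ∫ x in ball (0 : Euc I) 1, ‖g x‖ := by
  have hi : ∀ x, Integrable fun s => ker (x - s) • g s := fun x => by
    have ck := continuous_ker (I := I)
    exact Continuous.integrable_of_hasCompactSupport (by fun_prop) hs.smul_left
  rw [mol_eq', mol_eq', ← integral_sub (hi _) (hi _), ← integral_const_mul,
    ← integral_indicator measurableSet_ball]
  refine norm_integral_le_of_norm_le ?_ (ae_of_all _ fun s => ?_)
  · exact (integrable_indicator_iff measurableSet_ball).2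
      ((integrableOn_ball hg.norm _ _).const_mul _)
  · by_cases hs1 : s ∈ ball (0 : Euc I) 1
    · rw [indicator_of_mem hs1, ← sub_smul, norm_smul]
      refine mul_le_mul_of_nonneg_right ?_ (norm_nonneg _)
      exact abs_ker_sub_le (by linarith) (by simpa using (mem_ball.1 hs1).le)
    · simp only [mem_ball, dist_zero_right, not_lt] at hs1
      rw [indicator_of_notMem (by simpa using hs1), ker_zero, ker_zero]
      · simp
      · simp only [zero_sub, norm_neg]; linarith
      · have := norm_sub_norm_le s x
        rw [norm_sub_rev] at this
        linarith

lemma hes_sub {v w : Euc I → ℝ} (hv : ContDiff ℝ 2 v) (hw : ContDiff ℝ 2 w) (x : Euc I) :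
    hes (fun y => v y - w y) x = hes v x - hes w x := by
  have e1 : fderiv ℝ (fun y => v y - w y) = fun y => fderiv ℝ v y - fderiv ℝ w y := by
    ext1 y
    exact fderiv_fun_sub (hv.differentiable (by norm_num) y) (hw.differentiable (by norm_num) y)
  rw [hes, e1, fderiv_fun_sub ((contDiff_one_fderiv hv).differentiable one_ne_zero x)
    ((contDiff_one_fderiv hw).differentiable one_ne_zero x)]
  rfl

/-- Decay of the oscillation of the second derivative over small balls, up to the Laplacian.
The comparison form is the mollified second derivative at the centre. -/
lemma hes_decay (I : ℕ) : ∃ C : ℝ, 0 < C ∧ ∀ V : Euc I → ℝ, ContDiff ℝ 2 V →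
    HasCompactSupport V → ∃ M' : Euc I →L[ℝ] Euc I →L[ℝ] ℝ,
    (∀ v w, M' v w = M' w v) ∧ ‖M'‖ ^ 2 ≤ C * ∫ x in ball (0 : Euc I) 1, ‖hes V x‖ ^ 2 ∧
    ∀ θ : ℝ, 0 < θ → θ ≤ 1 / 2 → ∫ x in ball (0 : Euc I) θ, ‖hes V x - M'‖ ^ 2 ≤
      C * (θ ^ (I + 2) * ∫ x in ball (0 : Euc I) 1, ‖hes V x‖ ^ 2) +
      C * ∫ x in ball (0 : Euc I) 1, lap V x ^ 2 := by
  obtain ⟨C1, hC1, h1⟩ := cacc I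
  obtain ⟨C2, hC2, h2⟩ := sub_mol_sq_le I
  set k := (∫ z : Euc I, ker0 z)⁻¹ with hk
  have hk0 : 0 < k := inv_pos.2 integral_ker0_pos
  set b := volume.real (ball (0 : Euc I) 1) with hb
  have hb0 : 0 ≤ b := measureReal_nonneg
  refine ⟨k ^ 2 * b + 18 * k ^ 2 * b * b + 2 * (C1 * C2), by positivity, fun V hV hs => ?_⟩
  have cV := hV.continuous
  have cQ := continuous_hes hV
  have cL := continuous_lap hV
  set a := ∫ x in ball (0 : Euc I) 1, ‖hes V x‖ ^ 2 with ha
  have ha0 : 0 ≤ a := integral_nonneg fun x => by positivity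
  set l := ∫ x in ball (0 : Euc I) 1, lap V x ^ 2 with hl
  have hl0 : 0 ≤ l := integral_nonneg fun x => by positivity
  set N := ∫ x in ball (0 : Euc I) 1, ‖hes V x‖ with hN
  have hN0 : 0 ≤ N := integral_nonneg fun x => by positivity
  have hN2 : N ^ 2 ≤ b * a := sq_setIntegral_le cQ.norm 1
  have hM : ‖mol ker (hes V) 0‖ ≤ k * N := norm_mol_ker_zero_le cQ
  have hosc : ∀ x : Euc I, ‖x‖ ≤ 1 / 2 →
      ‖mol ker (hes V) x - mol ker (hes V) 0‖ ≤ k * (3 * ‖x‖) * N :=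
    fun x hx => norm_mol_ker_sub_le cQ (hasCompactSupport_hes hs) hx
  refine ⟨mol ker (hes V) 0, mol_hes_symm hV hs 0, ?_, ?_⟩
  · calc ‖mol ker (hes V) 0‖ ^ 2 ≤ (k * N) ^ 2 := pow_le_pow_left₀ (norm_nonneg _) hM 2
      _ = k ^ 2 * N ^ 2 := by ring
      _ ≤ k ^ 2 * (b * a) := by gcongr
      _ = (k ^ 2 * b) * a := by ring
      _ ≤ _ := mul_le_mul_of_nonneg_right (by
        have : 0 ≤ 18 * k ^ 2 * b * b + 2 * (C1 * C2) := by positivity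
        linarith) ha0
  intro θ hθ hθ2
  -- Split `V` into `W` and its mollification: `W` is controlled by the Caccioppoli inequality and
  -- the small Laplacian, while the second derivative of the mollification is Lipschitz.
  set W : Euc I → ℝ := fun x => V x - mol ker V x with hW
  have hm2 : ContDiff ℝ 2 (mol ker V) := contDiff_mol (n := 2) continuous_ker hV hs
  have hW2 : ContDiff ℝ 2 W := hV.sub hm2
  have hhW : ∀ x, hes W x = hes V x - mol ker (hes V) x := by
    intro x
    rw [← hes_mol continuous_ker hV hs]
    exact hes_sub hV hm2 x
  have hlW : ∀ x, lap W x = lap V x - mol ker (lap V) x := by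
    intro x
    rw [lap, hhW, tr_sub, ← lap_mol continuous_ker hV hs, ← hes_mol continuous_ker hV hs]
    rfl
  have cW := continuous_hes hW2
  have w1 : ∫ x in ball (0 : Euc I) θ, ‖hes W x‖ ^ 2 ≤ C1 * (C2 * l) := by
    calc _ ≤ ∫ x in ball (0 : Euc I) (1 / 2), ‖hes W x‖ ^ 2 :=
          setIntegral_mono_ball (by fun_prop) (fun x => by positivity) hθ2
      _ ≤ _ := (h1 W hW2).trans (mul_le_mul_of_nonneg_left (by
          simp_rw [hlW]; exact h2 V hV hs) hC1.le)
  have hvol : volume.real (ball (0 : Euc I) θ) = θ ^ I * b := by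
    rw [hb, measureReal_def, measureReal_def, Measure.addHaar_ball_of_pos _ _ hθ, ENNReal.toReal_mul,
      ENNReal.toReal_ofReal (by positivity), finrank_euclideanSpace_fin]
  have w2 : ∫ x in ball (0 : Euc I) θ, ‖mol ker (hes V) x - mol ker (hes V) 0‖ ^ 2
      ≤ (9 * k ^ 2 * b * b) * (θ ^ (I + 2) * a) := by
    calc _ ≤ ∫ x in ball (0 : Euc I) θ, 9 * k ^ 2 * θ ^ 2 * N ^ 2 := by
          refine integral_mono_of_nonneg (ae_of_all _ fun x => by positivity)
            (integrableOn_ball continuous_const _ _)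
            (ae_restrict_of_forall_mem measurableSet_ball fun x hx => ?_)
          have hx' : ‖x‖ < θ := by simpa using hx
          calc _ ≤ (k * (3 * ‖x‖) * N) ^ 2 :=
                pow_le_pow_left₀ (norm_nonneg _) (hosc x (by linarith)) 2
            _ ≤ (k * (3 * θ) * N) ^ 2 := by gcongr
            _ = _ := by ring
      _ = θ ^ I * b * (9 * k ^ 2 * θ ^ 2 * N ^ 2) := by
          rw [setIntegral_const, hvol, smul_eq_mul]
      _ ≤ θ ^ I * b * (9 * k ^ 2 * θ ^ 2 * (b * a)) := by gcongr
      _ = _ := by ring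
  have cm : Continuous (mol ker (hes V)) := by
    rw [← hes_mol continuous_ker hV hs]; exact continuous_hes hm2
  calc ∫ x in ball (0 : Euc I) θ, ‖hes V x - mol ker (hes V) 0‖ ^ 2
      ≤ ∫ x in ball (0 : Euc I) θ, (2 * ‖hes W x‖ ^ 2
        + 2 * ‖mol ker (hes V) x - mol ker (hes V) 0‖ ^ 2) := by
        refine integral_mono (integrableOn_ball (by fun_prop) _ _)
          (integrableOn_ball (by fun_prop) _ _) fun x => ?_
        have : ‖hes V x - mol ker (hes V) 0‖
            ≤ ‖hes W x‖ + ‖mol ker (hes V) x - mol ker (hes V) 0‖ := by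
          rw [hhW]; exact norm_sub_le_norm_sub_add_norm_sub _ _ _
        show ‖hes V x - mol ker (hes V) 0‖ ^ 2 ≤ 2 * ‖hes W x‖ ^ 2
        + 2 * ‖mol ker (hes V) x - mol ker (hes V) 0‖ ^ 2
        nlinarith [norm_nonneg (hes V x - mol ker (hes V) 0), norm_nonneg (hes W x),
          sq_nonneg (‖hes W x‖ - ‖mol ker (hes V) x - mol ker (hes V) 0‖),
          norm_nonneg (mol ker (hes V) x - mol ker (hes V) 0)]
    _ = 2 * (∫ x in ball (0 : Euc I) θ, ‖hes W x‖ ^ 2)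
        + 2 * ∫ x in ball (0 : Euc I) θ, ‖mol ker (hes V) x - mol ker (hes V) 0‖ ^ 2 := by
        rw [integral_add (integrableOn_ball (by fun_prop) _ _)
          (integrableOn_ball (by fun_prop) _ _), integral_const_mul, integral_const_mul]
    _ ≤ 2 * (C1 * (C2 * l)) + 2 * ((9 * k ^ 2 * b * b) * (θ ^ (I + 2) * a)) := by gcongr
    _ ≤ _ := by
        have p1 : 0 ≤ θ ^ (I + 2) * a := by positivity
        have p2 : 0 ≤ (k ^ 2 * b + 2 * (C1 * C2)) * (θ ^ (I + 2) * a) := by positivity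
        have p3 : 0 ≤ (k ^ 2 * b + 18 * k ^ 2 * b * b) * l := by positivity
        nlinarith

/-! ### The Campanato iteration -/

lemma fderiv_comp_affine {v : Euc I → ℝ} (hv : Differentiable ℝ v) (x0 : Euc I)
    (A : Euc I →L[ℝ] Euc I) (z : Euc I) :
    fderiv ℝ (fun z => v (x0 + A z)) z = (fderiv ℝ v (x0 + A z)).comp A := by
  have h1 : HasFDerivAt (fun z => x0 + A z) A z := A.hasFDerivAt.const_add x0
  have h2 : HasFDerivAt (fun z => v (x0 + A z)) ((fderiv ℝ v (x0 + A z)).comp A) z :=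
    (hv (x0 + A z)).hasFDerivAt.comp z h1
  exact h2.fderiv

lemma contDiff_comp_affine {v : Euc I → ℝ} (hv : ContDiff ℝ 2 v) (x0 : Euc I)
    (A : Euc I →L[ℝ] Euc I) : ContDiff ℝ 2 (fun z => v (x0 + A z)) :=
  hv.comp (contDiff_const.add A.contDiff)

lemma hes_comp_affine {v : Euc I → ℝ} (hv : ContDiff ℝ 2 v) (x0 : Euc I)
    (A : Euc I →L[ℝ] Euc I) (z u w : Euc I) :
    hes (fun z => v (x0 + A z)) z u w = hes v (x0 + A z) (A u) (A w) := by
  rw [hes_apply (contDiff_comp_affine hv x0 A).contDiffAt, hes_apply hv.contDiffAt]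
  have e : (fun y => fderiv ℝ (fun z => v (x0 + A z)) y w)
      = fun y => (fun y => fderiv ℝ v y (A w)) (x0 + A y) := by
    ext1 y
    rw [fderiv_comp_affine (hv.differentiable (by norm_num))]
    rfl
  have hd : Differentiable ℝ (fun y => fderiv ℝ v y (A w)) :=
    (contDiff_fderiv_apply (n := 1) (by norm_num; exact hv) (A w)).differentiable (by norm_num)
  rw [e, fderiv_comp_affine hd]
  rfl

lemma contDiff_scale {v : Euc I → ℝ} (hv : ContDiff ℝ 2 v) (x0 : Euc I) (s : ℝ) :
    ContDiff ℝ 2 (fun z => v (x0 + s • z)) := by fun_prop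

lemma hes_scale {v : Euc I → ℝ} (hv : ContDiff ℝ 2 v) (x0 : Euc I) (s : ℝ) (z : Euc I) :
    hes (fun z => v (x0 + s • z)) z = s ^ 2 • hes v (x0 + s • z) := by
  ext u w
  have := hes_comp_affine hv x0 (s • ContinuousLinearMap.id ℝ (Euc I)) z u w
  simp only [_root_.smul_apply, ContinuousLinearMap.id_apply, map_smul] at this ⊢
  rw [this]
  simp only [smul_eq_mul]; ring

lemma lap_scale {v : Euc I → ℝ} (hv : ContDiff ℝ 2 v) (x0 : Euc I) (s : ℝ) (z : Euc I) :
    lap (fun z => v (x0 + s • z)) z = s ^ 2 * lap v (x0 + s • z) := by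
  rw [lap, hes_scale hv, lap, tr, tr, Finset.mul_sum]
  rfl

lemma setIntegral_scale (f : Euc I → ℝ) {s : ℝ} (hs : 0 < s) (r : ℝ) :
    ∫ x in ball (0 : Euc I) r, f (s • x) = (s ^ I)⁻¹ * ∫ x in ball (0 : Euc I) (s * r), f x := by
  rw [Measure.setIntegral_comp_smul_of_pos volume f _ hs, finrank_euclideanSpace_fin,
    _root_.smul_ball hs.ne', smul_zero, Real.norm_of_nonneg hs.le, smul_eq_mul]

lemma volume_ball_pos : 0 < volume.real (ball (0 : Euc I) 1) := by
  rw [measureReal_def]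
  exact ENNReal.toReal_pos (measure_ball_pos _ _ one_pos).ne' measure_ball_lt_top.ne

lemma setIntegral_const_ball (c : ℝ) :
    ∫ _ in ball (0 : Euc I) 1, c = volume.real (ball (0 : Euc I) 1) * c := by
  rw [setIntegral_const, smul_eq_mul]

lemma fderiv_quad (M : Euc I →L[ℝ] Euc I →L[ℝ] ℝ) (hM : ∀ v w, M v w = M w v) (y : Euc I) :
    fderiv ℝ (fun z => 1 / 2 * M z z) y = M y := by
  have h1 : HasFDerivAt (fun z => M z z) (M.precompR (Euc I) y (ContinuousLinearMap.id ℝ _)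
      + M.precompL (Euc I) (ContinuousLinearMap.id ℝ _) y) y :=
    M.hasFDerivAt_of_bilinear (hasFDerivAt_id y) (hasFDerivAt_id y)
  have h2 : HasFDerivAt (fun z => 1 / 2 * M z z) _ y := h1.const_mul (1 / 2)
  rw [h2.fderiv]
  ext w
  simp [hM w y]
  ring

lemma contDiff_quad (M : Euc I →L[ℝ] Euc I →L[ℝ] ℝ) :
    ContDiff ℝ 2 (fun z => 1 / 2 * M z z) := by fun_prop

lemma hes_quad (M : Euc I →L[ℝ] Euc I →L[ℝ] ℝ) (hM : ∀ v w, M v w = M w v) (y : Euc I) :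
    hes (fun z => 1 / 2 * M z z) y = M := by
  rw [hes]
  have : fderiv ℝ (fun z => 1 / 2 * M z z) = M := by ext1 y; exact fderiv_quad M hM y
  rw [this]
  exact M.fderiv

lemma norm_sub_sq_le {F : Type*} [NormedAddCommGroup F] (a b c : F) :
    ‖a - c‖ ^ 2 ≤ 2 * ‖a - b‖ ^ 2 + 2 * ‖b - c‖ ^ 2 := by
  have := norm_sub_le_norm_sub_add_norm_sub a b c
  nlinarith [norm_nonneg (a - c), norm_nonneg (a - b), norm_nonneg (b - c),
    sq_nonneg (‖a - b‖ - ‖b - c‖)]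

lemma integral_norm_sub_sq_le {F : Type*} [NormedAddCommGroup F] {f g h : Euc I → F}
    (hf : Continuous f) (hg : Continuous g) (hh : Continuous h) (r : ℝ) :
    ∫ x in ball (0 : Euc I) r, ‖f x - h x‖ ^ 2 ≤ 2 * (∫ x in ball (0 : Euc I) r, ‖f x - g x‖ ^ 2)
      + 2 * ∫ x in ball (0 : Euc I) r, ‖g x - h x‖ ^ 2 := by
  rw [← integral_const_mul, ← integral_const_mul, ← integral_add
    (integrableOn_ball (by fun_prop) _ _) (integrableOn_ball (by fun_prop) _ _)]
  exact integral_mono (integrableOn_ball (by fun_prop) _ _)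
    (integrableOn_ball (by fun_prop) _ _) fun x => norm_sub_sq_le _ _ _

/-- One step of the Campanato iteration: a symmetric approximation `M` of the second derivative
on the unit ball is improved to a better one `M'` on small balls.  Here `c` is a constant
approximation of the Laplacian. -/
lemma one_step (hI : 0 < I) : ∃ C : ℝ, 0 < C ∧ ∀ v : Euc I → ℝ, ContDiff ℝ 2 v →
    ∀ M : Euc I →L[ℝ] Euc I →L[ℝ] ℝ, (∀ v w, M v w = M w v) → ∀ c : ℝ,
    ∃ M' : Euc I →L[ℝ] Euc I →L[ℝ] ℝ, (∀ v w, M' v w = M' w v) ∧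
    ‖M' - M‖ ^ 2 ≤ C * ((∫ x in ball (0 : Euc I) 1, ‖hes v x - M‖ ^ 2)
      + ∫ x in ball (0 : Euc I) 1, (lap v x - c) ^ 2) ∧
    ∀ θ : ℝ, 0 < θ → θ ≤ 1 / 2 → ∫ x in ball (0 : Euc I) 1, ‖hes v (θ • x) - M'‖ ^ 2 ≤
      C * (θ ^ 2 * ((∫ x in ball (0 : Euc I) 1, ‖hes v x - M‖ ^ 2)
        + ∫ x in ball (0 : Euc I) 1, (lap v x - c) ^ 2)
        + (θ ^ I)⁻¹ * ∫ x in ball (0 : Euc I) 1, (lap v x - c) ^ 2) := by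
  obtain ⟨C1, hC1, h1⟩ := hes_decay I
  set b1 := volume.real (ball (0 : Euc I) 1) with hb1
  have hb : 0 < b1 := volume_ball_pos
  set D : ℝ := 2 + 2 * (2 + 2 * (I : ℝ) ^ 2) with hD
  set E : ℝ := (2 + 2 * (I : ℝ) ^ 2) / b1 with hE
  have hD0 : 0 < D := by positivity
  have hE0 : 0 < E := by positivity
  refine ⟨C1 * D + C1 + 2 * C1 * D + 2 * E, by positivity, fun v hv M hM c => ?_⟩
  have cQ := continuous_hes hv
  have cL := continuous_lap hv
  set a := ∫ x in ball (0 : Euc I) 1, ‖hes v x - M‖ ^ 2 with ha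
  set b := ∫ x in ball (0 : Euc I) 1, (lap v x - c) ^ 2 with hbb
  have ha0 : 0 ≤ a := integral_nonneg fun x => by positivity
  have hb0 : 0 ≤ b := integral_nonneg fun x => by positivity
  -- the trace of `M` is close to `c`
  have hI' : (0 : ℝ) < I := by exact_mod_cast hI
  have htr : b1 * (c - tr M) ^ 2 ≤ (2 + 2 * (I : ℝ) ^ 2) * (a + b) := by
    have : b1 * (c - tr M) ^ 2 ≤ ∫ x in ball (0 : Euc I) 1,
        (2 * (lap v x - c) ^ 2 + 2 * (I : ℝ) ^ 2 * ‖hes v x - M‖ ^ 2) := by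
      rw [← setIntegral_const_ball]
      refine integral_mono (integrableOn_ball (by fun_prop) _ _)
        (integrableOn_ball (by fun_prop) _ _) fun x => ?_
      have := abs_tr_le (hes v x - M)
      rw [tr_sub] at this
      have h2 : (tr (hes v x) - tr M) ^ 2 ≤ (I * ‖hes v x - M‖) ^ 2 := sq_le_sq' (by
        linarith [neg_abs_le (tr (hes v x) - tr M)]) (by linarith [le_abs_self (tr (hes v x) - tr M)])
      simp only [lap]
      nlinarith [sq_nonneg ((tr (hes v x) - c) + (tr (hes v x) - tr M))]
    rw [integral_add (integrableOn_ball (by fun_prop) _ _) (integrableOn_ball (by fun_prop) _ _),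
      integral_const_mul, integral_const_mul] at this
    have : 0 ≤ (I : ℝ) ^ 2 * b := by positivity
    nlinarith
  -- Correct `M` by a multiple of the inner product, so that its trace becomes exactly `c`.
  set e : ℝ := (c - tr M) / I with he
  set J : Euc I →L[ℝ] Euc I →L[ℝ] ℝ := innerSL ℝ with hJ
  have hJn : ‖J‖ ≤ 1 := norm_innerSL_le ℝ
  have hJt : tr J = I := by
    have : ∀ i : Fin I, J (ee i) (ee i) = 1 := fun i => by
      have h0 : J (ee i) (ee i) = inner ℝ (ee i) (ee i) := rfl
      rw [h0, real_inner_self_eq_norm_sq, norm_ee, one_pow]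
    simp [tr, this]
  have hJs : ∀ v w, J v w = J w v := fun v w => real_inner_comm w v
  set Mt := M + e • J with hMt
  have hMts : ∀ v w, Mt v w = Mt w v := fun v w => by
    simp only [hMt, _root_.add_apply, _root_.smul_apply, hM v w, hJs v w]
  have htrM : tr Mt = c := by
    have : tr Mt = tr M + e * tr J := by
      simp only [tr, hMt, _root_.add_apply, _root_.smul_apply, smul_eq_mul, Finset.sum_add_distrib,
        Finset.mul_sum]
    rw [this, hJt, he]; field_simp; ring
  have hMM : ‖Mt - M‖ ^ 2 ≤ E * (a + b) := by
    have e1 : Mt - M = e • J := by rw [hMt]; abel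
    have e2 : ‖Mt - M‖ ≤ |c - tr M| := by
      rw [e1, norm_smul, Real.norm_eq_abs, he, abs_div, abs_of_pos hI']
      have : (1 : ℝ) ≤ I := by exact_mod_cast hI
      calc |c - tr M| / I * ‖J‖ ≤ |c - tr M| / 1 * 1 := by gcongr
        _ = _ := by ring
    calc ‖Mt - M‖ ^ 2 ≤ |c - tr M| ^ 2 := pow_le_pow_left₀ (norm_nonneg _) e2 2
      _ = (b1 * (c - tr M) ^ 2) / b1 := by rw [sq_abs]; field_simp
      _ ≤ ((2 + 2 * (I : ℝ) ^ 2) * (a + b)) / b1 := by gcongr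
      _ = _ := by rw [hE]; ring
  -- Subtract the quadratic function with second derivative `Mt`, and localize.
  obtain ⟨χ, hχ2, hχs, hχ1, -, -⟩ := exists_cutoff (I := I) (r := 1) (s := 2) one_pos one_lt_two
  set w : Euc I → ℝ := fun x => v x - 1 / 2 * Mt x x with hw
  have hw2 : ContDiff ℝ 2 w := hv.sub (contDiff_quad Mt)
  have hhw : ∀ x, hes w x = hes v x - Mt := fun x => by
    rw [hw, hes_sub hv (contDiff_quad Mt), hes_quad Mt hMts]
  have hV2 : ContDiff ℝ 2 (fun x => χ x * w x) := hχ2.mul hw2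
  have hVs : HasCompactSupport (fun x => χ x * w x) := hχs.mul_right
  have hhV : ∀ x ∈ ball (0 : Euc I) 1, hes (fun x => χ x * w x) x = hes v x - Mt := by
    intro x hx
    rw [← hhw]
    refine hes_congr isOpen_ball (fun y hy => ?_) hx
    rw [hχ1 y (by simpa using (mem_ball.1 hy).le), one_mul]
  obtain ⟨M0, hM0s, hM0n, hM0⟩ := h1 _ hV2 hVs
  have i1 : ∫ x in ball (0 : Euc I) 1, ‖hes (fun x => χ x * w x) x‖ ^ 2 ≤ D * (a + b) := by
    rw [setIntegral_congr_fun measurableSet_ball (g := fun x => ‖hes v x - Mt‖ ^ 2)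
      fun x hx => by simp only [hhV x hx]]
    have := integral_norm_sub_sq_le cQ (continuous_const (y := M)) (continuous_const (y := Mt)) 1
    rw [setIntegral_const_ball, norm_sub_rev M Mt] at this
    have h3 : b1 * ‖Mt - M‖ ^ 2 ≤ b1 * (E * (a + b)) := mul_le_mul_of_nonneg_left hMM hb.le
    have h4 : b1 * (E * (a + b)) = (2 + 2 * (I : ℝ) ^ 2) * (a + b) := by
      rw [hE]; field_simp
    rw [hD]
    linarith
  have i2 : ∫ x in ball (0 : Euc I) 1, lap (fun x => χ x * w x) x ^ 2 = b := by
    refine setIntegral_congr_fun measurableSet_ball fun x hx => ?_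
    simp only [lap, hhV x hx, tr_sub, htrM]
  rw [i2] at hM0
  have p0 : 0 ≤ a + b := by positivity
  refine ⟨M0 + Mt, fun v w => by simp only [_root_.add_apply, hM0s v w, hMts v w], ?_, ?_⟩
  · have e1 : M0 + Mt - M = M0 - (M - Mt) := by abel
    have e2 := norm_sub_sq_le M0 0 (M - Mt)
    rw [e1]
    rw [sub_zero, zero_sub, norm_neg, norm_sub_rev M Mt] at e2
    have e3 : C1 * (∫ x in ball (0 : Euc I) 1, ‖hes (fun x => χ x * w x) x‖ ^ 2)
        ≤ C1 * (D * (a + b)) := mul_le_mul_of_nonneg_left i1 hC1.le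
    have : 0 ≤ (C1 * D + C1) * (a + b) := by positivity
    nlinarith
  · intro θ hθ hθ2
    have := hM0 θ hθ hθ2
    rw [setIntegral_congr_fun measurableSet_ball (g := fun x => ‖hes v x - (M0 + Mt)‖ ^ 2)
      fun x hx => by
        simp only [hhV x (ball_subset_ball (by linarith) hx)]; congr 2; abel] at this
    rw [setIntegral_scale (fun x => ‖hes v x - (M0 + Mt)‖ ^ 2) hθ, mul_one]
    have hp : 0 < θ ^ I := by positivity
    rw [inv_mul_le_iff₀ hp]
    refine this.trans ?_
    have e3 : C1 * (θ ^ (I + 2) * (∫ x in ball (0 : Euc I) 1, ‖hes (fun x => χ x * w x) x‖ ^ 2))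
        ≤ C1 * (θ ^ (I + 2) * (D * (a + b))) := by gcongr
    have e4 : θ ^ I * ((C1 * D + C1 + 2 * C1 * D + 2 * E) * (θ ^ 2 * (a + b) + (θ ^ I)⁻¹ * b))
        = (C1 * D + C1 + 2 * C1 * D + 2 * E) * (θ ^ (I + 2) * (a + b) + b) := by
      field_simp; ring
    rw [e4]
    have e5 : C1 * (θ ^ (I + 2) * (D * (a + b))) = C1 * D * (θ ^ (I + 2) * (a + b)) := by ring
    have q1 : 0 ≤ (C1 + 2 * C1 * D + 2 * E) * (θ ^ (I + 2) * (a + b)) := by positivity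
    have q2 : 0 ≤ (C1 * D + 2 * C1 * D + 2 * E) * b := by positivity
    rw [e5] at e3
    calc _ ≤ C1 * D * (θ ^ (I + 2) * (a + b)) + C1 * b := by linarith
      _ ≤ C1 * D * (θ ^ (I + 2) * (a + b)) + C1 * b
          + (C1 + 2 * C1 * D + 2 * E) * (θ ^ (I + 2) * (a + b))
          + (C1 * D + 2 * C1 * D + 2 * E) * b := by linarith
      _ = _ := by ring

lemma hes_const_mul {v : Euc I → ℝ} (hv : ContDiff ℝ 2 v) (c : ℝ) (x : Euc I) :
    hes (fun y => c * v y) x = c • hes v x := by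
  have e1 : fderiv ℝ (fun y => c * v y) = fun y => c • fderiv ℝ v y := by
    ext1 y
    exact fderiv_const_mul (hv.differentiable (by norm_num) y) c
  rw [hes, e1, fderiv_fun_const_smul ((contDiff_one_fderiv hv).differentiable one_ne_zero x)]
  rfl

lemma hes_rescale {v : Euc I → ℝ} (hv : ContDiff ℝ 2 v) {s : ℝ} (hs : 0 < s) (z : Euc I) :
    hes (fun z => (s ^ 2)⁻¹ * v (0 + s • z)) z = hes v (s • z) := by
  rw [hes_const_mul (contDiff_scale hv 0 s), hes_scale hv, smul_smul,
    inv_mul_cancel₀ (by positivity), one_smul, zero_add]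

/-- The step of the Campanato iteration at scale `s` for an equation whose Laplacian is an almost
constant function of the second derivative. -/
lemma camp_step (hI : 0 < I) : ∃ C : ℝ, 0 < C ∧ ∀ v : Euc I → ℝ, ContDiff ℝ 2 v →
    ∀ (G : (Euc I →L[ℝ] Euc I →L[ℝ] ℝ) → ℝ) (ε τ : ℝ), 0 ≤ ε → 0 ≤ τ →
    (∀ A B, |G A - G B| ≤ ε * ‖A - B‖) →
    (∀ z ∈ ball (0 : Euc I) 1, |lap v z - G (hes v z)| ≤ τ * ‖z‖) →
    ∀ s : ℝ, 0 < s → s ≤ 1 →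
    ∀ M : Euc I →L[ℝ] Euc I →L[ℝ] ℝ, (∀ v w, M v w = M w v) → ∀ a b : ℝ,
    (∫ x in ball (0 : Euc I) 1, ‖hes v (s • x) - M‖ ^ 2) ≤ a →
    2 * volume.real (ball (0 : Euc I) 1) * τ ^ 2 * s ^ 2 + 2 * ε ^ 2 * a ≤ b →
    ∃ M' : Euc I →L[ℝ] Euc I →L[ℝ] ℝ, (∀ v w, M' v w = M' w v) ∧
    ‖M' - M‖ ^ 2 ≤ C * (a + b) ∧
    ∀ θ : ℝ, 0 < θ → θ ≤ 1 / 2 → ∫ x in ball (0 : Euc I) 1, ‖hes v ((s * θ) • x) - M'‖ ^ 2 ≤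
      C * (θ ^ 2 * (a + b) + (θ ^ I)⁻¹ * b) := by
  obtain ⟨C, hC, h⟩ := one_step hI
  refine ⟨C, hC, fun v hv G ε τ hε hτ hG hL s hs hs1 M hM a b haa hbb => ?_⟩
  have hv' : ContDiff ℝ 2 (fun z => (s ^ 2)⁻¹ * v (0 + s • z)) :=
    contDiff_const.mul (contDiff_scale hv 0 s)
  obtain ⟨M', hs', h1, h2⟩ := h _ hv' M hM (G M)
  simp only [lap, hes_rescale hv hs] at h1 h2
  have cQ := continuous_hes hv
  have hb' : ∫ x in ball (0 : Euc I) 1, (tr (hes v (s • x)) - G M) ^ 2 ≤ b := by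
    calc _ ≤ ∫ x in ball (0 : Euc I) 1, (2 * τ ^ 2 * s ^ 2 + 2 * ε ^ 2 * ‖hes v (s • x) - M‖ ^ 2) := by
          refine integral_mono_of_nonneg (ae_of_all _ fun x => by positivity)
            (integrableOn_ball (by fun_prop) _ _)
            (ae_restrict_of_forall_mem measurableSet_ball fun x hx => ?_)
          have hx' : ‖x‖ < 1 := by simpa using hx
          have hsx : ‖s • x‖ ≤ s := by
            rw [norm_smul, Real.norm_of_nonneg hs.le]; nlinarith [norm_nonneg x]
          have e1 := hL (s • x) (by
            rw [mem_ball_zero_iff, norm_smul, Real.norm_of_nonneg hs.le]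
            nlinarith [norm_nonneg x])
          have e2 := hG (hes v (s • x)) M
          have e3 : |tr (hes v (s • x)) - G M| ≤ τ * s + ε * ‖hes v (s • x) - M‖ := by
            have := abs_sub_le (tr (hes v (s • x))) (G (hes v (s • x))) (G M)
            have : τ * ‖s • x‖ ≤ τ * s := by gcongr
            simp only [lap] at e1
            linarith
          have e4 : (tr (hes v (s • x)) - G M) ^ 2 ≤ (τ * s + ε * ‖hes v (s • x) - M‖) ^ 2 := by
            rw [← sq_abs]
            exact pow_le_pow_left₀ (abs_nonneg _) e3 2
          refine e4.trans ?_
          nlinarith [sq_nonneg (τ * s - ε * ‖hes v (s • x) - M‖)]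
      _ ≤ b := by
          rw [integral_add (integrableOn_ball (by fun_prop) _ _)
            (integrableOn_ball (by fun_prop) _ _), setIntegral_const_ball, integral_const_mul]
          have : 2 * ε ^ 2 * (∫ x in ball (0 : Euc I) 1, ‖hes v (s • x) - M‖ ^ 2)
            ≤ 2 * ε ^ 2 * a := by gcongr
          linarith
  refine ⟨M', hs', h1.trans (by gcongr), fun θ hθ hθ2 => ?_⟩
  have := h2 θ hθ hθ2
  simp only [smul_smul] at this
  exact this.trans (by gcongr)

/-- Conclusion of the Campanato iteration: an approximating sequence with geometrically decaying
errors converges to the value at the origin, with a rate. -/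
lemma camp_limit {F : Type*} [NormedAddCommGroup F] {Q : Euc I → F} (cQ : Continuous Q)
    {θ C A q D E : ℝ} (hθ0 : 0 < θ) (hq0 : 0 < q) (hq1 : q < 1) (hqq : q ^ 2 = θ) (hC : 0 < C)
    (hA0 : 0 ≤ A) (hD : D = C / (1 - q) ^ 2)
    (hE : E = (θ ^ I)⁻¹ * (2 + 2 * volume.real (ball (0 : Euc I) 1) * D) / θ)
    {M : ℕ → F} (hM0 : M 0 = 0)
    (hMi : ∀ k, (∫ x in ball (0 : Euc I) 1, ‖Q ((θ ^ k) • x) - M k‖ ^ 2) ≤ A * θ ^ k)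
    (hMd : ∀ k, ‖M (k + 1) - M k‖ ^ 2 ≤ C * A * θ ^ k) :
    ‖Q 0‖ ^ 2 ≤ D * A ∧
    ∀ t : ℝ, 0 < t → t ≤ 1 → ∫ x in ball (0 : Euc I) 1, ‖Q (t • x) - Q 0‖ ^ 2 ≤ E * t * A := by
  set b1 := volume.real (ball (0 : Euc I) 1) with hb1
  have hb : 0 < b1 := volume_ball_pos
  have hθ1 : θ < 1 := by nlinarith
  have h1q : 0 < 1 - q := by linarith
  have hD0 : 0 < D := by rw [hD]; positivity
  have hE0 : 0 < E := by rw [hE]; positivity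
  have hpow : ∀ k : ℕ, 0 < θ ^ k ∧ θ ^ k ≤ 1 := fun k =>
    ⟨by positivity, pow_le_one₀ hθ0.le (by linarith)⟩
  have hdist : ∀ k, dist (M k) (M (k + 1)) ≤ Real.sqrt (C * A) * q ^ k := by
    intro k
    rw [dist_comm, dist_eq_norm]
    refine abs_le_of_sq_le_sq' ?_ (by positivity) |>.2
    rw [mul_pow, Real.sq_sqrt (by positivity), ← pow_mul, mul_comm k 2, pow_mul, hqq]
    exact hMd k
  have hθt : Tendsto (fun k : ℕ => θ ^ k) atTop (𝓝 0) :=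
    tendsto_pow_atTop_nhds_zero_of_lt_one hθ0.le (by linarith)
  have hlim : Tendsto M atTop (𝓝 (Q 0)) := by
    rw [tendsto_iff_norm_sub_tendsto_zero]
    have h2 : Tendsto (fun k => ‖M k - Q 0‖ ^ 2) atTop (𝓝 0) := by
      rw [Metric.tendsto_atTop]
      intro δ hδ
      obtain ⟨η, hη, hηc⟩ := Metric.continuousAt_iff.1 (cQ.continuousAt (x := 0))
        (Real.sqrt (δ / 8)) (by positivity)
      have ev := (hθt.eventually (gt_mem_nhds hη)).and ((hθt.const_mul (2 * A / b1)).eventually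
        (gt_mem_nhds (show 2 * A / b1 * 0 < δ / 2 by simpa using half_pos hδ)))
      obtain ⟨N, hN⟩ := eventually_atTop.1 ev
      refine ⟨N, fun k hk => ?_⟩
      obtain ⟨n1, n2⟩ := hN k hk
      rw [Real.dist_eq, sub_zero, abs_of_nonneg (by positivity)]
      have e0 := integral_norm_sub_sq_le (continuous_const (y := M k))
        (g := fun x : Euc I => Q ((θ ^ k) • x)) (by fun_prop)
        (continuous_const (y := Q 0)) 1
      rw [setIntegral_const_ball, ← hb1] at e0
      have e1 : (∫ x in ball (0 : Euc I) 1, ‖M k - Q ((θ ^ k) • x)‖ ^ 2) ≤ A * θ ^ k := by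
        simp_rw [norm_sub_rev (M k)]; exact hMi k
      have e2 : (∫ x in ball (0 : Euc I) 1, ‖Q ((θ ^ k) • x) - Q 0‖ ^ 2) ≤ b1 * (δ / 8) := by
        rw [hb1, ← setIntegral_const_ball]
        refine integral_mono_of_nonneg (ae_of_all _ fun x => by positivity)
            (integrableOn_ball (by fun_prop) _ _)
            (ae_restrict_of_forall_mem measurableSet_ball fun x hx => ?_)
        have hx' : ‖x‖ < 1 := by simpa using hx
        have := hηc (x := (θ ^ k) • x) (by
          rw [dist_zero_right, norm_smul, Real.norm_of_nonneg (hpow k).1.le]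
          nlinarith [norm_nonneg x, (hpow k).1])
        rw [dist_eq_norm] at this
        calc _ ≤ Real.sqrt (δ / 8) ^ 2 := pow_le_pow_left₀ (norm_nonneg _) this.le 2
          _ = δ / 8 := Real.sq_sqrt (by positivity)
      have e3 : b1 * ‖M k - Q 0‖ ^ 2 ≤ b1 * (2 * A / b1 * θ ^ k + δ / 4) := by
        have : b1 * (2 * A / b1 * θ ^ k + δ / 4) = 2 * (A * θ ^ k) + 2 * (b1 * (δ / 8)) := by
          field_simp; ring
        linarith
      have e4 := le_of_mul_le_mul_left e3 hb
      linarith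
    have h3 := (Real.continuous_sqrt.tendsto 0).comp h2
    rw [Real.sqrt_zero] at h3
    refine h3.congr fun k => ?_
    simp [Real.sqrt_sq (norm_nonneg _)]
  have hclose : ∀ k, ‖M k - Q 0‖ ^ 2 ≤ D * A * θ ^ k := by
    intro k
    have := dist_le_of_le_geometric_of_tendsto q _ hq1 hdist hlim k
    rw [dist_eq_norm] at this
    calc ‖M k - Q 0‖ ^ 2 ≤ (Real.sqrt (C * A) * q ^ k / (1 - q)) ^ 2 :=
          pow_le_pow_left₀ (norm_nonneg _) this 2
      _ = D * A * θ ^ k := by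
          rw [div_pow, mul_pow, Real.sq_sqrt (by positivity), ← pow_mul, mul_comm k 2, pow_mul, hqq,
            hD]
          ring
  have hu : ∀ k, (∫ x in ball (0 : Euc I) 1, ‖Q ((θ ^ k) • x) - Q 0‖ ^ 2)
      ≤ (2 + 2 * b1 * D) * A * θ ^ k := by
    intro k
    have e0 := integral_norm_sub_sq_le (f := fun x : Euc I => Q ((θ ^ k) • x)) (by fun_prop)
      (continuous_const (y := M k)) (continuous_const (y := Q 0)) 1
    rw [setIntegral_const_ball, ← hb1] at e0
    have e1 := mul_le_mul_of_nonneg_left (hclose k) hb.le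
    have e2 := hMi k
    nlinarith
  refine ⟨?_, fun t ht ht1 => ?_⟩
  · have := hclose 0
    rw [hM0, zero_sub, norm_neg, pow_zero, mul_one] at this
    exact this
  · obtain ⟨k, hk1, hk2⟩ := exists_nat_pow_near_of_lt_one ht ht1 hθ0 (by linarith)
    have e1 : ∫ x in ball (0 : Euc I) 1, ‖Q (t • x) - Q 0‖ ^ 2
        = (t ^ I)⁻¹ * ∫ x in ball (0 : Euc I) t, ‖Q x - Q 0‖ ^ 2 := by
      rw [setIntegral_scale (fun x => ‖Q x - Q 0‖ ^ 2) ht, mul_one]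
    have e2 : ∫ x in ball (0 : Euc I) 1, ‖Q ((θ ^ k) • x) - Q 0‖ ^ 2
        = ((θ ^ k) ^ I)⁻¹ * ∫ x in ball (0 : Euc I) (θ ^ k), ‖Q x - Q 0‖ ^ 2 := by
      rw [setIntegral_scale (fun x => ‖Q x - Q 0‖ ^ 2) (hpow k).1, mul_one]
    have e3 : ∫ x in ball (0 : Euc I) t, ‖Q x - Q 0‖ ^ 2
        ≤ ∫ x in ball (0 : Euc I) (θ ^ k), ‖Q x - Q 0‖ ^ 2 :=
      setIntegral_mono_ball (by fun_prop) (fun x => by positivity) hk2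
    have e4 : (t ^ I)⁻¹ ≤ (θ ^ I)⁻¹ * ((θ ^ k) ^ I)⁻¹ := by
      rw [← mul_inv, ← mul_pow]
      refine inv_anti₀ (by have := (hpow k).1; positivity) (pow_le_pow_left₀ (by
        have := (hpow k).1; positivity) ?_ I)
      rw [pow_succ, mul_comm] at hk1
      exact hk1.le
    have e5 := hu k
    have e6 : θ ^ k ≤ t / θ := by
      rw [le_div_iff₀ hθ0, ← pow_succ]; exact hk1.le
    have n1 : 0 ≤ ∫ x in ball (0 : Euc I) (θ ^ k), ‖Q x - Q 0‖ ^ 2 :=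
      integral_nonneg fun x => by positivity
    have n2 : 0 ≤ (t ^ I)⁻¹ := by positivity
    calc ∫ x in ball (0 : Euc I) 1, ‖Q (t • x) - Q 0‖ ^ 2
        ≤ (t ^ I)⁻¹ * ∫ x in ball (0 : Euc I) (θ ^ k), ‖Q x - Q 0‖ ^ 2 := by
          rw [e1]; gcongr
      _ ≤ (θ ^ I)⁻¹ * ((θ ^ k) ^ I)⁻¹ * ∫ x in ball (0 : Euc I) (θ ^ k), ‖Q x - Q 0‖ ^ 2 := by
          gcongr
      _ = (θ ^ I)⁻¹ * ∫ x in ball (0 : Euc I) 1, ‖Q ((θ ^ k) • x) - Q 0‖ ^ 2 := by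
          rw [e2]; ring
      _ ≤ (θ ^ I)⁻¹ * ((2 + 2 * b1 * D) * A * (t / θ)) := by
          gcongr
          exact e5.trans (by gcongr)
      _ = E * t * A := by rw [hE]; ring

/-- Dependent choice for states with property `p`, consecutive ones being linked by `r`. -/
lemma exists_dependent_seq {α : Type*} (p : ℕ → α → Prop) (r : ℕ → α → α → Prop) (a0 : α)
    (h0 : p 0 a0) (h : ∀ k a, p k a → ∃ b, p (k + 1) b ∧ r k a b) :
    ∃ M : ℕ → α, M 0 = a0 ∧ ∀ k, p k (M k) ∧ r k (M k) (M (k + 1)) := by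
  choose F hF1 hF2 using h
  let S : (k : ℕ) → {a // p k a} := fun k =>
    Nat.rec ⟨a0, h0⟩ (fun k M => ⟨F k M.1 M.2, hF1 k M.1 M.2⟩) k
  exact ⟨fun k => (S k).1, rfl, fun k => ⟨(S k).2, hF2 k (S k).1 (S k).2⟩⟩

/-- The Campanato step with its constants fixed: at scale `s` the mean square error is at most
`A * s`, and this bound propagates to the scale `s * θ`. -/
lemma camp_step_const (hI : 0 < I) : ∃ C θ ε Γ : ℝ, 0 < C ∧ 0 < θ ∧ θ ≤ 1 / 2 ∧ 0 < ε ∧ 0 < Γ ∧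
    ∀ v : Euc I → ℝ, ContDiff ℝ 2 v →
    ∀ (G : (Euc I →L[ℝ] Euc I →L[ℝ] ℝ) → ℝ) (τ : ℝ), 0 ≤ τ →
    (∀ A B, |G A - G B| ≤ ε * ‖A - B‖) →
    (∀ z ∈ ball (0 : Euc I) 1, |lap v z - G (hes v z)| ≤ τ * ‖z‖) → ∀ A : ℝ, Γ * τ ^ 2 ≤ A →
    ∀ s : ℝ, 0 < s → s ≤ 1 → ∀ M : Euc I →L[ℝ] Euc I →L[ℝ] ℝ,
      (∀ v w, M v w = M w v) → (∫ x in ball (0 : Euc I) 1, ‖hes v (s • x) - M‖ ^ 2) ≤ A * s →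
      ∃ M' : Euc I →L[ℝ] Euc I →L[ℝ] ℝ, (∀ v w, M' v w = M' w v) ∧
      ‖M' - M‖ ^ 2 ≤ C * A * s ∧
      (∫ x in ball (0 : Euc I) 1, ‖hes v ((s * θ) • x) - M'‖ ^ 2) ≤ A * (s * θ) := by
  obtain ⟨C, hC, h⟩ := camp_step hI
  set b1 := volume.real (ball (0 : Euc I) 1) with hb1
  have hb : 0 < b1 := volume_ball_pos
  set θ : ℝ := 1 / (4 * C + 2) with hθ
  have hθ0 : 0 < θ := by positivity
  have hθ2 : θ ≤ 1 / 2 := by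
    rw [hθ]; exact one_div_le_one_div_of_le (by norm_num) (by linarith)
  have hCθ : C * θ ≤ 1 / 4 := by
    rw [hθ, mul_one_div, div_le_div_iff₀ (by positivity) (by norm_num)]; linarith
  set P : ℝ := θ ^ 2 + (θ ^ I)⁻¹ with hP
  have hP0 : 0 < P := by positivity
  set ε : ℝ := min (1 / 2) (θ / (8 * C * P)) with hε
  have hε0 : 0 < ε := lt_min (by norm_num) (by positivity)
  have hε1 : ε ≤ 1 / 2 := min_le_left _ _
  have hε2 : C * P * ε ≤ θ / 8 := by
    calc C * P * ε ≤ C * P * (θ / (8 * C * P)) := by gcongr; exact min_le_right _ _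
      _ = θ / 8 := by field_simp
  set Γ : ℝ := 4 * C * P * b1 / θ + b1 with hΓ
  have hΓ0 : 0 < Γ := by positivity
  refine ⟨4 * C, θ, ε, Γ, by positivity, hθ0, hθ2, hε0, hΓ0, fun v hv G τ hτ hG hL A hA => ?_⟩
  have hA0 : 0 ≤ A := le_trans (by positivity) hA
  have hb1A : b1 * τ ^ 2 ≤ A := by
    have : 0 ≤ 4 * C * P * b1 / θ * τ ^ 2 := by positivity
    rw [hΓ] at hA; linarith
  have hPA : 4 * C * P * b1 * τ ^ 2 ≤ θ * A := by
    have e1 : θ * (4 * C * P * b1 / θ * τ ^ 2) = 4 * C * P * b1 * τ ^ 2 := by field_simp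
    have : 0 ≤ θ * (b1 * τ ^ 2) := by positivity
    have e2 := mul_le_mul_of_nonneg_left hA hθ0.le
    rw [hΓ] at e2; linarith
  intro s hs hs1 M hM hint
  have hAs : 0 ≤ A * s := by positivity
  have hεε : 2 * ε ^ 2 ≤ ε := by nlinarith
  obtain ⟨M', hM', h1, h2⟩ := h v hv G ε τ hε0.le hτ hG hL s hs hs1 M hM (A * s)
    (2 * b1 * τ ^ 2 * s + ε * (A * s)) hint (by
      have e1 : b1 * τ ^ 2 * s ^ 2 ≤ b1 * τ ^ 2 * s :=
        mul_le_mul_of_nonneg_left (by nlinarith) (by positivity)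
      have e2 : 2 * ε ^ 2 * (A * s) ≤ ε * (A * s) := mul_le_mul_of_nonneg_right hεε hAs
      linarith)
  have hbs : b1 * τ ^ 2 * s ≤ A * s := mul_le_mul_of_nonneg_right hb1A hs.le
  have hεA : ε * (A * s) ≤ 1 / 2 * (A * s) := mul_le_mul_of_nonneg_right hε1 hAs
  refine ⟨M', hM', h1.trans ?_, (h2 θ hθ0 hθ2).trans ?_⟩
  · calc C * (A * s + (2 * b1 * τ ^ 2 * s + ε * (A * s))) ≤ C * (4 * (A * s)) := by
          gcongr; linarith
      _ = _ := by ring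
  · have e1 : C * θ * (θ * (A * s)) ≤ 1 / 4 * (θ * (A * s)) :=
      mul_le_mul_of_nonneg_right hCθ (by positivity)
    have e2 : C * P * ε * (A * s) ≤ θ / 8 * (A * s) := mul_le_mul_of_nonneg_right hε2 hAs
    have e3 : 4 * C * P * b1 * τ ^ 2 * s ≤ θ * A * s := mul_le_mul_of_nonneg_right hPA hs.le
    have e4 : 0 ≤ θ * (A * s) := by positivity
    calc C * (θ ^ 2 * (A * s + (2 * b1 * τ ^ 2 * s + ε * (A * s)))
          + (θ ^ I)⁻¹ * (2 * b1 * τ ^ 2 * s + ε * (A * s)))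
        = C * θ * (θ * (A * s)) + C * P * ε * (A * s) + 1 / 2 * (4 * C * P * b1 * τ ^ 2 * s) := by
          rw [hP]; ring
      _ ≤ _ := by linarith

/-- Campanato's estimate: pointwise bound and `L²`-Hölder decay (with exponent `1/2`) of the second
derivative at the origin. -/
lemma camp (hI : 0 < I) : ∃ C ε : ℝ, 0 < C ∧ 0 < ε ∧ ∀ v : Euc I → ℝ, ContDiff ℝ 2 v →
    ∀ (G : (Euc I →L[ℝ] Euc I →L[ℝ] ℝ) → ℝ) (τ : ℝ), 0 ≤ τ →
    (∀ A B, |G A - G B| ≤ ε * ‖A - B‖) →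
    (∀ z ∈ ball (0 : Euc I) 1, |lap v z - G (hes v z)| ≤ τ * ‖z‖) → ∀ a : ℝ,
    (∫ x in ball (0 : Euc I) 1, ‖hes v x‖ ^ 2) ≤ a →
    ‖hes v 0‖ ^ 2 ≤ C * (a + τ ^ 2) ∧
    ∀ t : ℝ, 0 < t → t ≤ 1 → ∫ x in ball (0 : Euc I) 1, ‖hes v (t • x) - hes v 0‖ ^ 2 ≤
      C * t * (a + τ ^ 2) := by
  obtain ⟨C, θ, ε, Γ, hC, hθ0, hθ2, hε0, hΓ0, step⟩ := camp_step_const hI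
  set b1 := volume.real (ball (0 : Euc I) 1) with hb1
  have hb : 0 < b1 := volume_ball_pos
  set q := Real.sqrt θ with hq
  have hq0 : 0 < q := Real.sqrt_pos.2 hθ0
  have hq1 : q < 1 := by
    rw [hq, Real.sqrt_lt' one_pos]; linarith
  have hqq : q ^ 2 = θ := Real.sq_sqrt hθ0.le
  set D : ℝ := C / (1 - q) ^ 2 with hD
  have h1q : 0 < 1 - q := by linarith
  have hD0 : 0 < D := by positivity
  set E : ℝ := (θ ^ I)⁻¹ * (2 + 2 * b1 * D) / θ with hE
  have hE0 : 0 < E := by positivity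
  refine ⟨(D + E) * (1 + Γ), ε, by positivity, hε0, fun v hv G τ hτ hG hL a haa => ?_⟩
  have cQ := continuous_hes hv
  have ha0 : 0 ≤ a := (integral_nonneg fun x => by positivity).trans haa
  set A := a + Γ * τ ^ 2 with hA
  have hA0 : 0 ≤ A := by positivity
  have hAle : A ≤ (1 + Γ) * (a + τ ^ 2) := by
    rw [hA]
    nlinarith [mul_nonneg hΓ0.le ha0, sq_nonneg τ]
  have hpow : ∀ k : ℕ, 0 < θ ^ k ∧ θ ^ k ≤ 1 := fun k =>
    ⟨by positivity, pow_le_one₀ hθ0.le (by linarith)⟩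
  obtain ⟨M, hM0, hMp⟩ := exists_dependent_seq
    (p := fun k (M : Euc I →L[ℝ] Euc I →L[ℝ] ℝ) => (∀ v w, M v w = M w v) ∧
      (∫ x in ball (0 : Euc I) 1, ‖hes v ((θ ^ k) • x) - M‖ ^ 2) ≤ A * θ ^ k)
    (r := fun k M M' => ‖M' - M‖ ^ 2 ≤ C * A * θ ^ k) 0 ⟨by simp, by
      simp only [pow_zero, one_smul, sub_zero, mul_one]
      rw [hA]
      have : 0 ≤ Γ * τ ^ 2 := by positivity
      linarith⟩ (by
      rintro k M ⟨hM, hMi⟩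
      obtain ⟨M', a1, a2, a3⟩ := step v hv G τ hτ hG hL A (by rw [hA]; linarith) (θ ^ k) (hpow k).1 (hpow k).2 M hM hMi
      exact ⟨M', ⟨a1, by rw [pow_succ]; exact a3⟩, a2⟩)
  have hMi := fun k => (hMp k).1.2
  have hMd := fun k => (hMp k).2
  obtain ⟨r1, r2⟩ := camp_limit cQ hθ0 hq0 hq1 hqq hC hA0 hD hE hM0 hMi hMd
  refine ⟨?_, fun t ht ht1 => ?_⟩
  · calc _ ≤ D * A := r1
      _ ≤ (D + E) * ((1 + Γ) * (a + τ ^ 2)) := by gcongr; linarith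
      _ = _ := by ring
  · calc _ ≤ E * t * A := r2 t ht ht1
      _ ≤ (D + E) * t * ((1 + Γ) * (a + τ ^ 2)) := by gcongr; linarith
      _ = _ := by ring

/-! ### Perturbations of the Poisson equation at one scale -/

/-- An `L²` bound for the second derivative from sup bounds for the function and its Laplacian. -/
lemma energy (I : ℕ) : ∃ C : ℝ, 0 < C ∧ ∀ v : Euc I → ℝ, ContDiff ℝ 2 v → ∀ K Λ : ℝ,
    (∀ x ∈ ball (0 : Euc I) 2, |v x| ≤ K) → (∀ x ∈ ball (0 : Euc I) 2, |lap v x| ≤ Λ) →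
    ∫ x in ball (0 : Euc I) 1, ‖hes v x‖ ^ 2 ≤ C * (K ^ 2 + Λ ^ 2) := by
  obtain ⟨C, hC, h⟩ := cacc I
  set b := volume.real (ball (0 : Euc I) (3 / 4)) with hb
  refine ⟨2 ^ I * (C * (16 * b)) + 1, by positivity, fun v hv K Λ hK hΛ => ?_⟩
  have cQ := continuous_hes hv
  have h1 := h _ (contDiff_scale hv 0 2)
  simp only [lap_scale hv, hes_scale hv] at h1
  simp only [zero_add] at h1
  have e1 : ∫ x in ball (0 : Euc I) (1 / 2), ‖(2 : ℝ) ^ 2 • hes v ((2 : ℝ) • x)‖ ^ 2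
      = 16 * (((2 : ℝ) ^ I)⁻¹ * ∫ x in ball (0 : Euc I) 1, ‖hes v x‖ ^ 2) := by
    have : ∀ x : Euc I, ‖(2 : ℝ) ^ 2 • hes v ((2 : ℝ) • x)‖ ^ 2 = 16 * ‖hes v ((2 : ℝ) • x)‖ ^ 2 := by
      intro x
      rw [norm_smul, mul_pow]
      norm_num
    simp_rw [this]
    rw [integral_const_mul, setIntegral_scale (fun x => ‖hes v x‖ ^ 2) two_pos]
    norm_num
  have e2 : ∫ x in ball (0 : Euc I) (3 / 4), (v ((2 : ℝ) • x) ^ 2 + ((2 : ℝ) ^ 2 * lap v ((2 : ℝ) • x)) ^ 2)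
      ≤ b * (16 * (K ^ 2 + Λ ^ 2)) := by
    have : b * (16 * (K ^ 2 + Λ ^ 2)) = ∫ _ in ball (0 : Euc I) (3 / 4), 16 * (K ^ 2 + Λ ^ 2) := by
      rw [setIntegral_const, smul_eq_mul]
    rw [this]
    refine integral_mono_of_nonneg (ae_of_all _ fun x => by positivity)
      (integrableOn_ball (by fun_prop) _ _)
      (ae_restrict_of_forall_mem measurableSet_ball fun x hx => ?_)
    have hx2 : (2 : ℝ) • x ∈ ball (0 : Euc I) 2 := by
      rw [mem_ball_zero_iff] at hx ⊢
      rw [norm_smul]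
      norm_num
      linarith
    have k1 : v ((2 : ℝ) • x) ^ 2 ≤ K ^ 2 := by
      rw [← sq_abs]; exact pow_le_pow_left₀ (abs_nonneg _) (hK _ hx2) 2
    have k2 : lap v ((2 : ℝ) • x) ^ 2 ≤ Λ ^ 2 := by
      rw [← sq_abs]; exact pow_le_pow_left₀ (abs_nonneg _) (hΛ _ hx2) 2
    show v ((2 : ℝ) • x) ^ 2 + ((2 : ℝ) ^ 2 * lap v ((2 : ℝ) • x)) ^ 2 ≤ 16 * (K ^ 2 + Λ ^ 2)
    nlinarith [sq_nonneg K]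
  rw [e1] at h1
  have n0 : 0 ≤ ∫ x in ball (0 : Euc I) 1, ‖hes v x‖ ^ 2 := integral_nonneg fun x => by positivity
  have hp : (0 : ℝ) < 2 ^ I := by positivity
  have h2 : ((2 : ℝ) ^ I)⁻¹ * (∫ x in ball (0 : Euc I) 1, ‖hes v x‖ ^ 2) ≤
      C * (b * (16 * (K ^ 2 + Λ ^ 2))) := by
    have : 0 ≤ ((2 : ℝ) ^ I)⁻¹ * (∫ x in ball (0 : Euc I) 1, ‖hes v x‖ ^ 2) := by positivity
    have := mul_le_mul_of_nonneg_left e2 hC.le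
    linarith
  rw [inv_mul_le_iff₀ hp] at h2
  nlinarith [sq_nonneg K, sq_nonneg Λ]

/-- The interior `C²` estimate at one point and one scale. -/
lemma local_est (hI : 0 < I) : ∃ C ε : ℝ, 0 < C ∧ 0 < ε ∧ ∀ v : Euc I → ℝ, ContDiff ℝ 2 v →
    ∀ (x0 : Euc I) (s : ℝ), 0 < s → ∀ (G : (Euc I →L[ℝ] Euc I →L[ℝ] ℝ) → ℝ) (K Λ τ : ℝ), 0 ≤ K → 0 ≤ Λ →
    0 ≤ τ → (∀ A B, |G A - G B| ≤ ε * ‖A - B‖) →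
    (∀ x ∈ ball x0 (2 * s), |v x| ≤ K) → (∀ x ∈ ball x0 (2 * s), s ^ 2 * |lap v x| ≤ Λ) →
    (∀ x ∈ ball x0 (2 * s), |lap v x - G (hes v x)| ≤ τ * ‖x - x0‖) →
    s ^ 2 * ‖hes v x0‖ ≤ C * (K + Λ + s ^ 3 * τ) ∧ ∀ t : ℝ, 0 < t → t ≤ 1 →
    s ^ 4 * ∫ z in ball (0 : Euc I) 1, ‖hes v (x0 + (s * t) • z) - hes v x0‖ ^ 2 ≤
      C * t * (K + Λ + s ^ 3 * τ) ^ 2 := by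
  obtain ⟨C1, ε, hC1, hε, h1⟩ := camp hI
  obtain ⟨C2, hC2, h2⟩ := energy I
  set D := C1 * (C2 + 1) with hD
  have hD0 : 0 < D := by positivity
  refine ⟨D + 1, ε, by positivity, hε, fun v hv x0 s hs G K Λ τ hK0 hΛ0 hτ hG hK hΛ hL => ?_⟩
  have hmem : ∀ z ∈ ball (0 : Euc I) 2, x0 + s • z ∈ ball x0 (2 * s) := fun z hz => by
    rw [mem_ball_zero_iff] at hz
    rw [mem_ball, dist_eq_norm, add_sub_cancel_left, norm_smul, Real.norm_of_nonneg hs.le]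
    nlinarith
  have hv' := contDiff_scale hv x0 s
  have e1 := h2 _ hv' K Λ (fun z hz => hK _ (hmem z hz)) (fun z hz => by
    rw [lap_scale hv, abs_mul, abs_of_nonneg (by positivity)]; exact hΛ _ (hmem z hz))
  have hs2 : (0 : ℝ) < s ^ 2 := by positivity
  obtain ⟨r1, r2⟩ := h1 _ hv' (fun A => s ^ 2 * G ((s ^ 2)⁻¹ • A)) (s ^ 3 * τ) (by positivity)
    (fun A B => by
      rw [← mul_sub, abs_mul, abs_of_pos hs2]
      calc s ^ 2 * |G ((s ^ 2)⁻¹ • A) - G ((s ^ 2)⁻¹ • B)|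
          ≤ s ^ 2 * (ε * ‖(s ^ 2)⁻¹ • A - (s ^ 2)⁻¹ • B‖) := by gcongr; exact hG _ _
        _ = ε * ‖A - B‖ := by
          rw [← smul_sub, norm_smul, norm_inv, Real.norm_of_nonneg hs2.le]; field_simp)
    (fun z hz => by
      rw [lap_scale hv, hes_scale hv, smul_smul, inv_mul_cancel₀ hs2.ne', one_smul, ← mul_sub, abs_mul,
        abs_of_pos hs2]
      calc _ ≤ s ^ 2 * (τ * ‖x0 + s • z - x0‖) := by
            gcongr; exact hL _ (hmem z (ball_subset_ball one_le_two hz))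
        _ = _ := by
          rw [add_sub_cancel_left, norm_smul, Real.norm_of_nonneg hs.le]; ring) _ e1
  have hsum : C1 * (C2 * (K ^ 2 + Λ ^ 2) + (s ^ 3 * τ) ^ 2) ≤ D * (K + Λ + s ^ 3 * τ) ^ 2 := by
    set T := s ^ 3 * τ with hT
    have hT0 : 0 ≤ T := by positivity
    rw [hD, mul_assoc]
    refine mul_le_mul_of_nonneg_left ?_ hC1.le
    have : K ^ 2 + Λ ^ 2 + T ^ 2 ≤ (K + Λ + T) ^ 2 := by
      nlinarith [mul_nonneg hK0 hΛ0, mul_nonneg hK0 hT0, mul_nonneg hΛ0 hT0]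
    calc C2 * (K ^ 2 + Λ ^ 2) + T ^ 2 ≤ (C2 + 1) * (K ^ 2 + Λ ^ 2 + T ^ 2) := by
          nlinarith [sq_nonneg K, sq_nonneg Λ, mul_nonneg hC2.le (sq_nonneg T)]
      _ ≤ _ := by gcongr
  refine ⟨?_, fun t ht ht1 => ?_⟩
  · rw [hes_scale hv, smul_zero, add_zero, norm_smul, Real.norm_of_nonneg hs2.le] at r1
    refine abs_le_of_sq_le_sq' ?_ (by positivity) |>.2
    calc _ ≤ _ := r1.trans hsum
      _ ≤ (D + 1) ^ 2 * (K + Λ + s ^ 3 * τ) ^ 2 := by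
        refine mul_le_mul_of_nonneg_right ?_ (sq_nonneg _); nlinarith
      _ = _ := by ring
  · have := r2 t ht ht1
    simp only [hes_scale hv, smul_zero, add_zero, ← smul_sub, norm_smul, smul_smul, mul_pow,
      Real.norm_of_nonneg hs.le, norm_pow] at this
    rw [integral_const_mul, ← pow_mul] at this
    calc _ ≤ _ := this
      _ = t * (C1 * (C2 * (K ^ 2 + Λ ^ 2) + (s ^ 3 * τ) ^ 2)) := by ring
      _ ≤ t * (D * (K + Λ + s ^ 3 * τ) ^ 2) := by gcongr
      _ ≤ t * ((D + 1) * (K + Λ + s ^ 3 * τ) ^ 2) := by gcongr; linarith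
      _ = _ := by ring

/-- Interpolation: the gradient at the centre of a ball is controlled by the function and its second
derivative. -/
lemma grad_interp {v : Euc I → ℝ} (hv : ContDiff ℝ 2 v) {x : Euc I} {s K N : ℝ} (hs : 0 < s)
    (hK : ∀ y ∈ ball x s, |v y| ≤ K) (hN : ∀ y ∈ ball x s, ‖hes v y‖ ≤ N) :
    s * ‖fderiv ℝ v x‖ ≤ 4 * K + s ^ 2 * N := by
  have hxm : x ∈ ball x s := mem_ball_self hs
  have hN0 : 0 ≤ N := (norm_nonneg _).trans (hN x hxm)
  have hK0 : 0 ≤ K := (abs_nonneg _).trans (hK x hxm)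
  have hd : ∀ y ∈ ball x s, ‖fderiv ℝ v y - fderiv ℝ v x‖ ≤ N * s := fun y hy => by
    have := (convex_ball x s).norm_image_sub_le_of_norm_fderiv_le (𝕜 := ℝ) (f := fderiv ℝ v) (C := N)
      (fun z _ => (contDiff_one_fderiv hv).differentiable one_ne_zero z) (fun z hz => hN z hz) hxm hy
    refine this.trans ?_
    gcongr
    rw [← dist_eq_norm]; exact (mem_ball.1 hy).le
  have key : ‖fderiv ℝ v x‖ ≤ 4 * K / s + s * N := by
    refine ContinuousLinearMap.opNorm_le_bound _ (by positivity) fun e => ?_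
    rcases eq_or_ne e 0 with rfl | he
    · simp
    have hen : 0 < ‖e‖ := norm_pos_iff.2 he
    set w := (s / 2 / ‖e‖) • e with hw
    have hwn : ‖w‖ = s / 2 := by
      rw [hw, norm_smul, Real.norm_of_nonneg (by positivity)]; field_simp
    have hy : x + w ∈ ball x s := by
      rw [mem_ball, dist_eq_norm, add_sub_cancel_left, hwn]; linarith
    have h1 := (convex_ball x s).norm_image_sub_le_of_norm_fderiv_le' (𝕜 := ℝ) (f := v) (C := N * s)
      (φ := fderiv ℝ v x) (fun z _ => hv.differentiable (by norm_num) z) hd hxm hy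
    rw [add_sub_cancel_left, hwn, Real.norm_eq_abs] at h1
    have h2 : |fderiv ℝ v x w| ≤ 2 * K + N * s * (s / 2) := by
      have a1 := abs_le.1 h1
      have a2 := abs_le.1 (hK _ hy)
      have a3 := abs_le.1 (hK _ hxm)
      rw [abs_le]; constructor <;> linarith [a1.1, a1.2, a2.1, a2.2, a3.1, a3.2]
    rw [hw, map_smul, smul_eq_mul, abs_mul, abs_of_pos (by positivity)] at h2
    rw [Real.norm_eq_abs]
    have h3 : |fderiv ℝ v x e| = (s / 2 / ‖e‖ * |fderiv ℝ v x e|) * (2 / s * ‖e‖) := by field_simp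
    rw [h3]
    calc _ ≤ (2 * K + N * s * (s / 2)) * (2 / s * ‖e‖) := by gcongr
      _ = (4 * K / s + s * N) * ‖e‖ := by field_simp; ring
  calc s * ‖fderiv ℝ v x‖ ≤ s * (4 * K / s + s * N) := by gcongr
    _ = _ := by field_simp

/-- `v` solves on `U` an equation which is a small perturbation of the Poisson equation: freezing
the lower order terms at `x0` gives `Δv = G (D²v)` up to an error that vanishes at `x0`, with a `G`
of small Lipschitz constant. -/
def FrozenEq (v : Euc I → ℝ) (ε S : ℝ) (U : Set (Euc I)) : Prop :=
  ∀ x0 ∈ U, ∃ G : (Euc I →L[ℝ] Euc I →L[ℝ] ℝ) → ℝ, (∀ A B, |G A - G B| ≤ ε * ‖A - B‖) ∧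
    |G 0| ≤ ε * (S + |v x0| + ‖fderiv ℝ v x0‖) ∧
    ∀ x ∈ U, |lap v x - G (hes v x)| ≤
      ε * ‖x - x0‖ * (S + |v x| + ‖fderiv ℝ v x‖ + ‖hes v x‖)
      + ε * (|v x - v x0| + ‖fderiv ℝ v x - fderiv ℝ v x0‖)

/-- The estimate `local_est` under the frozen structure condition: the lower order terms are
interpolated between `K` and `N`, so that `N` enters only with the small factor `ε`. -/
lemma local_frozen (hI : 0 < I) : ∃ C ε0 : ℝ, 0 < C ∧ 0 < ε0 ∧ ε0 ≤ 1 ∧ ∀ v : Euc I → ℝ,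
    ContDiff ℝ 2 v → ∀ (U : Set (Euc I)) (x0 : Euc I) (s ε S K N : ℝ), 0 < s → s ≤ 1 → 0 ≤ ε →
    ε ≤ ε0 → 0 ≤ S → FrozenEq v ε S U → ball x0 (3 * s) ⊆ U →
    (∀ x ∈ ball x0 (3 * s), |v x| ≤ K) → (∀ x ∈ ball x0 (3 * s), s ^ 2 * ‖hes v x‖ ≤ N) →
    s ^ 2 * ‖hes v x0‖ ≤ C * (K + ε * (S + N)) ∧ ∀ t : ℝ, 0 < t → t ≤ 1 →
    s ^ 4 * ∫ z in ball (0 : Euc I) 1, ‖hes v (x0 + (s * t) • z) - hes v x0‖ ^ 2 ≤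
      C * t * (K + ε * (S + N)) ^ 2 := by
  obtain ⟨C, ε0, hC, hε0, h⟩ := local_est hI
  refine ⟨C * 33 ^ 2, min ε0 1, by positivity, lt_min hε0 one_pos, min_le_right _ _,
    fun v hv U x0 s ε S K N hs hs1 hε hεε hS hF hU hK hN => ?_⟩
  have hε1 : ε ≤ 1 := hεε.trans (min_le_right _ _)
  have hεε0 : ε ≤ ε0 := hεε.trans (min_le_left _ _)
  have hx0 : x0 ∈ ball x0 (3 * s) := mem_ball_self (by positivity)
  have hK0 : 0 ≤ K := (abs_nonneg _).trans (hK x0 hx0)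
  have hN0 : 0 ≤ N := le_trans (by positivity) (hN x0 hx0)
  obtain ⟨G, hG, hG0, hL⟩ := hF x0 (hU hx0)
  have hsub : ball x0 (2 * s) ⊆ ball x0 (3 * s) := ball_subset_ball (by linarith)
  have hD : ∀ x ∈ ball x0 (2 * s), s * ‖fderiv ℝ v x‖ ≤ 4 * K + N := by
    intro x hx
    have hss : ball x s ⊆ ball x0 (3 * s) :=
      ball_subset_ball' (by have := mem_ball.1 hx; linarith)
    have := grad_interp hv (N := N / s ^ 2) hs (fun y hy => hK y (hss hy))
      (fun y hy => by rw [le_div_iff₀' (by positivity)]; exact hN y (hss hy))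
    have e : s ^ 2 * (N / s ^ 2) = N := by field_simp
    rwa [e] at this
  have hx02 : x0 ∈ ball x0 (2 * s) := mem_ball_self (by positivity)
  have hs2 : (0 : ℝ) < s ^ 2 := by positivity
  have hs21 : s ^ 2 ≤ 1 := by nlinarith
  have hd0 : ∀ x ∈ ball x0 (2 * s), s * |v x - v x0| ≤ (4 * K + N) * ‖x - x0‖ := by
    intro x hx
    have := (convex_ball x0 (2 * s)).norm_image_sub_le_of_norm_fderiv_le (𝕜 := ℝ) (f := v)
      (C := (4 * K + N) / s) (fun z _ => hv.differentiable (by norm_num) z)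
      (fun z hz => by rw [le_div_iff₀' hs]; exact hD z hz) hx02 hx
    rw [Real.norm_eq_abs, div_mul_eq_mul_div, le_div_iff₀' hs] at this
    exact this
  have hd1 : ∀ x ∈ ball x0 (2 * s), s ^ 2 * ‖fderiv ℝ v x - fderiv ℝ v x0‖ ≤ N * ‖x - x0‖ := by
    intro x hx
    have := (convex_ball x0 (2 * s)).norm_image_sub_le_of_norm_fderiv_le (𝕜 := ℝ) (f := fderiv ℝ v)
      (C := N / s ^ 2) (fun z _ => (contDiff_one_fderiv hv).differentiable one_ne_zero z)
      (fun z hz => by rw [le_div_iff₀' hs2]; exact hN z (hsub hz)) hx02 hx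
    rw [div_mul_eq_mul_div, le_div_iff₀' hs2] at this
    exact this
  have mul_s : ∀ X : ℝ, 0 ≤ X → s ^ 2 * X ≤ s * X := fun X hX =>
    mul_le_mul_of_nonneg_right (by nlinarith) hX
  set T : ℝ := S + 9 * K + 4 * N with hT
  have hT0 : 0 ≤ T := by positivity
  have hLs : ∀ x ∈ ball x0 (2 * s), s ^ 2 * |lap v x - G (hes v x)| ≤ ε * T * ‖x - x0‖ := by
    intro x hx
    have n0 := norm_nonneg (x - x0)
    have a1 : s ^ 2 * (S + |v x| + ‖fderiv ℝ v x‖ + ‖hes v x‖) ≤ S + K + (4 * K + N) + N := by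
      have b1 : s ^ 2 * S ≤ S := by nlinarith
      have b2 : s ^ 2 * |v x| ≤ K := by nlinarith [abs_nonneg (v x), hK x (hsub hx)]
      have b3 := (mul_s _ (norm_nonneg (fderiv ℝ v x))).trans (hD x hx)
      have b4 := hN x (hsub hx)
      linarith
    have a2 : s ^ 2 * (|v x - v x0| + ‖fderiv ℝ v x - fderiv ℝ v x0‖)
        ≤ (4 * K + N) * ‖x - x0‖ + N * ‖x - x0‖ := by
      have b1 := (mul_s _ (abs_nonneg _)).trans (hd0 x hx)
      have b2 := hd1 x hx
      linarith
    calc s ^ 2 * |lap v x - G (hes v x)|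
        ≤ s ^ 2 * (ε * ‖x - x0‖ * (S + |v x| + ‖fderiv ℝ v x‖ + ‖hes v x‖)
      + ε * (|v x - v x0| + ‖fderiv ℝ v x - fderiv ℝ v x0‖)) := by
          gcongr; exact hL x (hU (hsub hx))
      _ = ε * ‖x - x0‖ * (s ^ 2 * (S + |v x| + ‖fderiv ℝ v x‖ + ‖hes v x‖))
        + ε * (s ^ 2 * (|v x - v x0| + ‖fderiv ℝ v x - fderiv ℝ v x0‖)) := by ring
      _ ≤ ε * ‖x - x0‖ * (S + K + (4 * K + N) + N)
        + ε * ((4 * K + N) * ‖x - x0‖ + N * ‖x - x0‖) := by gcongr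
      _ = _ := by rw [hT]; ring
  obtain ⟨r1, r2⟩ := h v hv x0 s hs G K (ε * (3 * S + 23 * K + 10 * N)) (ε * T / s ^ 2) hK0
    (by positivity) (by positivity) (fun A B => (hG A B).trans (by gcongr))
    (fun x hx => hK x (hsub hx)) (fun x hx => by
      have a1 : |lap v x| ≤ |lap v x - G (hes v x)| + |G (hes v x) - G 0| + |G 0| := by
        have := abs_add_three (lap v x - G (hes v x)) (G (hes v x) - G 0) (G 0)
        simpa using this
      have a2 := hG (hes v x) 0
      rw [sub_zero] at a2
      have a3 : s ^ 2 * |G 0| ≤ ε * (S + 5 * K + N) := by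
        calc s ^ 2 * |G 0| ≤ s ^ 2 * (ε * (S + |v x0| + ‖fderiv ℝ v x0‖)) := by gcongr
          _ = ε * (s ^ 2 * S + s ^ 2 * |v x0| + s ^ 2 * ‖fderiv ℝ v x0‖) := by ring
          _ ≤ ε * (S + K + (4 * K + N)) := by
            gcongr
            · nlinarith
            · nlinarith [abs_nonneg (v x0), hK x0 hx0]
            · exact (mul_s _ (norm_nonneg _)).trans (hD x0 hx02)
          _ = _ := by ring
      have a4 : s ^ 2 * |lap v x - G (hes v x)| ≤ ε * T * 2 := by
        refine (hLs x hx).trans ?_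
        gcongr
        rw [← dist_eq_norm]
        have := mem_ball.1 hx
        linarith
      have a5 : s ^ 2 * (ε * ‖hes v x‖) ≤ ε * N := by
        calc _ = ε * (s ^ 2 * ‖hes v x‖) := by ring
          _ ≤ _ := by gcongr; exact hN x (hsub hx)
      calc s ^ 2 * |lap v x|
          ≤ s ^ 2 * (|lap v x - G (hes v x)| + ε * ‖hes v x‖ + |G 0|) := by gcongr; linarith
        _ = s ^ 2 * |lap v x - G (hes v x)| + s ^ 2 * (ε * ‖hes v x‖) + s ^ 2 * |G 0| := by ring
        _ ≤ ε * T * 2 + ε * N + ε * (S + 5 * K + N) := by linarith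
        _ = _ := by rw [hT]; ring)
    (fun x hx => by
      rw [div_mul_eq_mul_div, le_div_iff₀' hs2]
      exact hLs x hx)
  have e1 : s ^ 3 * (ε * T / s ^ 2) = s * (ε * T) := by field_simp
  have e2 : s * (ε * T) ≤ ε * T := by nlinarith [mul_nonneg hε hT0]
  have e3 : K + ε * (3 * S + 23 * K + 10 * N) + s ^ 3 * (ε * T / s ^ 2)
      ≤ 33 * (K + ε * (S + N)) := by
    rw [e1]
    have : ε * K ≤ K := by nlinarith
    have : 0 ≤ ε * S := by positivity
    have : 0 ≤ ε * N := by positivity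
    rw [hT] at e2 ⊢
    linarith
  have e4 : 0 ≤ K + ε * (3 * S + 23 * K + 10 * N) + s ^ 3 * (ε * T / s ^ 2) := by positivity
  refine ⟨r1.trans ?_, fun t ht ht1 => (r2 t ht ht1).trans ?_⟩
  · calc _ ≤ C * (33 * (K + ε * (S + N))) := by gcongr
      _ ≤ _ := by
        have : 0 ≤ C * (K + ε * (S + N)) := by positivity
        linarith
  · calc _ ≤ C * t * (33 * (K + ε * (S + N))) ^ 2 := by gcongr
      _ = _ := by ring

/-! ### The interior `C^{2,1/2}` estimate -/

lemma setIntegral_shift_le {f : Euc I → ℝ} (hf : Continuous f) (h0 : ∀ x, 0 ≤ f x) {e : Euc I}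
    (he : ‖e‖ ≤ 1 / 2) :
    ∫ z in ball (0 : Euc I) (1 / 2), f (z + e) ≤ ∫ z in ball (0 : Euc I) 1, f z := by
  have h := (measurePreserving_add_right (volume : Measure (Euc I)) e).setIntegral_preimage_emb
    (measurableEmbedding_addRight e) f (ball e (1 / 2))
  have hs : (fun x => x + e) ⁻¹' ball e (1 / 2) = ball (0 : Euc I) (1 / 2) := by
    ext x
    simp [mem_ball, dist_eq_norm]
  rw [hs] at h
  rw [h]
  refine setIntegral_mono_set (integrableOn_ball hf _ _) (ae_of_all _ h0) ?_
  exact (ball_subset_ball' (by rw [dist_zero_right]; linarith)).eventuallyLE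

/-- Campanato's comparison of two centres: mean square oscillations around `x0` and `x1` at scale
`‖x0 - x1‖` control the difference of the values. -/
lemma two_centre (I : ℕ) : ∃ C : ℝ, 0 < C ∧ ∀ {F : Type} [NormedAddCommGroup F] (Q : Euc I → F),
    Continuous Q → ∀ (x0 x1 : Euc I) (E : ℝ), x0 ≠ x1 →
    (∫ z in ball (0 : Euc I) 1, ‖Q (x0 + ‖x0 - x1‖ • z) - Q x0‖ ^ 2) ≤ E →
    (∫ z in ball (0 : Euc I) 1, ‖Q (x1 + ‖x0 - x1‖ • z) - Q x1‖ ^ 2) ≤ E →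
    ‖Q x0 - Q x1‖ ^ 2 ≤ C * E := by
  have hb : 0 < volume.real (ball (0 : Euc I) (1 / 2)) := by
    rw [measureReal_def]
    exact ENNReal.toReal_pos (measure_ball_pos _ _ (by norm_num)).ne' measure_ball_lt_top.ne
  set b := volume.real (ball (0 : Euc I) (1 / 2))
  refine ⟨4 / b, by positivity, fun {F} _ Q hQ x0 x1 E hne h0 h1 => ?_⟩
  set ρ := ‖x0 - x1‖ with hρ
  have hρ0 : 0 < ρ := norm_pos_iff.2 (sub_ne_zero.2 hne)
  set e : Euc I := (1 / (2 * ρ)) • (x1 - x0) with he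
  have hen : ‖e‖ = 1 / 2 := by
    rw [he, norm_smul, norm_sub_rev, ← hρ, Real.norm_of_nonneg (by positivity)]
    field_simp
  have hρe : ρ • e = (1 / 2 : ℝ) • (x1 - x0) := by
    rw [he, smul_smul]; congr 1; field_simp
  have s0 := setIntegral_shift_le (f := fun z => ‖Q (x0 + ρ • z) - Q x0‖ ^ 2) (by fun_prop)
    (fun x => by positivity) hen.le
  have s1 := setIntegral_shift_le (f := fun z => ‖Q (x1 + ρ • z) - Q x1‖ ^ 2) (by fun_prop)
    (fun x => by positivity) (e := -e) (by rw [norm_neg]; exact hen.le)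
  have e1 : ∀ z : Euc I, x1 + ρ • (z + -e) = x0 + ρ • (z + e) := by
    intro z
    rw [smul_add, smul_add, smul_neg, hρe]
    module
  simp only [e1] at s1
  have h2 := integral_norm_sub_sq_le (f := fun _ : Euc I => Q x0)
    (g := fun z => Q (x0 + ρ • (z + e))) (h := fun _ => Q x1) (by fun_prop) (by fun_prop)
    (by fun_prop) (1 / 2)
  rw [setIntegral_const, smul_eq_mul] at h2
  have e2 : ∀ z : Euc I, ‖Q x0 - Q (x0 + ρ • (z + e))‖ = ‖Q (x0 + ρ • (z + e)) - Q x0‖ :=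
    fun z => norm_sub_rev _ _
  simp only [e2] at h2
  rw [div_mul_eq_mul_div, le_div_iff₀ hb]
  linarith

/-- Interior `C^{2,1/2}` estimate for small perturbations of the Poisson equation. -/
lemma interior_est (hI : 0 < I) : ∃ C ε0 : ℝ, 0 < C ∧ 0 < ε0 ∧ ε0 ≤ 1 ∧ ∀ v : Euc I → ℝ,
    ContDiff ℝ 2 v → ∀ ε S K : ℝ, 0 ≤ ε → ε ≤ ε0 → 0 ≤ S → FrozenEq v ε S (ball 0 1) →
    (∀ x ∈ ball (0 : Euc I) 1, |v x| ≤ K) →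
    ‖fderiv ℝ v 0‖ ≤ C * (K + S) ∧ ‖hes v 0‖ ≤ C * (K + S) ∧
    ∀ x : Euc I, ‖x‖ ≤ 1 / 8 → ‖hes v x - hes v 0‖ ^ 2 ≤ C * ‖x‖ * (K + S) ^ 2 := by
  obtain ⟨C, ε1, hC, hε1, hε11, hloc⟩ := local_frozen hI
  obtain ⟨C', hC', htc⟩ := two_centre I
  set N1 := 128 * C with hN1
  set C3 := C' * (8 ^ 5 * (C * (1 + N1) ^ 2)) with hC3
  refine ⟨8 + 8 * N1 + C3, min ε1 (1 / (128 * C)), by positivity, by positivity,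
    (min_le_left _ _).trans hε11, fun v hv ε S K hε hεε hS hF hK => ?_⟩
  have hεε1 : ε ≤ ε1 := hεε.trans (min_le_left _ _)
  have hε1' : ε ≤ 1 := hεε1.trans hε11
  have hεC : 128 * C * ε ≤ 1 := by
    have := hεε.trans (min_le_right _ _)
    rwa [le_div_iff₀' (by positivity)] at this
  have hK0 : 0 ≤ K := (abs_nonneg _).trans (hK 0 (mem_ball_self one_pos))
  have hN0 : 0 < N1 := by positivity
  have hC30 : 0 < C3 := by positivity
  have cQ := continuous_hes hv
  -- the weighted maximum of the second derivative
  obtain ⟨y, hy, hmax⟩ := (isCompact_closedBall (0 : Euc I) 1).exists_isMaxOn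
    ⟨0, mem_closedBall_self zero_le_one⟩
    (f := fun x => (1 - ‖x‖) ^ 2 * ‖hes v x‖) (by fun_prop)
  set M := (1 - ‖y‖) ^ 2 * ‖hes v y‖ with hM
  have hM0 : 0 ≤ M := by positivity
  have hmax' : ∀ x ∈ ball (0 : Euc I) 1, (1 - ‖x‖) ^ 2 * ‖hes v x‖ ≤ M :=
    fun x hx => hmax (ball_subset_closedBall hx)
  have hMb : M ≤ N1 * (K + S) := by
    rcases eq_or_lt_of_le hM0 with h | h
    · rw [← h]; positivity
    have hy1 : ‖y‖ < 1 := by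
      refine lt_of_le_of_ne (by simpa using hy) fun h1 => ?_
      rw [hM, h1] at h; norm_num at h
    -- On the ball of radius `3 * s` around `y` the weight is comparable to `s`; the smallness of
    -- `ε` then absorbs the maximum `M` of the weighted second derivative.
    set s := (1 - ‖y‖) / 8 with hs
    have hs0 : 0 < s := by rw [hs]; linarith [hy1]
    have hs1 : s ≤ 1 := by rw [hs]; linarith [norm_nonneg y]
    have hsub : ball y (3 * s) ⊆ ball (0 : Euc I) 1 :=
      ball_subset_ball' (by rw [dist_zero_right, hs]; linarith)
    have h1 := (hloc v hv (ball 0 1) y s ε S K M hs0 hs1 hε hεε1 hS hF hsub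
      (fun x hx => hK x (hsub hx)) (fun x hx => ?_)).1
    · have h2 : M = 64 * (s ^ 2 * ‖hes v y‖) := by rw [hM, hs]; ring
      have h3 : M ≤ 64 * (C * (K + ε * (S + M))) := by linarith
      have h4 : 128 * C * ε * M ≤ 1 * M := by gcongr
      have h5 : C * ε * S ≤ C * 1 * S := by gcongr
      rw [hN1]
      linarith
    · refine le_trans ?_ (hmax' x (hsub hx))
      gcongr
      have : ‖x‖ ≤ ‖y‖ + 3 * s := by
        have := norm_le_norm_add_norm_sub' x y
        have h2 := mem_ball.1 hx
        rw [dist_eq_norm] at h2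
        linarith
      rw [hs] at this ⊢
      linarith
  have hB : ∀ x ∈ ball (0 : Euc I) (1 / 2), ‖hes v x‖ ≤ 4 * (N1 * (K + S)) := by
    intro x hx
    rw [mem_ball_zero_iff] at hx
    have h1 := hmax' x (by rw [mem_ball_zero_iff]; linarith)
    have h2 : (1 / 2 : ℝ) ^ 2 ≤ (1 - ‖x‖) ^ 2 := by gcongr; linarith
    have h3 := mul_le_mul_of_nonneg_right h2 (norm_nonneg (hes v x))
    linarith
  have hKS : 0 ≤ K + S := by positivity
  refine ⟨?_, ?_, fun x hx => ?_⟩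
  · have h := grad_interp hv (x := 0) (s := 1 / 2) (by norm_num)
      (fun y hy => hK y (ball_subset_ball (by norm_num) hy)) hB
    have := mul_nonneg hC30.le hKS
    have := mul_nonneg hN0.le hKS
    linarith
  · have := hB 0 (mem_ball_self (by norm_num))
    have := mul_nonneg hC30.le hKS
    have := mul_nonneg hN0.le hKS
    linarith
  · rcases eq_or_ne x 0 with h0 | h0
    · subst h0; simp
    have hxp : 0 < ‖x‖ := norm_pos_iff.2 h0
    have hosc : ∀ p : Euc I, ‖p‖ ≤ 1 / 8 →
        ∫ z in ball (0 : Euc I) 1, ‖hes v (p + ‖x‖ • z) - hes v p‖ ^ 2 ≤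
          8 ^ 5 * (C * (1 + N1) ^ 2) * (‖x‖ * (K + S) ^ 2) := by
      intro p hp
      have hsub : ball p (3 * (1 / 8)) ⊆ ball (0 : Euc I) (1 / 2) :=
        ball_subset_ball' (by rw [dist_zero_right]; linarith)
      have hsub' : ball p (3 * (1 / 8)) ⊆ ball (0 : Euc I) 1 :=
        hsub.trans (ball_subset_ball (by norm_num))
      have h := (hloc v hv (ball 0 1) p (1 / 8) ε S K (N1 * (K + S)) (by norm_num) (by norm_num) hε
        hεε1 hS hF hsub' (fun x hx => hK x (hsub' hx)) (fun x hx => by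
          have := hB x (hsub hx)
          have := mul_nonneg hN0.le hKS
          linarith)).2 (8 * ‖x‖) (by positivity) (by linarith)
      rw [show (1 / 8 : ℝ) * (8 * ‖x‖) = ‖x‖ by ring] at h
      have h2 : (K + ε * (S + N1 * (K + S))) ^ 2 ≤ ((1 + N1) * (K + S)) ^ 2 := by
        gcongr
        have := mul_le_mul_of_nonneg_right hε1' (by positivity : 0 ≤ S + N1 * (K + S))
        linarith
      have h3 := mul_le_mul_of_nonneg_left h2 (by positivity : 0 ≤ C * (8 * ‖x‖))
      rw [mul_pow] at h3
      linarith
    have h := htc (hes v) cQ x 0 (8 ^ 5 * (C * (1 + N1) ^ 2) * (‖x‖ * (K + S) ^ 2)) h0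
      (by rw [sub_zero x]; exact hosc x hx)
      (by rw [sub_zero x]; exact hosc 0 (by rw [norm_zero]; norm_num))
    refine h.trans ?_
    have : 0 ≤ (8 + 8 * N1) * (‖x‖ * (K + S) ^ 2) := by positivity
    rw [hC3]
    linarith

/-! ### Derivatives at a maximum, and the barrier -/

lemma differentiableAt_pd1 {f : Euc I → ℝ} {x : Euc I} (hf : ContDiffAt ℝ 2 f x) (i : Fin I) :
    DifferentiableAt ℝ (pd1 f i) x :=
  (((hf.fderiv_right (m := 1) (by norm_num)).clm_apply contDiffAt_const).differentiableAt
    one_ne_zero)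

lemma eventually_differentiableAt {f : Euc I → ℝ} {x : Euc I} (hf : ContDiffAt ℝ 2 f x) :
    ∀ᶠ y in 𝓝 x, DifferentiableAt ℝ f y :=
  (hf.eventually (by simp)).mono fun _ hy => hy.differentiableAt (by norm_num)

lemma pd1_sub {f g : Euc I → ℝ} {x : Euc I} (hf : DifferentiableAt ℝ f x)
    (hg : DifferentiableAt ℝ g x) (i : Fin I) :
    pd1 (fun y => f y - g y) i x = pd1 f i x - pd1 g i x := by
  rw [pd1, fderiv_fun_sub hf hg]
  rfl

lemma pd2_sub {f g : Euc I → ℝ} {x : Euc I} (hf : ContDiffAt ℝ 2 f x) (hg : ContDiffAt ℝ 2 g x)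
    (i : Fin I) : pd2 (fun y => f y - g y) i x = pd2 f i x - pd2 g i x := by
  have h : pd1 (fun y => f y - g y) i =ᶠ[𝓝 x] fun y => pd1 f i y - pd1 g i y := by
    filter_upwards [eventually_differentiableAt hf, eventually_differentiableAt hg] with y h1 h2
    exact pd1_sub h1 h2 i
  rw [pd2, h.fderiv_eq, fderiv_fun_sub (differentiableAt_pd1 hf i) (differentiableAt_pd1 hg i)]
  rfl

/-- The first and second derivative tests, in terms of partial derivatives. -/
lemma pd_of_isLocalMax {h : Euc I → ℝ} {x : Euc I} (hc : ContDiffAt ℝ 2 h x) (hm : IsLocalMax h x)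
    (i : Fin I) : pd1 h i x = 0 ∧ pd2 h i x ≤ 0 := by
  have h0 : pd1 h i x = 0 := by rw [pd1, hm.fderiv_eq_zero]; rfl
  refine ⟨h0, ?_⟩
  by_contra! hpos
  set e : Euc I := EuclideanSpace.single i 1 with he
  set l : ℝ → Euc I := fun t => x + t • e with hl
  have hl0 : l 0 = x := by simp [hl]
  have hld : ∀ t, HasDerivAt l e t := fun t => by
    have := ((hasDerivAt_id t).smul_const e).const_add x
    rwa [one_smul] at this
  have hlc : Tendsto l (𝓝 0) (𝓝 x) := by
    have := (hld 0).continuousAt.tendsto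
    rwa [hl0] at this
  set f : ℝ → ℝ := fun t => h (l t) with hf
  have h1 : deriv f =ᶠ[𝓝 0] fun t => pd1 h i (l t) := by
    filter_upwards [hlc.eventually (eventually_differentiableAt hc)] with t ht
    exact (ht.hasFDerivAt.comp_hasDerivAt t (hld t)).deriv
  have hd0 : deriv f 0 = 0 := by rw [h1.eq_of_nhds, hl0, h0]
  have hd2 : deriv (deriv f) 0 = pd2 h i x := by
    rw [h1.deriv_eq]
    have h2 := (differentiableAt_pd1 hc i).hasFDerivAt
    rw [← hl0] at h2
    have := (h2.comp_hasDerivAt (0 : ℝ) (hld 0)).deriv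
    rw [hl0] at this
    exact this
  have hfc : ContinuousAt f 0 := by
    have : ContinuousAt h (l 0) := by rw [hl0]; exact hc.continuousAt
    exact this.comp (hld 0).continuousAt
  have hmin := isLocalMin_of_deriv_deriv_pos (by rw [hd2]; exact hpos) hd0 hfc
  have hmax : ∀ᶠ t in 𝓝 (0 : ℝ), f t ≤ f 0 := by
    have : ∀ᶠ t in 𝓝 (0 : ℝ), h (l t) ≤ h x := hlc.eventually hm
    filter_upwards [this] with t ht
    rw [hf]; simpa [hl0] using ht
  have hconst : f =ᶠ[𝓝 0] fun _ => f 0 := by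
    filter_upwards [hmin, hmax] with t h1 h2
    exact le_antisymm h2 h1
  have : deriv (deriv f) 0 = 0 := by
    have h3 : deriv f =ᶠ[𝓝 0] fun _ => 0 := by
      have := hconst.deriv
      simpa using this
    rw [h3.deriv_eq]; simp
  rw [hd2] at this
  exact hpos.ne' this

/-- The boundary barrier `A (1 - exp (-σ (R² - |x|²)))`. -/
def barrier (A σ R : ℝ) (x : Euc I) : ℝ := A - A * Real.exp (σ * (‖x‖ ^ 2 - R ^ 2))

lemma contDiff_barrier (A σ R : ℝ) : ContDiff ℝ 2 (barrier A σ R : Euc I → ℝ) := by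
  unfold barrier
  have : ContDiff ℝ 2 (fun x : Euc I => ‖x‖ ^ 2) := contDiff_norm_sq ℝ
  fun_prop

lemma hasFDerivAt_exp_norm_sq (σ R : ℝ) (x : Euc I) :
    HasFDerivAt (fun x : Euc I => Real.exp (σ * (‖x‖ ^ 2 - R ^ 2)))
      (Real.exp (σ * (‖x‖ ^ 2 - R ^ 2)) • (σ • ((2 : ℝ) • innerSL ℝ x))) x := by
  have h : HasFDerivAt (fun x : Euc I => ‖x‖ ^ 2) ((2 : ℝ) • innerSL ℝ x) x := by
    have := (hasStrictFDerivAt_norm_sq x).hasFDerivAt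
    rwa [ofNat_smul_eq_nsmul ℝ 2]
  exact ((h.sub_const _).const_mul σ).exp

lemma pd1_barrier (A σ R : ℝ) (i : Fin I) (x : Euc I) :
    pd1 (barrier A σ R) i x = -(2 * A * σ) * (Real.exp (σ * (‖x‖ ^ 2 - R ^ 2)) * x i) := by
  have h := ((hasFDerivAt_exp_norm_sq σ R x).const_mul A).const_sub A
  rw [pd1, show (barrier A σ R : Euc I → ℝ) =
    fun x => A - A * Real.exp (σ * (‖x‖ ^ 2 - R ^ 2)) from rfl, h.fderiv]
  simp [EuclideanSpace.inner_single_right]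
  ring

lemma pd2_barrier (A σ R : ℝ) (i : Fin I) (x : Euc I) :
    pd2 (barrier A σ R) i x =
      -(2 * A * σ) * (Real.exp (σ * (‖x‖ ^ 2 - R ^ 2)) * (1 + 2 * σ * x i ^ 2)) := by
  have hp : HasFDerivAt (fun y : Euc I => y i) (EuclideanSpace.proj i : Euc I →L[ℝ] ℝ) x :=
    (EuclideanSpace.proj i : Euc I →L[ℝ] ℝ).hasFDerivAt
  have h := ((hasFDerivAt_exp_norm_sq σ R x).mul hp).const_mul (-(2 * A * σ))
  rw [pd2, show pd1 (barrier A σ R : Euc I → ℝ) i = _ from funext (pd1_barrier A σ R i)]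
  have h2 := h.fderiv
  change fderiv ℝ (fun x : Euc I =>
    -(2 * A * σ) * (Real.exp (σ * (‖x‖ ^ 2 - R ^ 2)) * x i)) x = _ at h2
  rw [h2]
  simp [EuclideanSpace.inner_single_right]
  ring

/-! ### The maximum principle for the Bellman equation -/

/-- A function `φ` on the ball of radius `κ s L`, vanishing on the boundary and solving a Bellman
equation with the structure of the one under study: `s` plays the role of `√n`, `L` that of
`(log n) ^ m`, the second order part is `s²` times a fixed diagonal operator up to an error of
relative size `L / s`, and all coefficients are controlled by one constant `Γ`. -/
structure HJBData (γ κ Γ s L : ℝ) (c μ d : Fin I → ℝ) (g : Euc I → ℝ) (b e : Euc I → Fin I → ℝ)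
    (φ : Euc I → ℝ) : Prop where
  hs : 1 ≤ s
  hL : 1 ≤ L
  hΓ : 1 ≤ Γ
  small : (2 * Γ ^ 2 + Γ ^ 3) * L ≤ s
  c_nonneg : ∀ i, 0 ≤ c i
  c_le : ∀ i, c i ≤ Γ
  μ_nonneg : ∀ i, 0 ≤ μ i
  μ_le : ∀ i, μ i ≤ Γ
  d_ge : ∀ i, Γ⁻¹ ≤ d i
  d_le : ∀ i, d i ≤ Γ
  g_nonneg : ∀ x, 0 ≤ g x
  g_le : ∀ x, ‖x‖ ≤ κ * (s * L) → g x ≤ Γ * (s * L)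
  g_lip : ∀ x y, |g x - g y| ≤ Γ * ‖x - y‖
  b_le : ∀ x i, ‖x‖ ≤ κ * (s * L) → |b x i| ≤ Γ * (s * L)
  b_lip : ∀ x y i, |b x i - b y i| ≤ Γ * ‖x - y‖
  e_le : ∀ x i, ‖x‖ ≤ κ * (s * L) → |e x i| ≤ Γ * (s * L)
  e_lip : ∀ x y i, |e x i - e y i| ≤ Γ * ‖x - y‖
  cont : ContinuousOn φ (closedBall 0 (κ * (s * L)))
  smooth : ContDiffOn ℝ 2 φ (ball 0 (κ * (s * L)))
  bdry : ∀ x, ‖x‖ = κ * (s * L) → φ x = 0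
  eqn : ∀ x ∈ ball (0 : Euc I) (κ * (s * L)), γ * φ x =
    g x * (⨅ i, (c i + μ i * pd1 φ i x - (1 / 2) * μ i * pd2 φ i x))
      + ∑ i, b x i * pd1 φ i x + ∑ i, (s ^ 2 * d i + e x i) * pd2 φ i x

section maxPrinciple
variable {γ κ Γ s L : ℝ} {c μ d : Fin I → ℝ} {g : Euc I → ℝ} {b e : Euc I → Fin I → ℝ}
  {φ : Euc I → ℝ}

/-- The diffusion dominates the second order part of the control term. -/
lemma HJBData.ellip (h : HJBData γ κ Γ s L c μ d g b e φ) {x : Euc I}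
    (hx : ‖x‖ ≤ κ * (s * L)) (i : Fin I) (θ : ℝ) (hθ : θ ≤ g x * μ i / 2) :
    s ^ 2 / (2 * Γ) ≤ s ^ 2 * d i + e x i - θ := by
  have hs0 : 0 < s := by linarith [h.hs]
  have hL0 : 0 < L := by linarith [h.hL]
  have hΓ0 : 0 < Γ := by linarith [h.hΓ]
  have h1 : s ^ 2 * Γ⁻¹ ≤ s ^ 2 * d i := by gcongr; exact h.d_ge i
  have h2 := (abs_le.1 (h.e_le x i hx)).1
  have h3 : g x * μ i ≤ Γ * (s * L) * Γ :=
    mul_le_mul (h.g_le x hx) (h.μ_le i) (h.μ_nonneg i) (by positivity)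
  have h4 : s * ((2 * Γ ^ 2 + Γ ^ 3) * L) ≤ s * s := by gcongr; exact h.small
  have h5 : Γ * (s * L) + Γ * (s * L) * Γ / 2 ≤ s ^ 2 / (2 * Γ) := by
    rw [le_div_iff₀ (by positivity)]; nlinarith
  have h6 : s ^ 2 * Γ⁻¹ = s ^ 2 / (2 * Γ) + s ^ 2 / (2 * Γ) := by field_simp; norm_num
  linarith

/-- The equation as a linear differential inequality: the minimum is bounded by its entry `j`, and
the second derivatives by nonpositive numbers `q`. -/
lemma HJBData.upper (h : HJBData γ κ Γ s L c μ d g b e φ) {x : Euc I}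
    (hx : ‖x‖ < κ * (s * L)) (j : Fin I) (q : Fin I → ℝ) (hq : ∀ i, pd2 φ i x ≤ q i)
    (hq0 : ∀ i, q i ≤ 0) :
    γ * φ x ≤ g x * (c j + μ j * pd1 φ j x) + ∑ i, b x i * pd1 φ i x
      + s ^ 2 / (2 * Γ) * ∑ i, q i := by
  have h1 : (⨅ i, (c i + μ i * pd1 φ i x - (1 / 2) * μ i * pd2 φ i x)) ≤
      c j + μ j * pd1 φ j x - (1 / 2) * μ j * pd2 φ j x :=
    ciInf_le (Set.finite_range _).bddBelow j
  have h2 := mul_le_mul_of_nonneg_left h1 (h.g_nonneg x)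
  have h3 : ∑ i, (s ^ 2 * d i + e x i) * pd2 φ i x - g x * μ j / 2 * pd2 φ j x =
      ∑ i, (s ^ 2 * d i + e x i - if i = j then g x * μ i / 2 else 0) * pd2 φ i x := by
    simp_rw [sub_mul, Finset.sum_sub_distrib, ite_mul, zero_mul, Finset.sum_ite_eq', Finset.mem_univ,
      if_true]
  have h4 : ∑ i, (s ^ 2 * d i + e x i - if i = j then g x * μ i / 2 else 0) * pd2 φ i x ≤
      s ^ 2 / (2 * Γ) * ∑ i, q i := by
    rw [Finset.mul_sum]
    refine Finset.sum_le_sum fun i _ => ?_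
    have h0 : 0 ≤ g x * μ i / 2 := by
      have := mul_nonneg (h.g_nonneg x) (h.μ_nonneg i); linarith
    have hE := h.ellip hx.le i (if i = j then g x * μ i / 2 else 0)
      (by split_ifs <;> linarith)
    have hp : 0 ≤ s ^ 2 / (2 * Γ) := by
      have := h.hΓ
      positivity
    have k1 := mul_le_mul_of_nonneg_left (hq i) (hp.trans hE)
    have k2 := mul_le_mul_of_nonpos_right hE (hq0 i)
    linarith
  rw [h.eqn x (mem_ball_zero_iff.2 hx)]
  linarith

lemma HJBData.contDiffAt (h : HJBData γ κ Γ s L c μ d g b e φ) {x : Euc I}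
    (hx : ‖x‖ < κ * (s * L)) : ContDiffAt ℝ 2 φ x :=
  h.smooth.contDiffAt (isOpen_ball.mem_nhds (mem_ball_zero_iff.2 hx))

lemma isLocalMax_of_ball {f : Euc I → ℝ} {R : ℝ} {x : Euc I}
    (hm : ∀ y ∈ closedBall (0 : Euc I) R, f y ≤ f x) (hx : ‖x‖ < R) : IsLocalMax f x := by
  filter_upwards [isOpen_ball.mem_nhds (mem_ball_zero_iff.2 hx)] with y hy
  exact hm y (ball_subset_closedBall hy)

/-- The maximum principle, at an interior extremum or through the vanishing boundary values. -/
lemma HJBData.sup_bound (hI : 0 < I) (hγ : 0 < γ) (hκ : 0 < κ)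
    (h : HJBData γ κ Γ s L c μ d g b e φ) {x : Euc I} (hx : ‖x‖ ≤ κ * (s * L)) :
    0 ≤ φ x ∧ φ x ≤ Γ ^ 2 / γ * (s * L) := by
  have hs0 : 0 < s := by linarith [h.hs]
  have hL0 : 0 < L := by linarith [h.hL]
  have hΓ0 : 0 < Γ := by linarith [h.hΓ]
  have hR : 0 < κ * (s * L) := by positivity
  have hxm : x ∈ closedBall (0 : Euc I) (κ * (s * L)) := mem_closedBall_zero_iff.2 hx
  constructor
  · obtain ⟨y, hy, hmin⟩ := (isCompact_closedBall (0 : Euc I) (κ * (s * L))).exists_isMinOn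
      ⟨x, hxm⟩ h.cont
    refine le_trans ?_ (hmin hxm)
    rcases eq_or_lt_of_le (mem_closedBall_zero_iff.1 hy) with h1 | h1
    · rw [h.bdry y h1]
    have hc := h.contDiffAt h1
    have hloc : IsLocalMax (fun z => (0 : ℝ) - φ z) y :=
      isLocalMax_of_ball (fun z hz => by
        have : φ y ≤ φ z := hmin hz
        linarith) h1
    have hpd := pd_of_isLocalMax (contDiffAt_const.sub hc) hloc
    have z1 : ∀ i, pd1 (fun _ : Euc I => (0 : ℝ)) i = fun _ => 0 := fun i => by
      funext z; simp [pd1]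
    have z2 : ∀ i, pd2 (fun _ : Euc I => (0 : ℝ)) i y = 0 := fun i => by
      rw [pd2, z1]; simp
    have p0 : ∀ i, pd1 φ i y = 0 := fun i => by
      have := (hpd i).1
      rw [pd1_sub (differentiableAt_const _) (hc.differentiableAt (by norm_num)), z1] at this
      linarith
    have q0 : ∀ i, 0 ≤ pd2 φ i y := fun i => by
      have := (hpd i).2
      rw [pd2_sub contDiffAt_const hc, z2] at this
      linarith
    have heq := h.eqn y (mem_ball_zero_iff.2 h1)
    simp only [p0, mul_zero, add_zero, Finset.sum_const_zero] at heq
    have : Nonempty (Fin I) := ⟨⟨0, hI⟩⟩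
    -- The minimum over the controls is attained at some `j`. Ellipticity absorbs the corresponding
    -- second order part.
    obtain ⟨j, hj⟩ := exists_eq_ciInf_of_finite (f := fun i => c i - (1 / 2) * μ i * pd2 φ i y)
    rw [← hj] at heq
    have h3 : g y * μ j / 2 * pd2 φ j y ≤ ∑ i, (s ^ 2 * d i + e y i) * pd2 φ i y := by
      refine le_trans ?_ (Finset.single_le_sum (f := fun i => (s ^ 2 * d i + e y i) * pd2 φ i y)
        (fun i _ => mul_nonneg ?_ (q0 i)) (Finset.mem_univ j))
      · have hE := h.ellip h1.le j (g y * μ j / 2) le_rfl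
        have hp : 0 ≤ s ^ 2 / (2 * Γ) := by positivity
        exact mul_le_mul_of_nonneg_right (by linarith) (q0 j)
      · have hE := h.ellip h1.le i 0 (by
          have := mul_nonneg (h.g_nonneg y) (h.μ_nonneg i); linarith)
        have hp : 0 ≤ s ^ 2 / (2 * Γ) := by positivity
        linarith
    have h4 := mul_nonneg (h.g_nonneg y) (h.c_nonneg j)
    have h5 : 0 ≤ γ * φ y := by rw [heq]; linarith
    exact nonneg_of_mul_nonneg_right h5 hγ
  · obtain ⟨y, hy, hmax⟩ := (isCompact_closedBall (0 : Euc I) (κ * (s * L))).exists_isMaxOn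
      ⟨x, hxm⟩ h.cont
    refine le_trans (hmax hxm) ?_
    rcases eq_or_lt_of_le (mem_closedBall_zero_iff.1 hy) with h1 | h1
    · rw [h.bdry y h1]; positivity
    have hpd := pd_of_isLocalMax (h.contDiffAt h1) (isLocalMax_of_ball (fun z hz => hmax hz) h1)
    have h2 := h.upper h1 ⟨0, hI⟩ (fun _ => 0) (fun i => (hpd i).2) (fun _ => le_rfl)
    simp only [(hpd _).1, mul_zero, add_zero, Finset.sum_const_zero] at h2
    have h3 : g y * c ⟨0, hI⟩ ≤ Γ * (s * L) * Γ :=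
      mul_le_mul (h.g_le y h1.le) (h.c_le _) (h.c_nonneg _) (by positivity)
    rw [div_mul_eq_mul_div, le_div_iff₀ hγ]
    linarith

/-- Comparison with the barrier: away from the boundary, `φ` grows at most linearly. -/
lemma HJBData.boundary_bound (hI : 0 < I) (hγ : 0 < γ) (hκ : 0 < κ) :
    ∃ C : ℝ, 0 < C ∧ ∀ (s L : ℝ) (c μ d : Fin I → ℝ) (g : Euc I → ℝ) (b e : Euc I → Fin I → ℝ)
      (φ : Euc I → ℝ), HJBData γ κ Γ s L c μ d g b e φ →
      ∀ x : Euc I, ‖x‖ ≤ κ * (s * L) → φ x ≤ C * L ^ 2 * (κ * (s * L) - ‖x‖) := by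
  by_cases hΓ1 : 1 ≤ Γ
  swap
  · exact ⟨1, one_pos, fun s L c μ d g b e φ h => absurd h.hΓ hΓ1⟩
  have hΓ0 : 0 < Γ := by linarith
  set P := 2 * (Γ ^ 2 + I * Γ) with hP
  have hP0 : 0 < P := by positivity
  -- This `K` makes the barrier a strict supersolution near the sphere.
  set K := 1 + 2 / κ ^ 2 + Γ / κ ^ 2 * (γ + P * κ) with hK
  have hK1 : 1 ≤ K := by
    have : 0 ≤ 2 / κ ^ 2 + Γ / κ ^ 2 * (γ + P * κ) := by positivity
    linarith
  have hKκ : 2 ≤ K * κ ^ 2 := by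
    have : K * κ ^ 2 = κ ^ 2 + 2 + Γ * (γ + P * κ) := by rw [hK]; field_simp
    have : 0 ≤ κ ^ 2 + Γ * (γ + P * κ) := by positivity
    linarith
  have hKK : Γ * (γ + P * κ) < K * κ ^ 2 := by
    have : K * κ ^ 2 = κ ^ 2 + 2 + Γ * (γ + P * κ) := by rw [hK]; field_simp
    have : 0 ≤ κ ^ 2 := by positivity
    linarith
  refine ⟨4 * (Γ ^ 2 / γ) * K * (2 * κ), by positivity, fun s L c μ d g b e φ h x hx => ?_⟩
  have hs0 : 0 < s := by linarith [h.hs]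
  have hL0 : 0 < L := by linarith [h.hL]
  set R := κ * (s * L) with hR
  have hR0 : 0 < R := by positivity
  set A := 4 * (Γ ^ 2 / γ * (s * L)) with hA
  have hA0 : 0 < A := by positivity
  set σ := K / s ^ 2 with hσ
  have hσ0 : 0 < σ := by positivity
  have hxm : x ∈ closedBall (0 : Euc I) R := mem_closedBall_zero_iff.2 hx
  have hmain : φ x ≤ barrier A σ R x := by
    -- At a positive interior maximum of the difference with the barrier, the sup bound forces `y`
    -- to be near the sphere, where the second order term of the barrier dominates.
    obtain ⟨y, hy, hmax⟩ := (isCompact_closedBall (0 : Euc I) R).exists_isMaxOn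
      ⟨x, hxm⟩ (f := fun z => φ z - barrier A σ R z)
      (h.cont.sub (contDiff_barrier A σ R).continuous.continuousOn)
    have hmx : φ x - barrier A σ R x ≤ φ y - barrier A σ R y := hmax hxm
    by_contra! hcon
    have hpos : barrier A σ R y < φ y := by linarith
    have hyR := mem_closedBall_zero_iff.1 hy
    have h1 : ‖y‖ < R := by
      refine lt_of_le_of_ne hyR fun h1 => ?_
      rw [h.bdry y h1, barrier, h1] at hpos
      simp at hpos
    have hc := h.contDiffAt h1
    have hb : ContDiffAt ℝ 2 (barrier A σ R) y := (contDiff_barrier A σ R).contDiffAt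
    have hpd := pd_of_isLocalMax (hc.sub hb) (isLocalMax_of_ball (fun z hz => hmax hz) h1)
    set E := Real.exp (σ * (‖y‖ ^ 2 - R ^ 2)) with hE
    have hE0 : 0 < E := Real.exp_pos _
    have p0 : ∀ i, pd1 φ i y = -(2 * A * σ) * (E * y i) := fun i => by
      have := (hpd i).1
      rw [pd1_sub (hc.differentiableAt (by norm_num)) (hb.differentiableAt (by norm_num)),
        pd1_barrier] at this
      linarith
    have q0 : ∀ i, pd2 φ i y ≤ -(4 * A * σ ^ 2 * E) * y i ^ 2 := fun i => by
      have := (hpd i).2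
      rw [pd2_sub hc hb, pd2_barrier] at this
      have : 0 ≤ 2 * A * σ * E := by positivity
      linarith
    have hsup := (h.sup_bound hI hγ hκ hyR).2
    have hE34 : 3 / 4 < E := by
      rw [barrier, ← hE] at hpos
      have : A * (3 / 4) < A * E := by rw [hA] at hpos ⊢; linarith
      exact lt_of_mul_lt_mul_left this hA0.le
    have hy2 : R ^ 2 / 2 ≤ ‖y‖ ^ 2 := by
      by_contra! hlt
      have k1 : σ * (‖y‖ ^ 2 - R ^ 2) ≤ -1 := by
        have : 1 ≤ σ * (R ^ 2 / 2) := by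
          have e1 : σ * (R ^ 2 / 2) = K * κ ^ 2 * L ^ 2 / 2 := by rw [hσ, hR]; field_simp
          have e2 : 1 ≤ L ^ 2 := one_le_pow₀ h.hL
          have e3 : 2 * 1 ≤ K * κ ^ 2 * L ^ 2 := by gcongr
          rw [e1]; linarith
        have : σ * (R ^ 2 / 2) ≤ σ * (R ^ 2 - ‖y‖ ^ 2) := by gcongr; linarith
        linarith
      have k2 : E ≤ Real.exp (-1) := Real.exp_le_exp.2 k1
      have k3 : Real.exp (-1) ≤ 1 / 2 := by
        rw [Real.exp_neg, inv_eq_one_div]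
        exact one_div_le_one_div_of_le two_pos (by linarith [Real.add_one_le_exp 1])
      linarith
    set j : Fin I := ⟨0, hI⟩
    have hup := h.upper h1 j (fun i => -(4 * A * σ ^ 2 * E) * y i ^ 2) q0 (fun i => by
      have : 0 ≤ 4 * A * σ ^ 2 * E * y i ^ 2 := by positivity
      linarith)
    rw [← Finset.mul_sum, ← EuclideanSpace.real_norm_sq_eq] at hup
    have hpb : ∀ i, |pd1 φ i y| ≤ 2 * A * σ * E * R := fun i => by
      rw [p0, abs_mul, abs_neg, abs_of_pos (by positivity), abs_mul, abs_of_pos hE0]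
      have : |y i| ≤ R := (abs_coord_le y i).trans hyR
      calc 2 * A * σ * (E * |y i|) ≤ 2 * A * σ * (E * R) := by gcongr
        _ = _ := by ring
    set Z := 2 * A * σ * E * R with hZ
    have hZ0 : 0 < Z := by positivity
    have t1 : g y * (c j + μ j * pd1 φ j y) ≤ Γ * (s * L) * (Γ + Γ * Z) := by
      have : c j + μ j * pd1 φ j y ≤ Γ + Γ * Z := by
        have k2 : μ j * pd1 φ j y ≤ μ j * Z :=
          mul_le_mul_of_nonneg_left ((le_abs_self _).trans (hpb j)) (h.μ_nonneg j)
        have k3 : μ j * Z ≤ Γ * Z := mul_le_mul_of_nonneg_right (h.μ_le j) hZ0.le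
        linarith [h.c_le j]
      calc _ ≤ g y * (Γ + Γ * Z) := mul_le_mul_of_nonneg_left this (h.g_nonneg y)
        _ ≤ _ := mul_le_mul_of_nonneg_right (h.g_le y hyR) (by positivity)
    have t2 : ∑ i, b y i * pd1 φ i y ≤ I * (Γ * (s * L) * Z) := by
      calc _ ≤ ∑ _i : Fin I, Γ * (s * L) * Z := by
            refine Finset.sum_le_sum fun i _ => (le_abs_self _).trans ?_
            rw [abs_mul]
            exact mul_le_mul (h.b_le y i hyR) (hpb i) (abs_nonneg _) (by positivity)
        _ = _ := by simp
    have t3 : 0 ≤ γ * φ y := mul_nonneg hγ.le (h.sup_bound hI hγ hκ hyR).1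
    have t4 : s ^ 2 / (2 * Γ) * (4 * A * σ ^ 2 * E * (R ^ 2 / 2)) ≤
        s ^ 2 / (2 * Γ) * (4 * A * σ ^ 2 * E * ‖y‖ ^ 2) := by gcongr
    have t5 : Γ * (s * L) * Γ ≤ γ * (A * E) := by
      have e1 : Γ * (s * L) * Γ = γ * (A * (1 / 4)) := by rw [hA]; field_simp
      rw [e1]; gcongr; linarith
    have t6 : s ^ 2 / (2 * Γ) * (4 * A * σ ^ 2 * E * (R ^ 2 / 2)) = 
        (K ^ 2 * κ ^ 2 * L ^ 2 / Γ) * (A * E) := by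
      rw [hσ, hR]; field_simp; ring
    have t7 : Γ * (s * L) * (Γ * Z) + I * (Γ * (s * L) * Z) = (P * (K * κ * L ^ 2)) * (A * E) := by
      rw [hZ, hσ, hR, hP]; field_simp
    have t8 : (K ^ 2 * κ ^ 2 * L ^ 2 / Γ) * (A * E) ≤ (γ + P * (K * κ * L ^ 2)) * (A * E) := by
      linarith
    have t9 := le_of_mul_le_mul_right t8 (by positivity)
    have hKL : 1 ≤ K * L ^ 2 := one_le_mul_of_one_le_of_one_le hK1 (one_le_pow₀ h.hL)
    have t10 : γ + P * (K * κ * L ^ 2) ≤ (γ + P * κ) * (K * L ^ 2) := by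
      have := mul_le_mul_of_nonneg_left hKL hγ.le
      linarith
    have t11 : (γ + P * κ) * (K * L ^ 2) < K ^ 2 * κ ^ 2 * L ^ 2 / Γ := by
      rw [lt_div_iff₀ hΓ0]
      have := mul_lt_mul_of_pos_right hKK (by positivity : 0 < K * L ^ 2)
      linarith
    linarith
  refine hmain.trans ?_
  have h2 := Real.add_one_le_exp (σ * (‖x‖ ^ 2 - R ^ 2))
  have h3 : barrier A σ R x ≤ A * (σ * (R ^ 2 - ‖x‖ ^ 2)) := by
    rw [barrier]
    have := mul_le_mul_of_nonneg_left h2 hA0.le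
    linarith
  have h4 : A * (σ * (R ^ 2 - ‖x‖ ^ 2)) ≤ A * (σ * (2 * R * (R - ‖x‖))) := by
    gcongr
    nlinarith [norm_nonneg x, mul_nonneg (sub_nonneg.2 hx) (sub_nonneg.2 hx)]
  refine h3.trans (h4.trans (le_of_eq ?_))
  have : A * (σ * (2 * R * (R - ‖x‖))) = (A * σ * (2 * R)) * (R - ‖x‖) := by ring
  rw [this]
  congr 1
  rw [hA, hσ, hR]
  field_simp

end maxPrinciple

/-! ### Rescaling to a perturbation of the Poisson equation -/

/-- Two finite minima differ by at most the difference of some common entry. -/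
lemma exists_abs_ciInf_sub_le (hI : 0 < I) (f g : Fin I → ℝ) :
    ∃ j, |(⨅ i, f i) - ⨅ i, g i| ≤ |f j - g j| := by
  have : Nonempty (Fin I) := ⟨⟨0, hI⟩⟩
  obtain ⟨j, hj⟩ := exists_eq_ciInf_of_finite (f := f)
  obtain ⟨k, hk⟩ := exists_eq_ciInf_of_finite (f := g)
  have h1 : (⨅ i, f i) ≤ f k := ciInf_le (Set.finite_range _).bddBelow k
  have h2 : (⨅ i, g i) ≤ g j := ciInf_le (Set.finite_range _).bddBelow j
  rcases le_total (⨅ i, f i) (⨅ i, g i) with h | h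
  · refine ⟨j, ?_⟩
    rw [abs_of_nonpos (by linarith)]
    exact le_trans (by linarith) (neg_le_abs _)
  · refine ⟨k, ?_⟩
    rw [abs_of_nonneg (by linarith)]
    exact le_trans (by linarith) (le_abs_self _)

lemma abs_sum_le_card {f : Fin I → ℝ} {M : ℝ} (h : ∀ i, |f i| ≤ M) : |∑ i, f i| ≤ I * M := by
  refine (Finset.abs_sum_le_sum_abs _ _).trans ((Finset.sum_le_sum fun i _ => h i).trans ?_)
  simp

/-- A Bellman equation with small coefficients of small oscillation is a `FrozenEq`. -/
lemma frozenEq_of_eqn (hI : 0 < I) {v : Euc I → ℝ} {U : Set (Euc I)} {k Γ η S : ℝ}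
    {c p q : Fin I → ℝ} {g : Euc I → ℝ} {b e : Euc I → Fin I → ℝ} (hk : |k| ≤ η) (hS : 0 ≤ S)
    (hg : ∀ z ∈ U, |g z| ≤ Γ) (hgl : ∀ z ∈ U, ∀ w ∈ U, |g z - g w| ≤ Γ * ‖z - w‖)
    (hc : ∀ i, Γ * |c i| ≤ η * S) (hp : ∀ i, Γ * |p i| ≤ η) (hq : ∀ i, Γ * |q i| ≤ η)
    (hb : ∀ z ∈ U, ∀ i, |b z i| ≤ η) (hbl : ∀ z ∈ U, ∀ w ∈ U, ∀ i, |b z i - b w i| ≤ η * ‖z - w‖)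
    (hel : ∀ z ∈ U, ∀ w ∈ U, ∀ i, |e z i - e w i| ≤ η * ‖z - w‖) (he : ∀ z ∈ U, ∀ i, |e z i| ≤ η)
    (heq : ∀ z ∈ U, k * v z =
      g z * (⨅ i, (c i + p i * fderiv ℝ v z (ee i) - q i * hes v z (ee i) (ee i)))
        + ∑ i, b z i * fderiv ℝ v z (ee i) + lap v z + ∑ i, e z i * hes v z (ee i) (ee i)) :
    FrozenEq v ((1 + I) * η) S U := by
  have hη : 0 ≤ η := (abs_nonneg _).trans hk
  have hD : ∀ (D : Euc I →L[ℝ] ℝ) i, |D (ee i)| ≤ ‖D‖ := fun D i => by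
    have := D.le_opNorm (ee i)
    rwa [norm_ee, mul_one, Real.norm_eq_abs] at this
  intro x0 hx0
  have hΓ : 0 ≤ Γ := (abs_nonneg _).trans (hg x0 hx0)
  refine ⟨fun A => k * v x0 - g x0 * (⨅ i, (c i + p i * fderiv ℝ v x0 (ee i) - q i * A (ee i) (ee i)))
    - ∑ i, b x0 i * fderiv ℝ v x0 (ee i) - ∑ i, e x0 i * A (ee i) (ee i), fun A B => ?_, ?_,
    fun x hx => ?_⟩
  · obtain ⟨j, hj⟩ := exists_abs_ciInf_sub_le hI
      (fun i => c i + p i * fderiv ℝ v x0 (ee i) - q i * A (ee i) (ee i))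
      (fun i => c i + p i * fderiv ℝ v x0 (ee i) - q i * B (ee i) (ee i))
    set a1 := ⨅ i, (c i + p i * fderiv ℝ v x0 (ee i) - q i * A (ee i) (ee i))
    set b1 := ⨅ i, (c i + p i * fderiv ℝ v x0 (ee i) - q i * B (ee i) (ee i))
    have h1 : |g x0 * (a1 - b1)| ≤ η * ‖A - B‖ := by
      rw [abs_mul]
      have e1 : |c j + p j * fderiv ℝ v x0 (ee j) - q j * A (ee j) (ee j) -
          (c j + p j * fderiv ℝ v x0 (ee j) - q j * B (ee j) (ee j))| =
          |q j| * |(A - B) (ee j) (ee j)| := by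
        rw [← abs_mul, ← abs_neg]; congr 1
        simp only [_root_.sub_apply]; ring
      rw [e1] at hj
      calc _ ≤ Γ * (|q j| * ‖A - B‖) :=
            mul_le_mul (hg x0 hx0) (hj.trans (mul_le_mul_of_nonneg_left (abs_entry_le _ _ _)
              (abs_nonneg _))) (abs_nonneg _) hΓ
        _ = (Γ * |q j|) * ‖A - B‖ := by ring
        _ ≤ _ := mul_le_mul_of_nonneg_right (hq j) (norm_nonneg _)
    have h2 : |∑ i, e x0 i * (A - B) (ee i) (ee i)| ≤ I * (η * ‖A - B‖) :=
      abs_sum_le_card fun i => by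
        rw [abs_mul]
        exact mul_le_mul (he x0 hx0 i) (abs_entry_le _ _ _) (abs_nonneg _) hη
    have e2 : ∑ i, e x0 i * (A - B) (ee i) (ee i) =
        ∑ i, e x0 i * A (ee i) (ee i) - ∑ i, e x0 i * B (ee i) (ee i) := by
      rw [← Finset.sum_sub_distrib]
      exact Finset.sum_congr rfl fun i _ => by simp only [_root_.sub_apply]; ring
    rw [e2] at h2
    rw [abs_le] at h1 h2 ⊢
    constructor <;> linarith [h1.1, h1.2, h2.1, h2.2]
  · have : Nonempty (Fin I) := ⟨⟨0, hI⟩⟩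
    simp only [_root_.zero_apply, mul_zero, sub_zero, Finset.sum_const_zero]
    obtain ⟨j, hj⟩ := exists_eq_ciInf_of_finite (f := fun i => c i + p i * fderiv ℝ v x0 (ee i))
    rw [← hj]
    have h0 : |k * v x0| ≤ η * |v x0| := by
      rw [abs_mul]; exact mul_le_mul_of_nonneg_right hk (abs_nonneg _)
    have h1 : |g x0 * (c j + p j * fderiv ℝ v x0 (ee j))| ≤ η * S + η * ‖fderiv ℝ v x0‖ := by
      rw [abs_mul]
      calc _ ≤ Γ * (|c j| + |p j| * ‖fderiv ℝ v x0‖) := by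
            refine mul_le_mul (hg x0 hx0) ((abs_add_le _ _).trans ?_) (abs_nonneg _) hΓ
            rw [abs_mul]
            exact add_le_add le_rfl (mul_le_mul_of_nonneg_left (hD _ _) (abs_nonneg _))
        _ = Γ * |c j| + Γ * |p j| * ‖fderiv ℝ v x0‖ := by ring
        _ ≤ _ := add_le_add (hc j) (mul_le_mul_of_nonneg_right (hp j) (norm_nonneg _))
    have h2 : |∑ i, b x0 i * fderiv ℝ v x0 (ee i)| ≤ I * (η * ‖fderiv ℝ v x0‖) :=
      abs_sum_le_card fun i => by
        rw [abs_mul]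
        exact mul_le_mul (hb x0 hx0 i) (hD _ _) (abs_nonneg _) hη
    have n1 : 0 ≤ (I : ℝ) * η * S := by positivity
    have n2 : 0 ≤ (I : ℝ) * η * |v x0| := by positivity
    rw [abs_le] at h0 h1 h2 ⊢
    constructor <;> linarith [h0.1, h0.2, h1.1, h1.2, h2.1, h2.2]
  · have : Nonempty (Fin I) := ⟨⟨0, hI⟩⟩
    have hx' := heq x hx
    set D := fderiv ℝ v x
    set D0 := fderiv ℝ v x0
    set H := hes v x
    obtain ⟨j, hj⟩ := exists_abs_ciInf_sub_le hI (fun i => c i + p i * D (ee i) - q i * H (ee i) (ee i))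
      (fun i => c i + p i * D0 (ee i) - q i * H (ee i) (ee i))
    obtain ⟨l, hl⟩ := exists_eq_ciInf_of_finite (f := fun i => c i + p i * D (ee i) - q i * H (ee i) (ee i))
    set a1 := ⨅ i, (c i + p i * D (ee i) - q i * H (ee i) (ee i))
    set b1 := ⨅ i, (c i + p i * D0 (ee i) - q i * H (ee i) (ee i))
    have h0 : |k * (v x - v x0)| ≤ η * |v x - v x0| := by
      rw [abs_mul]; exact mul_le_mul_of_nonneg_right hk (abs_nonneg _)
    have h1 : |(g x - g x0) * a1| ≤ η * ‖x - x0‖ * (S + ‖D‖ + ‖H‖) := by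
      rw [abs_mul, ← hl]
      calc _ ≤ (Γ * ‖x - x0‖) * (|c l| + |p l| * ‖D‖ + |q l| * ‖H‖) := by
            refine mul_le_mul (hgl x hx x0 hx0) ((abs_sub _ _).trans
              (add_le_add ((abs_add_le _ _).trans (add_le_add le_rfl ?_)) ?_)) (abs_nonneg _)
              (by positivity)
            · rw [abs_mul]; exact mul_le_mul_of_nonneg_left (hD _ _) (abs_nonneg _)
            · rw [abs_mul]; exact mul_le_mul_of_nonneg_left (abs_entry_le _ _ _) (abs_nonneg _)
        _ = ‖x - x0‖ * (Γ * |c l| + Γ * |p l| * ‖D‖ + Γ * |q l| * ‖H‖) := by ring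
        _ ≤ ‖x - x0‖ * (η * S + η * ‖D‖ + η * ‖H‖) := by
            exact mul_le_mul_of_nonneg_left (add_le_add (add_le_add (hc l)
              (mul_le_mul_of_nonneg_right (hp l) (norm_nonneg _)))
              (mul_le_mul_of_nonneg_right (hq l) (norm_nonneg _))) (norm_nonneg _)
        _ = _ := by ring
    have h2 : |g x0 * (a1 - b1)| ≤ η * ‖D - D0‖ := by
      rw [abs_mul]
      have e1 : |c j + p j * D (ee j) - q j * H (ee j) (ee j) -
          (c j + p j * D0 (ee j) - q j * H (ee j) (ee j))| = |p j| * |(D - D0) (ee j)| := by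
        rw [← abs_mul]; congr 1
        simp only [_root_.sub_apply]; ring
      rw [e1] at hj
      calc _ ≤ Γ * (|p j| * ‖D - D0‖) :=
            mul_le_mul (hg x0 hx0) (hj.trans (mul_le_mul_of_nonneg_left (hD _ _) (abs_nonneg _)))
              (abs_nonneg _) hΓ
        _ = (Γ * |p j|) * ‖D - D0‖ := by ring
        _ ≤ _ := mul_le_mul_of_nonneg_right (hp j) (norm_nonneg _)
    have h3 : |∑ i, (b x i - b x0 i) * D (ee i)| ≤ I * (η * ‖x - x0‖ * ‖D‖) :=
      abs_sum_le_card fun i => by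
        rw [abs_mul]
        exact mul_le_mul (hbl x hx x0 hx0 i) (hD _ _) (abs_nonneg _) (by positivity)
    have h4 : |∑ i, b x0 i * (D - D0) (ee i)| ≤ I * (η * ‖D - D0‖) :=
      abs_sum_le_card fun i => by
        rw [abs_mul]
        exact mul_le_mul (hb x0 hx0 i) (hD _ _) (abs_nonneg _) hη
    have h5 : |∑ i, (e x i - e x0 i) * H (ee i) (ee i)| ≤ I * (η * ‖x - x0‖ * ‖H‖) :=
      abs_sum_le_card fun i => by
        rw [abs_mul]
        exact mul_le_mul (hel x hx x0 hx0 i) (abs_entry_le _ _ _) (abs_nonneg _) (by positivity)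
    have e3 : ∑ i, (b x i - b x0 i) * D (ee i) + ∑ i, b x0 i * (D - D0) (ee i) =
        ∑ i, b x i * D (ee i) - ∑ i, b x0 i * D0 (ee i) := by
      rw [← Finset.sum_sub_distrib, ← Finset.sum_add_distrib]
      exact Finset.sum_congr rfl fun i _ => by simp only [_root_.sub_apply]; ring
    have e4 : ∑ i, (e x i - e x0 i) * H (ee i) (ee i) =
        ∑ i, e x i * H (ee i) (ee i) - ∑ i, e x0 i * H (ee i) (ee i) := by
      rw [← Finset.sum_sub_distrib]
      exact Finset.sum_congr rfl fun i _ => by ring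
    have e5 : lap v x - (k * v x0 - g x0 * b1 - ∑ i, b x0 i * D0 (ee i)
        - ∑ i, e x0 i * H (ee i) (ee i)) = k * (v x - v x0) - (g x - g x0) * a1 - g x0 * (a1 - b1)
        - (∑ i, (b x i - b x0 i) * D (ee i)) - (∑ i, b x0 i * (D - D0) (ee i))
        - ∑ i, (e x i - e x0 i) * H (ee i) (ee i) := by
      rw [e4]
      linarith
    rw [e5]
    have n1 : 0 ≤ (I : ℝ) * η * ‖x - x0‖ * S := by positivity
    have n2 : 0 ≤ (1 + (I : ℝ)) * η * ‖x - x0‖ * |v x| := by positivity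
    have n3 : 0 ≤ (I : ℝ) * η * |v x - v x0| := by positivity
    have n4 : 0 ≤ η * ‖x - x0‖ * ‖D‖ := by positivity
    rw [abs_le] at h0 h1 h2 h3 h4 h5 ⊢
    constructor <;> linarith [h0.1, h0.2, h1.1, h1.2, h2.1, h2.2, h3.1, h3.2, h4.1, h4.2, h5.1, h5.2]

/-- The diagonal operator with entries `t`. -/
def diagL (t : Fin I → ℝ) : Euc I →L[ℝ] Euc I :=
  LinearMap.toContinuousLinearMap
    { toFun := fun x => WithLp.toLp 2 fun i => t i * x i
      map_add' := fun x y => by ext i; simp [mul_add]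
      map_smul' := fun a x => by ext i; simp [mul_left_comm] }

@[simp] lemma diagL_apply (t : Fin I → ℝ) (x : Euc I) (i : Fin I) : diagL t x i = t i * x i := rfl

lemma norm_diagL_le {t : Fin I → ℝ} {M : ℝ} (hM : 0 ≤ M) (h : ∀ i, |t i| ≤ M) (x : Euc I) :
    ‖diagL t x‖ ≤ M * ‖x‖ := by
  refine le_of_sq_le_sq ?_ (by positivity)
  rw [mul_pow, EuclideanSpace.real_norm_sq_eq, EuclideanSpace.real_norm_sq_eq, Finset.mul_sum]
  refine Finset.sum_le_sum fun i _ => ?_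
  rw [diagL_apply, mul_pow]
  exact mul_le_mul_of_nonneg_right (sq_le_sq' (abs_le.1 (h i)).1 (abs_le.1 (h i)).2) (sq_nonneg _)

lemma diagL_ee (t : Fin I → ℝ) (i : Fin I) : diagL t (ee i) = t i • ee i := by
  ext j
  by_cases hij : j = i <;> simp [ee, hij]

/-- A function that is `C²` on an open ball agrees on a smaller concentric ball with a function
that is `C²` on the whole space. -/
lemma exists_extension {φ : Euc I → ℝ} {R r : ℝ} (hr : 0 < r) (hrR : r < R)
    (h : ContDiffOn ℝ 2 φ (ball 0 R)) :
    ∃ f : Euc I → ℝ, ContDiff ℝ 2 f ∧ ∀ x ∈ ball (0 : Euc I) r, f x = φ x := by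
  obtain ⟨χ, hχ, -, h1, h0, -⟩ := exists_cutoff (I := I) hr (by linarith : r < (r + R) / 2)
  refine ⟨fun x => χ x * φ x, contDiff_iff_contDiffAt.2 fun x => ?_, fun x hx => ?_⟩
  · rcases lt_or_ge ‖x‖ R with hx | hx
    · exact hχ.contDiffAt.mul (h.contDiffAt (isOpen_ball.mem_nhds (mem_ball_zero_iff.2 hx)))
    · refine (contDiffAt_const (c := (0 : ℝ))).congr_of_eventuallyEq ?_
      have : ∀ᶠ y : Euc I in 𝓝 x, (r + R) / 2 < ‖y‖ :=
        continuous_norm.continuousAt.eventually_const_lt (by linarith)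
      filter_upwards [this] with y hy
      rw [h0 y hy.le, zero_mul]
  · show χ x * φ x = φ x
    rw [h1 x (mem_ball_zero_iff.1 hx).le, one_mul]

section application
variable {γ κ Γ s L : ℝ} {c μ d : Fin I → ℝ} {g : Euc I → ℝ} {b e : Euc I → Fin I → ℝ}
  {φ : Euc I → ℝ}

/-- In coordinates adapted to the leading operator, on a ball of radius comparable to `r ≪ s / L`,
the equation becomes a small perturbation of the Poisson equation. -/
lemma HJBData.frozenEq (hI : 0 < I) (hγ : 0 < γ) (h : HJBData γ κ Γ s L c μ d g b e φ)
    {x0 : Euc I} {r δ r1 : ℝ} (hr : 0 < r) (hδ : 0 < δ) (hδΓ : δ * Γ ≤ 1) (hrL : r * L ≤ δ * s)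
    (hLs : L ≤ δ * s) {f : Euc I → ℝ} (hf : ContDiff ℝ 2 f) (hr1 : r1 ≤ κ * (s * L))
    (hfφ : ∀ x ∈ ball (0 : Euc I) r1, f x = φ x)
    (hball : ∀ z ∈ ball (0 : Euc I) 1, x0 + diagL (fun i => r * Real.sqrt (d i)) z ∈ ball 0 r1) :
    FrozenEq (fun z => f (x0 + diagL (fun i => r * Real.sqrt (d i)) z))
      ((1 + I) * ((Γ ^ 3 + γ) * δ)) r (ball 0 1) := by
  have hΓ := h.hΓ
  have hs0 : 0 < s := by linarith [h.hs]
  have hL0 : 0 < L := by linarith [h.hL]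
  have hΓ0 : 0 < Γ := by linarith [h.hΓ]
  have hδ1 : δ ≤ 1 := by nlinarith
  set A := diagL (fun i => r * Real.sqrt (d i)) with hA
  have hd0 : ∀ i, 0 < d i := fun i => lt_of_lt_of_le (by positivity) (h.d_ge i)
  set t : Fin I → ℝ := fun i => Real.sqrt (d i) with ht
  have ht0 : ∀ i, 0 < t i := fun i => Real.sqrt_pos.2 (hd0 i)
  have ht2 : ∀ i, t i ^ 2 = d i := fun i => Real.sq_sqrt (hd0 i).le
  have htΓ : ∀ i, t i ≤ Γ := fun i => by
    refine Real.sqrt_le_iff.2 ⟨hΓ0.le, (h.d_le i).trans ?_⟩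
    nlinarith
  have htΓ' : ∀ i, 1 / t i ≤ Γ := fun i => by
    rw [div_le_iff₀ (ht0 i)]
    have : Γ⁻¹ ≤ t i := by
      refine Real.le_sqrt_of_sq_le (le_trans ?_ (h.d_ge i))
      have : Γ⁻¹ ≤ 1 := inv_le_one_of_one_le₀ hΓ
      have : 0 < Γ⁻¹ := by positivity
      nlinarith
    calc (1 : ℝ) = Γ * Γ⁻¹ := by field_simp
      _ ≤ _ := by gcongr
  have hdΓ' : ∀ i, 1 / d i ≤ Γ := fun i => by
    rw [div_le_iff₀ (hd0 i)]
    calc (1 : ℝ) = Γ * Γ⁻¹ := by field_simp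
      _ ≤ _ := by gcongr; exact h.d_ge i
  have hX : r / s ≤ δ := by
    rw [div_le_iff₀ hs0]; refine le_trans ?_ hrL; exact le_mul_of_one_le_right hr.le h.hL
  have hY : r * L / s ≤ δ := by rwa [div_le_iff₀ hs0]
  have hW : L / s ≤ δ := by rwa [div_le_iff₀ hs0]
  have hs1 : 1 / s ≤ 1 := by rw [div_le_iff₀ hs0, one_mul]; exact h.hs
  have hΓ3 : Γ ^ 2 ≤ Γ ^ 3 := by nlinarith [sq_nonneg Γ]
  have hη3 : Γ ^ 3 * δ ≤ (Γ ^ 3 + γ) * δ := by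
    have := mul_pos hγ hδ
    linarith
  have hη2 : Γ ^ 2 * δ ≤ (Γ ^ 3 + γ) * δ := by
    have := mul_le_mul_of_nonneg_right hΓ3 hδ.le
    linarith
  have hin : ∀ z ∈ ball (0 : Euc I) 1, ‖x0 + A z‖ < κ * (s * L) := fun z hz =>
    (mem_ball_zero_iff.1 (hball z hz)).trans_le hr1
  have hAn : ∀ z w : Euc I, ‖x0 + A z - (x0 + A w)‖ ≤ r * Γ * ‖z - w‖ := fun z w => by
    rw [add_sub_add_left_eq_sub, ← map_sub]
    refine norm_diagL_le (by positivity) (fun i => ?_) _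
    rw [abs_of_pos (mul_pos hr (ht0 i))]
    exact mul_le_mul_of_nonneg_left (htΓ i) hr.le
  refine frozenEq_of_eqn hI (k := γ * (r ^ 2 / s ^ 2)) (Γ := Γ * (s * L))
    (c := fun i => c i * (r ^ 2 / s ^ 2)) (p := fun i => μ i * (r / (s ^ 2 * t i)))
    (q := fun i => 1 / 2 * μ i / (s ^ 2 * d i)) (g := fun z => g (x0 + A z))
    (b := fun z i => b (x0 + A z) i * (r / (s ^ 2 * t i)))
    (e := fun z i => e (x0 + A z) i / (s ^ 2 * d i))
    ?_ hr.le (fun z hz => ?_) (fun z hz w hw => ?_) (fun i => ?_) (fun i => ?_) (fun i => ?_)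
    (fun z hz i => ?_) (fun z hz w hw i => ?_) (fun z hz w hw i => ?_) (fun z hz i => ?_)
    (fun z hz => ?_)
  · rw [abs_of_pos (by positivity)]
    have : r ^ 2 / s ^ 2 ≤ δ := by
      calc r ^ 2 / s ^ 2 = r / s * (r / s) := by ring
        _ ≤ δ * 1 := mul_le_mul hX (hX.trans hδ1) (by positivity) hδ.le
        _ = δ := mul_one _
    have := mul_le_mul_of_nonneg_left this hγ.le
    have : 0 ≤ Γ ^ 3 * δ := by positivity
    linarith
  · rw [abs_of_nonneg (h.g_nonneg _)]
    exact h.g_le _ (hin z hz).le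
  · refine (h.g_lip _ _).trans ?_
    have h1 : r * Γ ≤ s * L := by
      have : r * Γ ≤ δ * s * Γ := by
        gcongr; rwa [div_le_iff₀ hs0] at hX
      have : s * (δ * Γ) ≤ s * 1 := by gcongr
      have : s * 1 ≤ s * L := by gcongr; exact h.hL
      linarith
    calc Γ * ‖x0 + A z - (x0 + A w)‖ ≤ Γ * (r * Γ * ‖z - w‖) := by gcongr; exact hAn z w
      _ ≤ Γ * (s * L * ‖z - w‖) := by gcongr
      _ = _ := by ring
  · rw [abs_of_nonneg (mul_nonneg (h.c_nonneg i) (by positivity))]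
    calc Γ * (s * L) * (c i * (r ^ 2 / s ^ 2)) = Γ * c i * (r * L / s) * r := by field_simp
      _ ≤ Γ * Γ * δ * r := by gcongr; exact h.c_le i
      _ = Γ ^ 2 * δ * r := by ring
      _ ≤ _ := by gcongr
  · rw [abs_of_nonneg (mul_nonneg (h.μ_nonneg i) (div_nonneg hr.le (by have := ht0 i; positivity)))]
    have := ht0 i
    have := h.μ_nonneg i
    calc Γ * (s * L) * (μ i * (r / (s ^ 2 * t i))) = Γ * μ i * (1 / t i) * (r * L / s) := by field_simp
      _ ≤ Γ * Γ * Γ * δ := by gcongr; exacts [h.μ_le i, htΓ' i]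
      _ = Γ ^ 3 * δ := by ring
      _ ≤ _ := hη3
  · have := hd0 i
    have := h.μ_nonneg i
    rw [abs_of_nonneg (by positivity)]
    calc Γ * (s * L) * (1 / 2 * μ i / (s ^ 2 * d i)) = 1 / 2 * (Γ * μ i * (1 / d i) * (L / s)) := by
          field_simp
      _ ≤ 1 / 2 * (Γ * Γ * Γ * δ) := by gcongr; exacts [h.μ_le i, hdΓ' i]
      _ ≤ Γ ^ 3 * δ := by have : 0 ≤ Γ * Γ * Γ * δ := by positivity
                          linarith
      _ ≤ _ := hη3
  · have := ht0 i
    rw [abs_mul, abs_of_pos (by positivity : 0 < r / (s ^ 2 * t i))]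
    calc _ ≤ Γ * (s * L) * (r / (s ^ 2 * t i)) := by gcongr; exact h.b_le _ i (hin z hz).le
      _ = Γ * (1 / t i) * (r * L / s) := by field_simp
      _ ≤ Γ * Γ * δ := by gcongr; exact htΓ' i
      _ = Γ ^ 2 * δ := by ring
      _ ≤ _ := hη2
  · have := ht0 i
    rw [← sub_mul, abs_mul, abs_of_pos (by positivity : 0 < r / (s ^ 2 * t i))]
    calc _ ≤ Γ * (r * Γ * ‖z - w‖) * (r / (s ^ 2 * t i)) := by
          gcongr
          exact (h.b_lip _ _ i).trans (by gcongr; exact hAn z w)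
      _ = Γ * Γ * (1 / t i) * (r / s) * (r / s) * ‖z - w‖ := by field_simp
      _ ≤ Γ * Γ * Γ * δ * 1 * ‖z - w‖ := by gcongr; exacts [htΓ' i, hX.trans hδ1]
      _ = Γ ^ 3 * δ * ‖z - w‖ := by ring
      _ ≤ _ := by gcongr
  · have := hd0 i
    rw [← sub_div, abs_div, abs_of_pos (by positivity : 0 < s ^ 2 * d i)]
    calc _ ≤ Γ * (r * Γ * ‖z - w‖) / (s ^ 2 * d i) := by
          gcongr
          exact (h.e_lip _ _ i).trans (by gcongr; exact hAn z w)
      _ = Γ * Γ * (1 / d i) * (r / s) * (1 / s) * ‖z - w‖ := by field_simp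
      _ ≤ Γ * Γ * Γ * δ * 1 * ‖z - w‖ := by gcongr; exact hdΓ' i
      _ = Γ ^ 3 * δ * ‖z - w‖ := by ring
      _ ≤ _ := by gcongr
  · have := hd0 i
    rw [abs_div, abs_of_pos (by positivity : 0 < s ^ 2 * d i)]
    calc _ ≤ Γ * (s * L) / (s ^ 2 * d i) := by gcongr; exact h.e_le _ i (hin z hz).le
      _ = Γ * (1 / d i) * (L / s) := by field_simp
      _ ≤ Γ * Γ * δ := by gcongr; exact hdΓ' i
      _ = Γ ^ 2 * δ := by ring
      _ ≤ _ := hη2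
  · set x := x0 + A z with hx
    have hxr := hball z hz
    rw [← hx] at hxr
    have hcA := h.contDiffAt (hin z hz)
    have e0 : f x = φ x := hfφ x hxr
    have e1 : ∀ i, fderiv ℝ (fun z => f (x0 + A z)) z (ee i) = r * t i * pd1 φ i x := fun i => by
      rw [fderiv_comp_affine (hf.differentiable (by norm_num)), ContinuousLinearMap.comp_apply, hA,
        diagL_ee, map_smul, smul_eq_mul, ← hA, ← hx, fderiv_congr isOpen_ball hfφ hxr]
      rfl
    have e2 : ∀ i, hes (fun z => f (x0 + A z)) z (ee i) (ee i) = r ^ 2 * d i * pd2 φ i x := fun i => by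
      rw [hes_comp_affine hf, hA, diagL_ee, ← hA, ← hx, hes_congr isOpen_ball hfφ hxr]
      simp only [map_smul, _root_.smul_apply, smul_eq_mul]
      have h2 : Real.sqrt (d i) ^ 2 = d i := ht2 i
      rw [hes_apply hcA]
      have : pd2 φ i x = fderiv ℝ (fun y => fderiv ℝ φ y (ee i)) x (ee i) := rfl
      rw [this]
      linear_combination (r ^ 2 * fderiv ℝ (fun y => fderiv ℝ φ y (ee i)) x (ee i)) * h2
    have hne : ∀ i, t i ≠ 0 := fun i => (ht0 i).ne'
    have hdne : ∀ i, d i ≠ 0 := fun i => (hd0 i).ne'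
    have e3 : lap (fun z => f (x0 + A z)) z = ∑ i, r ^ 2 * d i * pd2 φ i x := by
      rw [lap, tr]
      exact Finset.sum_congr rfl fun i _ => e2 i
    simp only [e1, e2, e3]
    rw [e0]
    have i1 : ∀ i, c i * (r ^ 2 / s ^ 2) + μ i * (r / (s ^ 2 * t i)) * (r * t i * pd1 φ i x) -
        1 / 2 * μ i / (s ^ 2 * d i) * (r ^ 2 * d i * pd2 φ i x) =
        (r ^ 2 / s ^ 2) * (c i + μ i * pd1 φ i x - (1 / 2) * μ i * pd2 φ i x) := fun i => by
      have := hne i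
      have := hdne i
      field_simp
    have i2 : ∑ i, b x i * (r / (s ^ 2 * t i)) * (r * t i * pd1 φ i x) =
        (r ^ 2 / s ^ 2) * ∑ i, b x i * pd1 φ i x := by
      rw [Finset.mul_sum]
      refine Finset.sum_congr rfl fun i _ => ?_
      have := hne i
      field_simp
    have i3 : ∑ i, r ^ 2 * d i * pd2 φ i x + ∑ i, e x i / (s ^ 2 * d i) * (r ^ 2 * d i * pd2 φ i x) =
        (r ^ 2 / s ^ 2) * ∑ i, (s ^ 2 * d i + e x i) * pd2 φ i x := by
      rw [Finset.mul_sum, ← Finset.sum_add_distrib]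
      refine Finset.sum_congr rfl fun i _ => ?_
      have := hdne i
      field_simp
    simp only [i1]
    rw [← Real.mul_iInf_of_nonneg (by positivity : 0 ≤ r ^ 2 / s ^ 2), add_assoc, i3, i2]
    have := congrArg (fun y => r ^ 2 / s ^ 2 * y) (h.eqn x (mem_ball_zero_iff.2 (hin z hz)))
    linarith

end application

/-! ### Interior bounds at the scale of the distance to the boundary -/

/-- Transfer of a derivative bound through a linear change of variables `A` with right inverse
`B`. -/
lemma norm_le_of_comp {A B : Euc I →L[ℝ] Euc I} (hAB : ∀ x, A (B x) = x) {M : ℝ} (hM : 0 ≤ M)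
    (hB : ∀ x, ‖B x‖ ≤ M * ‖x‖) (D : Euc I →L[ℝ] ℝ) : ‖D‖ ≤ M * ‖D.comp A‖ := by
  refine D.opNorm_le_bound (by positivity) fun x => ?_
  calc ‖D x‖ = ‖(D.comp A) (B x)‖ := by rw [ContinuousLinearMap.comp_apply, hAB]
    _ ≤ ‖D.comp A‖ * (M * ‖x‖) := (ContinuousLinearMap.le_opNorm _ _).trans (by gcongr; exact hB x)
    _ = _ := by ring

/-- The analogue of `norm_le_of_comp` for second derivatives. -/
lemma norm_le_of_comp₂ {A B : Euc I →L[ℝ] Euc I} (hAB : ∀ x, A (B x) = x) {M : ℝ} (hM : 0 ≤ M)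
    (hB : ∀ x, ‖B x‖ ≤ M * ‖x‖) {H H' : Euc I →L[ℝ] Euc I →L[ℝ] ℝ}
    (h : ∀ u w, H' u w = H (A u) (A w)) : ‖H‖ ≤ M ^ 2 * ‖H'‖ := by
  refine H.opNorm_le_bound₂ (by positivity) fun x y => ?_
  calc ‖H x y‖ = ‖H' (B x) (B y)‖ := by rw [h, hAB, hAB]
    _ ≤ ‖H'‖ * (M * ‖x‖) * (M * ‖y‖) := (H'.le_opNorm₂ _ _).trans (by gcongr; exacts [hB x, hB y])
    _ = _ := by ring

/-- Interior bounds for the first two derivatives and the `1/2`-Hölder continuity of the second one,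
at the scale `w` given by the distance to the boundary, capped at `s / L`. -/
lemma HJBData.local_bounds (hI : 0 < I) {γ κ Γ : ℝ} (hγ : 0 < γ) (hκ : 0 < κ) (hΓ : 1 ≤ Γ) :
    ∃ C δ : ℝ, 0 < C ∧ 0 < δ ∧ δ ≤ 1 / 2 ∧ ∀ (s L : ℝ) (c μ d : Fin I → ℝ) (g : Euc I → ℝ)
      (b e : Euc I → Fin I → ℝ) (φ : Euc I → ℝ), HJBData γ κ Γ s L c μ d g b e φ → L ≤ δ * s →
      ∀ (x0 : Euc I) (w : ℝ), ‖x0‖ < κ * (s * L) → w = min (κ * (s * L) - ‖x0‖) (s / L) →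
      ‖fderiv ℝ φ x0‖ ≤ C * L ^ 2 ∧ w * ‖hes φ x0‖ ≤ C * L ^ 2 ∧
      ∀ x : Euc I, ‖x - x0‖ ≤ δ * w →
        w ^ 3 * ‖hes φ x - hes φ x0‖ ^ 2 ≤ C * L ^ 4 * ‖x - x0‖ := by
  have hΓ0 : 0 < Γ := by linarith
  obtain ⟨C1, ε0, hC1, hε0, hε01, hint⟩ := interior_est hI
  obtain ⟨C2, hC2, hbd⟩ := HJBData.boundary_bound (Γ := Γ) hI hγ hκ
  set δ1 := min (1 / (2 * Γ)) (ε0 / ((1 + I) * (Γ ^ 3 + γ))) with hδ1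
  have hδ0 : 0 < δ1 := lt_min (by positivity) (by positivity)
  have hδΓ : δ1 * Γ ≤ 1 / 2 := by
    calc δ1 * Γ ≤ 1 / (2 * Γ) * Γ := by gcongr; exact min_le_left _ _
      _ = 1 / 2 := by field_simp
  have hδε : (1 + I) * ((Γ ^ 3 + γ) * δ1) ≤ ε0 := by
    calc (1 + I) * ((Γ ^ 3 + γ) * δ1)
        ≤ (1 + I) * ((Γ ^ 3 + γ) * (ε0 / ((1 + I) * (Γ ^ 3 + γ)))) := by gcongr; exact min_le_right _ _
      _ = ε0 := by field_simp
  have hδ1' : δ1 ≤ 1 / 2 := by nlinarith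
  set q := Γ / δ1 with hq
  have hq0 : 0 < q := by positivity
  set C4 := 2 * (C2 + Γ ^ 2 / γ) + 1 with hC4
  have hC40 : 0 < C4 := by positivity
  have hδδ : δ1 / (8 * Γ) ≤ δ1 := div_le_self hδ0.le (by linarith)
  refine ⟨q * (C1 * C4) + q ^ 2 * (C1 * C4) + q ^ 5 * (C1 * C4 ^ 2), δ1 / (8 * Γ), by positivity,
    by positivity, hδδ.trans hδ1', fun s L c μ d g b e φ h hLs x0 w hx0 hw => ?_⟩
  have hs0 : 0 < s := by linarith [h.hs]
  have hL0 : 0 < L := by linarith [h.hL]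
  have hL2 : 1 ≤ L ^ 2 := one_le_pow₀ h.hL
  set R := κ * (s * L) with hR
  have hw1 : w ≤ R - ‖x0‖ := hw ▸ min_le_left _ _
  have hw2 : w ≤ s / L := hw ▸ min_le_right _ _
  have hw0 : 0 < w := by rw [hw]; exact lt_min (by linarith) (by positivity)
  -- The radius of the rescaling is a small fraction of `w`.
  set r := δ1 * w with hr
  have hr0 : 0 < r := by positivity
  have hrw : r ≤ w := by rw [hr]; exact mul_le_of_le_one_left hw0.le (by linarith)
  have hd0 : ∀ i, 0 < d i := fun i => lt_of_lt_of_le (by positivity) (h.d_ge i)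
  have hsd0 : ∀ i, 0 < Real.sqrt (d i) := fun i => Real.sqrt_pos.2 (hd0 i)
  set A := diagL (fun i => r * Real.sqrt (d i)) with hA
  set B := diagL (fun i => 1 / (r * Real.sqrt (d i))) with hB
  have hAB : ∀ x, A (B x) = x := fun x => by
    ext i
    rw [hA, hB, diagL_apply, diagL_apply]
    have := hsd0 i
    field_simp
  have hAn : ∀ z, ‖A z‖ ≤ r * Γ * ‖z‖ := by
    refine norm_diagL_le (by positivity) fun i => ?_
    rw [abs_of_pos (mul_pos hr0 (hsd0 i))]
    refine mul_le_mul_of_nonneg_left (Real.sqrt_le_iff.2 ⟨hΓ0.le, (h.d_le i).trans ?_⟩) hr0.le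
    nlinarith
  have hBn : ∀ z, ‖B z‖ ≤ q / w * ‖z‖ := by
    refine norm_diagL_le (by positivity) fun i => ?_
    rw [abs_of_pos (by have := hsd0 i; positivity)]
    have h1 : Γ⁻¹ ≤ Real.sqrt (d i) := by
      refine Real.le_sqrt_of_sq_le (le_trans ?_ (h.d_ge i))
      have : Γ⁻¹ ≤ 1 := inv_le_one_of_one_le₀ hΓ
      have : 0 < Γ⁻¹ := by positivity
      nlinarith
    calc 1 / (r * Real.sqrt (d i)) ≤ 1 / (r * Γ⁻¹) := by gcongr
      _ = q / w := by rw [hq, hr]; field_simp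
  have hrΓ : r * Γ ≤ (R - ‖x0‖) / 2 := by
    calc r * Γ = δ1 * Γ * w := by rw [hr]; ring
      _ ≤ 1 / 2 * (R - ‖x0‖) := by gcongr
      _ = _ := by ring
  set r1 := R - (R - ‖x0‖) / 2 with hr1
  have hr1R : r1 < R := by rw [hr1]; linarith
  have hr10 : 0 < r1 := by rw [hr1]; linarith [norm_nonneg x0]
  have hdist : ∀ z ∈ ball (0 : Euc I) 1, ‖A z‖ < (R - ‖x0‖) / 2 := fun z hz => by
    have hz1 := mem_ball_zero_iff.1 hz
    calc ‖A z‖ ≤ r * Γ * ‖z‖ := hAn z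
      _ < r * Γ * 1 := by gcongr
      _ ≤ _ := by linarith
  have hball : ∀ z ∈ ball (0 : Euc I) 1, x0 + A z ∈ ball 0 r1 := fun z hz => by
    rw [mem_ball_zero_iff]
    have := norm_add_le x0 (A z)
    have := hdist z hz
    linarith
  obtain ⟨f, hf, hfφ⟩ := exists_extension hr10 hr1R h.smooth
  have hF := h.frozenEq hI hγ (δ := δ1) hr0 hδ0 (by linarith) (by
    calc r * L = δ1 * (w * L) := by rw [hr]; ring
      _ ≤ δ1 * s := by gcongr; rwa [le_div_iff₀ hL0] at hw2) (hLs.trans (by gcongr)) hf hr1R.le hfφ hball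
  rw [← hA] at hF
  have hv := contDiff_comp_affine hf x0 A
  have hK : ∀ z ∈ ball (0 : Euc I) 1, |f (x0 + A z)| ≤ 2 * (C2 + Γ ^ 2 / γ) * L ^ 2 * w := fun z hz => by
    have hxr := mem_ball_zero_iff.1 (hball z hz)
    have hxR : ‖x0 + A z‖ ≤ R := by linarith
    obtain ⟨p0, p1⟩ := h.sup_bound hI hγ hκ hxR
    rw [hfφ _ (hball z hz), abs_of_nonneg p0]
    have n1 : 0 ≤ C2 * L ^ 2 * w := by positivity
    have n2 : 0 ≤ Γ ^ 2 / γ * L ^ 2 * w := by positivity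
    rcases min_choice (R - ‖x0‖) (s / L) with hc | hc
    · have p2 := hbd s L c μ d g b e φ h _ hxR
      have p3 : R - ‖x0 + A z‖ ≤ 2 * w := by
        have k1 := norm_sub_le (x0 + A z) (A z)
        rw [add_sub_cancel_right] at k1
        have k2 := hdist z hz
        rw [hw, hc]
        linarith
      have p4 := mul_le_mul_of_nonneg_left p3 (by positivity : 0 ≤ C2 * L ^ 2)
      linarith
    · have p3 : s * L = L ^ 2 * w := by rw [hw, hc]; field_simp
      rw [p3] at p1
      linarith
  obtain ⟨g1, g2, g3⟩ := hint _ hv _ r _ (by positivity) hδε hr0.le hF hK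
  have hKS : 2 * (C2 + Γ ^ 2 / γ) * L ^ 2 * w + r ≤ C4 * L ^ 2 * w := by
    have : 1 * w ≤ L ^ 2 * w := by gcongr
    rw [hC4]; linarith
  have hKS0 : 0 ≤ 2 * (C2 + Γ ^ 2 / γ) * L ^ 2 * w + r := by positivity
  have hfd : ∀ z ∈ ball (0 : Euc I) 1, ∀ u v, hes (fun z => f (x0 + A z)) z u v =
      hes φ (x0 + A z) (A u) (A v) := fun z hz u v => by
    rw [hes_comp_affine hf, hes_congr isOpen_ball hfφ (hball z hz)]
  have h0m : (0 : Euc I) ∈ ball (0 : Euc I) 1 := mem_ball_self one_pos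
  have hfd0 := hfd 0 h0m
  simp only [map_zero, add_zero] at hfd0
  have n1 : 0 ≤ q * (C1 * C4) * L ^ 2 := by positivity
  have n2 : 0 ≤ q ^ 2 * (C1 * C4) * L ^ 2 := by positivity
  have n3 : 0 ≤ q ^ 5 * (C1 * C4 ^ 2) * L ^ 2 := by positivity
  refine ⟨?_, ?_, fun x hx => ?_⟩
  · have e1 : fderiv ℝ (fun z => f (x0 + A z)) 0 = (fderiv ℝ φ x0).comp A := by
      have hb0 := hball 0 h0m
      rw [fderiv_comp_affine (hf.differentiable (by norm_num)), fderiv_congr isOpen_ball hfφ hb0,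
        map_zero, add_zero]
    have e2 := norm_le_of_comp hAB (by positivity : 0 ≤ q / w) hBn (fderiv ℝ φ x0)
    rw [← e1] at e2
    calc ‖fderiv ℝ φ x0‖ ≤ q / w * (C1 * (C4 * L ^ 2 * w)) :=
          e2.trans (mul_le_mul_of_nonneg_left (g1.trans (by gcongr)) (by positivity))
      _ = q * (C1 * C4) * L ^ 2 := by field_simp
      _ ≤ _ := by linarith
  · have e2 := norm_le_of_comp₂ hAB (by positivity : 0 ≤ q / w) hBn hfd0
    calc w * ‖hes φ x0‖ ≤ w * ((q / w) ^ 2 * (C1 * (C4 * L ^ 2 * w))) :=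
          mul_le_mul_of_nonneg_left (e2.trans (mul_le_mul_of_nonneg_left (g2.trans (by gcongr))
            (by positivity))) hw0.le
      _ = q ^ 2 * (C1 * C4) * L ^ 2 := by field_simp
      _ ≤ _ := by linarith
  · set z := B (x - x0) with hz
    have hzn : ‖z‖ ≤ q / w * ‖x - x0‖ := hBn _
    have hz8 : ‖z‖ ≤ 1 / 8 := by
      calc ‖z‖ ≤ q / w * (δ1 / (8 * Γ) * w) := hzn.trans (by gcongr)
        _ = 1 / 8 := by rw [hq]; field_simp
    have hzx : x0 + A z = x := by rw [hz, hAB, add_sub_cancel]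
    have hz1 : z ∈ ball (0 : Euc I) 1 := by rw [mem_ball_zero_iff]; linarith
    have hfz := hfd z hz1
    rw [hzx] at hfz
    have e2 := norm_le_of_comp₂ hAB (by positivity : 0 ≤ q / w) hBn
      (H := hes φ x - hes φ x0)
      (H' := hes (fun z => f (x0 + A z)) z - hes (fun z => f (x0 + A z)) 0)
      (fun u v => by simp only [_root_.sub_apply, hfz, hfd0])
    have e3 := g3 z hz8
    have e4 : ‖hes (fun z => f (x0 + A z)) z - hes (fun z => f (x0 + A z)) 0‖ ^ 2 ≤
        C1 * (q / w * ‖x - x0‖) * (C4 * L ^ 2 * w) ^ 2 :=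
      e3.trans (by gcongr)
    calc w ^ 3 * ‖hes φ x - hes φ x0‖ ^ 2
        ≤ w ^ 3 * ((q / w) ^ 2 *
          ‖hes (fun z => f (x0 + A z)) z - hes (fun z => f (x0 + A z)) 0‖) ^ 2 := by gcongr
      _ = w ^ 3 * (q / w) ^ 4 *
          ‖hes (fun z => f (x0 + A z)) z - hes (fun z => f (x0 + A z)) 0‖ ^ 2 := by ring
      _ ≤ w ^ 3 * (q / w) ^ 4 * (C1 * (q / w * ‖x - x0‖) * (C4 * L ^ 2 * w) ^ 2) := by gcongr
      _ = (q ^ 5 * (C1 * C4 ^ 2)) * L ^ 4 * ‖x - x0‖ := by field_simp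
      _ ≤ _ := by
        have k1 : q ^ 5 * (C1 * C4 ^ 2) ≤
          q * (C1 * C4) + q ^ 2 * (C1 * C4) + q ^ 5 * (C1 * C4 ^ 2) := by
          have : 0 ≤ q * (C1 * C4) := by positivity
          have : 0 ≤ q ^ 2 * (C1 * C4) := by positivity
          linarith
        gcongr

/-! ### The data of the queueing problem -/

/-- Under the heavy-traffic condition the total drift `lam * S - n` is of order `√n`; the drift
coefficients `a i * lam - μ i * ν i * n` are fixed multiples of it. -/
lemma drift_bound {lam S β n : ℝ} (hn : 1 ≤ n) (hy : 0 < lam * S)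
    (h : n = lam * S + β * √(lam * S)) :
    |lam * S - n| ≤ |β| * √(2 + 4 * β ^ 2) * √n := by
  set y := lam * S with hyd
  have hs : √y ^ 2 = y := Real.sq_sqrt hy.le
  have hy2 : y ≤ (2 + 4 * β ^ 2) * n := by
    have h1 : -(β * √y) ≤ y / 2 + β ^ 2 / 2 := by
      nlinarith [sq_nonneg (√y + β)]
    nlinarith [sq_nonneg β]
  have h2 : lam * S - n = -(β * √y) := by linarith
  calc |y - n| = |β| * √y := by
        rw [h2, abs_neg, abs_mul, abs_of_nonneg (Real.sqrt_nonneg y)]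
    _ ≤ |β| * √((2 + 4 * β ^ 2) * n) := by gcongr
    _ = _ := by rw [Real.sqrt_mul (by positivity)]; ring

/-- The HJB equation of the queueing problem satisfies the structural hypotheses `HJBData` with
`s = √n` and `L = (log n) ^ m`, with a constant `Γ` that does not depend on `n`. -/
lemma exists_data (hI : 0 < I) (μ a c : Fin I → ℝ) (γ β : ℝ)
    (hμ : ∀ i, 0 < μ i) (ha : ∀ i, 0 < a i) (hc : ∀ i, 0 < c i)
    (lam : ℕ → ℝ)
    (hlam : ∀ n : ℕ, 1 ≤ n → 0 < lam n ∧
      (n : ℝ) = lam n * (∑ i, a i / μ i)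
        + β * Real.sqrt (lam n * (∑ i, a i / μ i)))
    (κ : ℝ) (hκ : 0 < κ) (m : ℕ) :
    ∃ Γ : ℝ, 1 ≤ Γ ∧ ∀ n : ℕ, 1 ≤ n → 1 ≤ Real.log n ^ m →
      (2 * Γ ^ 2 + Γ ^ 3) * Real.log n ^ m ≤ √(n : ℝ) →
      ∀ φ : Euc I → ℝ,
        IsSolGen μ a c γ (lam n) n (Rad κ m n) (fun y => max y 0) φ →
        HJBData γ κ Γ (√(n : ℝ)) (Real.log n ^ m) c μ (fun i => a i / (∑ j, a j / μ j))
          (fun x => max (∑ j, x j) 0)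
          (fun x i => (a i * lam n - μ i * nu μ a i * n) - μ i * x i)
          (fun x i => ((a i * lam n - μ i * nu μ a i * n) + μ i * x i) / 2) φ := by
  have : Nonempty (Fin I) := ⟨⟨0, hI⟩⟩
  set S : ℝ := ∑ j, a j / μ j with hS
  have hS0 : 0 < S := Finset.sum_pos (fun i _ => div_pos (ha i) (hμ i)) univ_nonempty
  set d : Fin I → ℝ := fun i => a i / S with hd
  have hd0 : ∀ i, 0 < d i := fun i => div_pos (ha i) hS0
  set B : ℝ := |β| * √(2 + 4 * β ^ 2) with hB
  have hB0 : 0 ≤ B := by positivity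
  set D := ∑ i, d i with hD
  set M := ∑ i, μ i with hM
  set C := ∑ i, c i with hC
  set E := ∑ i, (d i)⁻¹ with hE
  have hdD : ∀ i, d i ≤ D := fun i =>
    Finset.single_le_sum (fun j _ => (hd0 j).le) (Finset.mem_univ i)
  have hμM : ∀ i, μ i ≤ M := fun i =>
    Finset.single_le_sum (fun j _ => (hμ j).le) (Finset.mem_univ i)
  have hcC : ∀ i, c i ≤ C := fun i =>
    Finset.single_le_sum (fun j _ => (hc j).le) (Finset.mem_univ i)
  have hdE : ∀ i, (d i)⁻¹ ≤ E := fun i =>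
    Finset.single_le_sum (f := fun i => (d i)⁻¹)
      (fun j _ => (inv_pos.2 (hd0 j)).le) (Finset.mem_univ i)
  have hD0 : 0 ≤ D := Finset.sum_nonneg fun i _ => (hd0 i).le
  have hM0 : 0 ≤ M := Finset.sum_nonneg fun i _ => (hμ i).le
  have hC0 : 0 ≤ C := Finset.sum_nonneg fun i _ => (hc i).le
  have hE0 : 0 ≤ E := Finset.sum_nonneg fun i _ => (inv_pos.2 (hd0 i)).le
  have hI0 : (0 : ℝ) ≤ I := by positivity
  have hDB : 0 ≤ D * B := by positivity
  have hMk : 0 ≤ M * κ := by positivity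
  have hIk : 0 ≤ I * κ := by positivity
  set Γ : ℝ := 1 + I + I * κ + D + M + C + E + (D * B + M * κ) with hΓ
  refine ⟨Γ, by linarith, fun n hn hL hsm φ hφ => ?_⟩
  obtain ⟨⟨K, hK⟩, hcd, hbd, heq⟩ := hφ
  set s := √(n : ℝ) with hs
  set L := Real.log n ^ m with hLd
  have hRad : Rad κ m n = κ * (s * L) := by rw [Rad, mul_assoc]
  rw [hRad] at hK hcd hbd heq
  have hn1 : (1 : ℝ) ≤ n := by exact_mod_cast hn
  have hs1 : 1 ≤ s := Real.one_le_sqrt.2 hn1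
  have hs2 : s ^ 2 = n := Real.sq_sqrt (by positivity)
  have hsL : 0 ≤ s * L := by positivity
  have hsL' : s ≤ s * L := le_mul_of_one_le_right (by positivity) hL
  have hμν : ∀ i, μ i * nu μ a i = d i := fun i => by
    have := (hμ i).ne'
    simp only [nu, hd]; rw [← hS]; field_simp
  have hdr : ∀ i, |a i * lam n - μ i * nu μ a i * n| ≤ D * B * (s * L) := fun i => by
    have e1 : a i * lam n - μ i * nu μ a i * n = d i * (lam n * S - n) := by
      rw [hμν, hd]; field_simp
    rw [e1, abs_mul, abs_of_pos (hd0 i)]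
    calc d i * |lam n * S - n| ≤ D * (B * s) := by
          gcongr
          · exact hdD i
          · exact drift_bound hn1 (mul_pos (hlam n hn).1 hS0) (hlam n hn).2
      _ = D * B * s := by ring
      _ ≤ _ := by gcongr
  have hxb : ∀ (x : Euc I) i, ‖x‖ ≤ κ * (s * L) → |μ i * x i| ≤ M * κ * (s * L) := fun x i hx => by
    rw [abs_mul, abs_of_pos (hμ i), mul_assoc]
    exact mul_le_mul (hμM i) ((abs_coord_le x i).trans hx) (abs_nonneg _) hM0
  have hxl : ∀ (x y : Euc I) i, |μ i * x i - μ i * y i| ≤ Γ * ‖x - y‖ := fun x y i => by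
    rw [← mul_sub, abs_mul, abs_of_pos (hμ i)]
    have := abs_coord_le (x - y) i
    simp only [PiLp.sub_apply] at this
    exact mul_le_mul (by linarith [hμM i]) this (abs_nonneg _) (by linarith)
  have hsumle : ∀ x : Euc I, |∑ j, x j| ≤ I * ‖x‖ := fun x =>
    abs_sum_le_card fun i => abs_coord_le x i
  have hBΓ : (D * B + M * κ) * (s * L) ≤ Γ * (s * L) := by gcongr; linarith
  refine ⟨hs1, hL, by linarith, hsm, fun i => (hc i).le, fun i => by linarith [hcC i],
    fun i => (hμ i).le, fun i => by linarith [hμM i], fun i => ?_, fun i => ?_,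
    fun x => le_max_right _ _, fun x hx => ?_, fun x y => ?_, fun x i hx => ?_, fun x y i => ?_,
    fun x i hx => ?_, fun x y i => ?_, hK.continuousOn, hcd, hbd, fun x hx => ?_⟩
  · rw [inv_le_comm₀ (by linarith) (hd0 i)]
    linarith [hdE i]
  · linarith [hdD i]
  · refine max_le ?_ (by positivity)
    calc ∑ j, x j ≤ I * ‖x‖ := (le_abs_self _).trans (hsumle x)
      _ ≤ I * (κ * (s * L)) := by gcongr
      _ = I * κ * (s * L) := by ring
      _ ≤ Γ * (s * L) := by gcongr; linarith
  · refine (abs_max_sub_max_le_abs _ _ _).trans ?_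
    rw [← Finset.sum_sub_distrib]
    refine (hsumle (x - y)).trans ?_
    gcongr; linarith
  · refine (abs_sub _ _).trans ?_
    linarith [hdr i, hxb x i hx]
  · rw [sub_sub_sub_cancel_left, abs_sub_comm]
    exact hxl x y i
  · rw [abs_div, abs_two]
    have := abs_add_le (a i * lam n - μ i * nu μ a i * n) (μ i * x i)
    have h0 := abs_nonneg (a i * lam n - μ i * nu μ a i * n + μ i * x i)
    linarith [hdr i, hxb x i hx]
  · rw [← sub_div, add_sub_add_left_eq_sub, abs_div, abs_two]
    have := hxl x y i
    linarith [abs_nonneg (μ i * x i - μ i * y i)]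
  · have := heq x hx
    simp only [HJBgen] at this
    rw [Finset.mul_sum] at this
    have e : ∀ i, 1 / 2 * ((a i * lam n + μ i * (nu μ a i * n + x i)) * pd2 φ i x) =
        (s ^ 2 * d i + (a i * lam n - μ i * nu μ a i * n + μ i * x i) / 2) * pd2 φ i x :=
      fun i => by rw [hs2, ← hμν]; ring
    simp only [e] at this
    linarith

/-! ### The weighted Schauder bound -/

/-- The radius `min (dist to the boundary) (s / L)` of the interior estimates is comparable to the
distance to the boundary, up to a factor `L ^ 2`. -/
lemma HJBData.le_width {κ s L r : ℝ} (hκ : 0 < κ) (hs : 1 ≤ s) (hL : 1 ≤ L) (hr : 0 ≤ r)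
    (hrR : r < κ * (s * L)) :
    κ * (s * L) - r ≤ (1 + κ) * L ^ 2 * min (κ * (s * L) - r) (s / L) := by
  have hL0 : 0 < L := by linarith
  rcases le_total (κ * (s * L) - r) (s / L) with h | h
  · rw [min_eq_left h]
    refine le_mul_of_one_le_left (by linarith) ?_
    have : 1 ≤ L ^ 2 := one_le_pow₀ hL
    nlinarith
  · rw [min_eq_right h]
    calc κ * (s * L) - r ≤ κ * (s * L) := by linarith
      _ ≤ (1 + κ) * (s * L) := by gcongr; linarith
      _ = (1 + κ) * L ^ 2 * (s / L) := by field_simp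

/-- The interior estimates on balls of radius comparable to the distance to the boundary add up
to a weighted Schauder bound with Hölder exponent `1 / 2`. -/
lemma HJBData.global_bounds (hI : 0 < I) {γ κ Γ : ℝ} (hγ : 0 < γ) (hκ : 0 < κ) (hΓ : 1 ≤ Γ) :
    ∃ K δ : ℝ, 0 < K ∧ 0 < δ ∧ ∀ (s L : ℝ) (c μ d : Fin I → ℝ) (g : Euc I → ℝ)
      (b e : Euc I → Fin I → ℝ) (φ : Euc I → ℝ), HJBData γ κ Γ s L c μ d g b e φ → L ≤ δ * s →
      SchauderBound (1 / 2) (κ * (s * L)) (K * s * L ^ 12) φ ∧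
      ∀ ϑ : ℝ, 0 < ϑ → ϑ < 1 → ∀ x : Euc I, ‖x‖ < ϑ * (κ * (s * L)) →
        ‖fderiv ℝ φ x‖ ≤ K / (1 - ϑ) * L ^ 11 ∧
        ‖fderiv ℝ (fderiv ℝ φ) x‖ ≤ K / (1 - ϑ) * L ^ 10 / s := by
  obtain ⟨C, δ, hC, hδ, hδ2, hloc⟩ := local_bounds hI hγ hκ hΓ
  have hΓ0 : 0 < Γ := by linarith
  set K1 := κ ^ 2 * (1 + κ) ^ 3 * C with hK1
  set K2 := 4 * κ ^ 2 * (1 + κ) ^ 3 * C ^ 2 / δ with hK2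
  set K3 := κ * (1 + κ) * C with hK3
  set K4 := C * (1 + κ) / κ with hK4
  set K5 := Γ ^ 2 / γ with hK5
  have k1 : 0 < K1 := by positivity
  have k2 : 0 < K2 := by positivity
  have k3 : 0 < K3 := by positivity
  have k4 : 0 < K4 := by positivity
  have k5 : 0 < K5 := by positivity
  have k6 : 0 < κ * C := by positivity
  set K := 1 + K1 + K2 + K3 + K4 + K5 + κ * C + C with hK
  have hKK : K ≤ K ^ 2 := by rw [sq]; exact le_mul_of_one_le_left (by linarith) (by linarith)
  refine ⟨K, δ, by linarith, hδ, fun s L c μ d g b e φ h hLs => ?_⟩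
  have hs := h.hs
  have hL := h.hL
  have hs0 : 0 < s := by linarith
  have hL0 : 0 < L := by linarith
  set R := κ * (s * L) with hR
  have hpow : ∀ k ≤ 12, L ^ k ≤ L ^ 12 := fun k hk => pow_le_pow_right₀ hL hk
  have hgr : ∀ x : Euc I, ‖x‖ < R → ‖fderiv ℝ φ x‖ ≤ C * L ^ 2 := fun x hx =>
    (hloc s L c μ d g b e φ h hLs x _ hx rfl).1
  have hw0 : ∀ x : Euc I, ‖x‖ < R → 0 < min (R - ‖x‖) (s / L) := fun x hx =>
    lt_min (by linarith) (by positivity)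
  have hwid : ∀ x : Euc I, ‖x‖ < R → R - ‖x‖ ≤ (1 + κ) * L ^ 2 * min (R - ‖x‖) (s / L) :=
    fun x hx => le_width hκ hs hL (norm_nonneg x) hx
  have hRx : ∀ x : Euc I, R - ‖x‖ ≤ R := fun x => by linarith [norm_nonneg x]
  have hhe : ∀ x : Euc I, ‖x‖ < R → (R - ‖x‖) * ‖hes φ x‖ ≤ (1 + κ) * C * L ^ 4 := fun x hx =>
    calc (R - ‖x‖) * ‖hes φ x‖
        ≤ (1 + κ) * L ^ 2 * min (R - ‖x‖) (s / L) * ‖hes φ x‖ := by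
          gcongr; exact hwid x hx
      _ = (1 + κ) * L ^ 2 * (min (R - ‖x‖) (s / L) * ‖hes φ x‖) := by ring
      _ ≤ (1 + κ) * L ^ 2 * (C * L ^ 2) := by
          have := (hloc s L c μ d g b e φ h hLs x _ hx rfl).2.1
          exact mul_le_mul_of_nonneg_left this (by positivity)
      _ = _ := by ring
  have hhe2 : ∀ x : Euc I, ‖x‖ < R → (R - ‖x‖) ^ 2 * ‖hes φ x‖ ≤ K3 * s * L ^ 5 := fun x hx =>
    calc (R - ‖x‖) ^ 2 * ‖hes φ x‖ = (R - ‖x‖) * ((R - ‖x‖) * ‖hes φ x‖) := by ring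
      _ ≤ R * ((1 + κ) * C * L ^ 4) := by
          refine mul_le_mul (hRx x) (hhe x hx) ?_ (by positivity)
          exact mul_nonneg (by linarith) (norm_nonneg _)
      _ = _ := by rw [hR, hK3]; ring
  refine ⟨⟨fun x hx => ?_, fun x hx => ?_, fun x hx => ?_, fun x y hx hy hxy => ?_⟩,
    fun ϑ h0 h1 x hx => ?_⟩
  · have := h.sup_bound hI hγ hκ hx.le
    rw [abs_of_nonneg this.1]
    calc φ x ≤ K5 * (s * L ^ 1) := by simpa using this.2
      _ ≤ K * (s * L ^ 12) := by gcongr; exacts [by linarith, by norm_num]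
      _ = _ := by ring
  · calc (R - ‖x‖) * ‖fderiv ℝ φ x‖ ≤ R * (C * L ^ 2) :=
          mul_le_mul (hRx x) (hgr x hx) (norm_nonneg _) (by positivity)
      _ = κ * C * (s * L ^ 3) := by rw [hR]; ring
      _ ≤ K * (s * L ^ 12) := by gcongr; exacts [by linarith, by norm_num]
      _ = _ := by ring
  · calc _ ≤ K3 * s * L ^ 5 := hhe2 x hx
      _ ≤ K * s * L ^ 12 := by gcongr; exacts [by linarith, by norm_num]
  · have hq0 : 0 < min (R - ‖x‖) (R - ‖y‖) := lt_min (by linarith) (by linarith)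
    set q := min (R - ‖x‖) (R - ‖y‖) with hq
    have hqx : q ≤ R - ‖x‖ := min_le_left _ _
    have hqy : q ≤ R - ‖y‖ := min_le_right _ _
    have ht0 : 0 < ‖x - y‖ := norm_pos_iff.2 (sub_ne_zero.2 hxy)
    set t := ‖x - y‖ with ht
    set w := min (R - ‖x‖) (s / L) with hw
    have hw0 : 0 < w := hw0 x hx
    have hqw : q ≤ (1 + κ) * L ^ 2 * w := hqx.trans (hwid x hx)
    change q ^ (2 + 1 / 2 : ℝ) * ‖hes φ x - hes φ y‖ ≤ K * s * L ^ 12 * t ^ (1 / 2 : ℝ)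
    set Δ := ‖hes φ x - hes φ y‖ with hΔ
    -- It suffices to compare squares.
    have key : q ^ 5 * Δ ^ 2 ≤ (K1 + K2) * (s ^ 2 * L ^ 12) * t := by
      rcases le_or_gt t (δ * w) with h2 | h2
      · have h3 := (hloc s L c μ d g b e φ h hLs x w hx rfl).2.2 y (by rwa [norm_sub_rev])
        rw [norm_sub_rev, norm_sub_rev y x] at h3
        calc q ^ 5 * Δ ^ 2 = q ^ 2 * q ^ 3 * Δ ^ 2 := by ring
          _ ≤ R ^ 2 * ((1 + κ) * L ^ 2 * w) ^ 3 * Δ ^ 2 := by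
            gcongr; exact hqx.trans (hRx x)
          _ = R ^ 2 * ((1 + κ) * L ^ 2) ^ 3 * (w ^ 3 * Δ ^ 2) := by ring
          _ ≤ R ^ 2 * ((1 + κ) * L ^ 2) ^ 3 * (C * L ^ 4 * t) := by gcongr
          _ = K1 * (s ^ 2 * L ^ 12) * t := by rw [hR, hK1]; ring
          _ ≤ _ := by gcongr; linarith
      · have h3 : q ^ 2 * Δ ≤ 2 * K3 * s * L ^ 5 :=
          calc q ^ 2 * Δ ≤ q ^ 2 * (‖hes φ x‖ + ‖hes φ y‖) := by
                gcongr; exact norm_sub_le _ _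
            _ = q ^ 2 * ‖hes φ x‖ + q ^ 2 * ‖hes φ y‖ := by ring
            _ ≤ (R - ‖x‖) ^ 2 * ‖hes φ x‖ + (R - ‖y‖) ^ 2 * ‖hes φ y‖ := by gcongr
            _ ≤ _ := by linarith [hhe2 x hx, hhe2 y hy]
        have h4 : w ≤ t / δ := by rw [le_div_iff₀ hδ]; linarith
        calc q ^ 5 * Δ ^ 2 = q * (q ^ 2 * Δ) ^ 2 := by ring
          _ ≤ ((1 + κ) * L ^ 2 * (t / δ)) * (2 * K3 * s * L ^ 5) ^ 2 := by
            gcongr; exact hqw.trans (by gcongr)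
          _ = K2 * (s ^ 2 * L ^ 12) * t := by rw [hK3, hK2]; ring
          _ ≤ _ := by gcongr; linarith
    have e1 : (q ^ (2 + 1 / 2 : ℝ) * Δ) ^ 2 = q ^ 5 * Δ ^ 2 := by
      rw [mul_pow, ← Real.rpow_natCast (q ^ (2 + 1 / 2 : ℝ)), ← Real.rpow_mul hq0.le,
        ← Real.rpow_natCast q 5]
      norm_num
    have e2 : (K * s * L ^ 12 * t ^ (1 / 2 : ℝ)) ^ 2 = K ^ 2 * (s ^ 2 * L ^ 24) * t := by
      have : (t ^ (1 / 2 : ℝ)) ^ 2 = t := by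
        rw [← Real.sqrt_eq_rpow, Real.sq_sqrt ht0.le]
      calc _ = K ^ 2 * (s ^ 2 * L ^ 24) * (t ^ (1 / 2 : ℝ)) ^ 2 := by ring
        _ = _ := by rw [this]
    refine (pow_le_pow_iff_left₀ (by positivity) (by positivity) two_ne_zero).1 ?_
    rw [e1, e2]
    refine key.trans ?_
    gcongr
    · linarith
    · norm_num
  · have hϑ : 0 < 1 - ϑ := by linarith
    have hR0 : 0 < R := by positivity
    have hxR : ‖x‖ < R := hx.trans (by nlinarith)
    have hKϑ : K ≤ K / (1 - ϑ) := by
      rw [le_div_iff₀ hϑ]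
      exact mul_le_of_le_one_right (by linarith) (by linarith)
    constructor
    · refine (hgr x hxR).trans ?_
      gcongr
      · linarith
      · norm_num
    · have h2 : (1 - ϑ) * R ≤ R - ‖x‖ := by linarith
      have h3 : (1 - ϑ) * R * ‖hes φ x‖ ≤ (1 + κ) * C * L ^ 4 :=
        le_trans (by gcongr) (hhe x hxR)
      change ‖hes φ x‖ ≤ _
      calc ‖hes φ x‖ ≤ ((1 + κ) * C * L ^ 4) / ((1 - ϑ) * R) := by
            rw [le_div_iff₀ (by positivity), mul_comm]
            exact h3
        _ = K4 / (1 - ϑ) * L ^ 3 / s := by rw [hK4, hR]; field_simp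
        _ ≤ K / (1 - ϑ) * L ^ 10 / s := by
          gcongr
          · linarith
          · norm_num

/-! ### Powers of the logarithm -/

/-- Powers of the logarithm are `o(√n)`. -/
lemma eventually_log_pow_le (m : ℕ) {ε : ℝ} (hε : 0 < ε) :
    ∀ᶠ n : ℕ in atTop, Real.log n ^ m ≤ ε * √(n : ℝ) := by
  have h := (isLittleO_log_rpow_rpow_atTop (m : ℝ) (by norm_num : (0 : ℝ) < 1 / 2)).comp_tendsto
    tendsto_natCast_atTop_atTop
  filter_upwards [h.bound hε] with n hn
  simp only [Function.comp, Real.rpow_natCast, ← Real.sqrt_eq_rpow, Real.norm_eq_abs] at hn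
  rw [abs_of_nonneg (Real.sqrt_nonneg _)] at hn
  exact (le_abs_self _).trans hn

end

/-- There are `α ∈ (0,1]` (the Schauder exponent) and `C > 0` independent
of `n` such that for all sufficiently large `n`, every classical solution `φ` of the HJB
equation on `B_κ^n` satisfies the Schauder bound with exponent `k₀ = 4m(1+1/α)`, and for
every `ϑ ∈ (0,1)`:
`sup_{B_{ϑκ}^n} |Dφ| ≤ C/(1−ϑ) (log n)^{k₁}` and
`sup_{B_{ϑκ}^n} |D²φ| ≤ C/(1−ϑ) (log n)^{k₂}/√n`, where `k₁ = k₀ − m`, `k₂ = k₀ − 2m`. -/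
theorem stmt2
    (I : ℕ) (hI : 0 < I)
    (μ a c : Fin I → ℝ) (γ β : ℝ)
    (hμ : ∀ i, 0 < μ i) (ha : ∀ i, 0 < a i) (hsum : ∑ i, a i = 1)
    (hc : ∀ i, 0 < c i) (hγ : 0 < γ)
    (lam : ℕ → ℝ)
    (hlam : ∀ n : ℕ, 1 ≤ n → 0 < lam n ∧
      (n : ℝ) = lam n * (∑ i, a i / μ i)
        + β * Real.sqrt (lam n * (∑ i, a i / μ i)))
    (κ : ℝ) (hκ : 0 < κ) (m : ℕ) (hm : 3 ≤ m) :
    ∃ α C : ℝ, 0 < α ∧ α ≤ 1 ∧ 0 < C ∧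
      ∃ N : ℕ, ∀ n : ℕ, N ≤ n →
        ∀ φ : Euc I → ℝ,
          IsSolGen μ a c γ (lam n) n (Rad κ m n) (fun y => max y 0) φ →
          SchauderBound α (Rad κ m n)
            (C * Real.sqrt n * Real.log n ^ ((4 * (m : ℝ)) * (1 + 1 / α))) φ ∧
          ∀ ϑ : ℝ, 0 < ϑ → ϑ < 1 →
            ∀ x : Euc I, ‖x‖ < ϑ * Rad κ m n →
              ‖fderiv ℝ φ x‖ ≤
                C / (1 - ϑ) * Real.log n ^ ((4 * (m : ℝ)) * (1 + 1 / α) - m) ∧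
              ‖fderiv ℝ (fderiv ℝ φ) x‖ ≤
                C / (1 - ϑ) * Real.log n ^ ((4 * (m : ℝ)) * (1 + 1 / α) - 2 * m)
                  / Real.sqrt n := by
  obtain ⟨Γ, hΓ, hdata⟩ := exists_data hI μ a c γ β hμ ha hc lam hlam κ hκ m
  obtain ⟨K, δ, hK, hδ, hbd⟩ := HJBData.global_bounds hI hγ hκ hΓ
  have hΓ0 : 0 < 2 * Γ ^ 2 + Γ ^ 3 := by positivity
  have hlog : ∀ᶠ n : ℕ in Filter.atTop, 1 ≤ Real.log n :=
    (Real.tendsto_log_atTop.comp tendsto_natCast_atTop_atTop).eventually_ge_atTop 1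
  obtain ⟨N, hN⟩ := Filter.eventually_atTop.1 ((Filter.eventually_ge_atTop 1).and (hlog.and
    ((eventually_log_pow_le m hδ).and (eventually_log_pow_le m (inv_pos.2 hΓ0)))))
  refine ⟨1 / 2, K, by norm_num, by norm_num, hK, N, fun n hn φ hφ => ?_⟩
  obtain ⟨hn1, hl1, hLδ, hLΓ⟩ := hN n hn
  have hL : 1 ≤ Real.log n ^ m := one_le_pow₀ hl1
  have hsm : (2 * Γ ^ 2 + Γ ^ 3) * Real.log n ^ m ≤ √(n : ℝ) := by
    rwa [inv_mul_eq_div, le_div_iff₀' hΓ0] at hLΓ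
  have hmain := hbd _ _ _ _ _ _ _ _ φ (hdata n hn1 hL hsm φ hφ) hLδ
  rw [← mul_assoc] at hmain
  -- With `α = 1 / 2` the exponents `k₀`, `k₁`, `k₂` are `12 m`, `11 m` and `10 m`.
  have e0 : Real.log n ^ ((4 * (m : ℝ)) * (1 + 1 / (1 / 2))) = (Real.log n ^ m) ^ 12 := by
    rw [← pow_mul, ← Real.rpow_natCast]; congr 1; push_cast; ring
  have e1 : Real.log n ^ ((4 * (m : ℝ)) * (1 + 1 / (1 / 2)) - m) = (Real.log n ^ m) ^ 11 := by
    rw [← pow_mul, ← Real.rpow_natCast]; congr 1; push_cast; ring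
  have e2 : Real.log n ^ ((4 * (m : ℝ)) * (1 + 1 / (1 / 2)) - 2 * m) =
      (Real.log n ^ m) ^ 10 := by
    rw [← pow_mul, ← Real.rpow_natCast]; congr 1; push_cast; ring
  rw [e0, e1, e2]
  exact hmain

end HW
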